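/- arXiv:0810.2727 — 15 statements merged into one kernel-verified Lean document; each statement's English description precedes it below -/
import Mathlib

section
/- Let ℓ ≥ 1 and let k, m, n be integers with 0 ≤ k ≤ m ≤ n. Then the entry g_{ℓ,n}^m of Euler's difference table equals the number of colored permutations π ∈ G_{ℓ,n} all of whose k-circular successions lie in [m], i.e., g_{ℓ,n}^m = #{π ∈ G_{ℓ,n} : C^k(π) ⊆ {1,…,m}}. -/
/-- A colored permutation in `G_{ℓ,n} = C_ℓ ≀ S_n`: a pair `(ε, σ)` where
`ε : [n] → Z/ℓZ` assigns colors and `σ` is a permutation of `[n]`.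
We model `[n] = {1,…,n}` by `Fin n`, where `i : Fin n` represents the integer `i + 1`. -/
abbrev ColoredPerm (ℓ n : ℕ) := (Fin n → ZMod ℓ) × Equiv.Perm (Fin n)

/-!
The numbers `#{π ∈ G_{ℓ,n} : C^k(π) ⊆ [m]}` satisfy the recurrence of the difference table. Passing
from `[m + 1]` to `[m]` discards exactly the colored permutations for which the value `m + 1` is a
`k`-circular succession, i.e. is uncolored and stands at position `m + 1 - k`. Deleting that value
and standardizing the rest turns positions and values that differ by `k` into positions and values
that differ by `k`, so the discarded elements are counted by the entry for `n - 1` and `m`.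
-/

/-- `ColoredPerm` with an arbitrary set `C` of colors in place of `ℤ/ℓℤ`. The element `0 : C`, where
one is available, marks the uncolored values. -/
abbrev ColoredPermOver (C : Type*) (n : ℕ) := (Fin n → C) × Equiv.Perm (Fin n)

open Equiv in
/-- The permutation of `Fin (n + 1)` sending `p` to `q` and acting as `τ` on the remaining positions
and values, each relabelled in order by `Fin n`. -/
def insertPerm {n : ℕ} (p q : Fin (n + 1)) (τ : Perm (Fin n)) : Perm (Fin (n + 1)) :=
  ((finSuccEquiv' p).trans (optionCongr τ)).trans (finSuccEquiv' q).symm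

section InsertPerm

variable {n : ℕ} (p q : Fin (n + 1))

@[simp]
lemma insertPerm_apply_self (τ : Equiv.Perm (Fin n)) : insertPerm p q τ p = q := by
  simp [insertPerm]

@[simp]
lemma insertPerm_apply_succAbove (τ : Equiv.Perm (Fin n)) (i : Fin n) :
    insertPerm p q τ (p.succAbove i) = q.succAbove (τ i) := by
  simp [insertPerm]

lemma insertPerm_injective : Function.Injective (insertPerm p q) := fun τ₁ τ₂ h =>
  Equiv.ext fun i => q.succAbove_right_injective <| by
    simpa only [insertPerm_apply_succAbove] using DFunLike.congr_fun h (p.succAbove i)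

variable {p q} in
lemma mem_range_insertPerm {σ : Equiv.Perm (Fin (n + 1))} :
    σ ∈ Set.range (insertPerm p q) ↔ σ p = q := by
  refine ⟨?_, fun hσ => ?_⟩
  · rintro ⟨τ, rfl⟩
    exact insertPerm_apply_self p q τ
  · let e : Equiv.Perm (Option (Fin n)) :=
      ((finSuccEquiv' p).symm.trans σ).trans (finSuccEquiv' q)
    have e_none : e none = none := by simp [e, hσ]
    have optionCongr_removeNone : (Equiv.removeNone e).optionCongr = e := by
      rw [map_equiv_removeNone, e_none, Equiv.swap_self]
      rfl
    refine ⟨Equiv.removeNone e, Equiv.ext fun i => ?_⟩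
    simp [insertPerm, optionCongr_removeNone, e]

end InsertPerm

lemma val_succAbove_eq_val_succAbove_add_iff {k n : ℕ} {p q : Fin (n + 1)}
    (hpq : (q : ℕ) = p + k) (i v : Fin n) :
    (q.succAbove v : ℕ) = p.succAbove i + k ↔ (v : ℕ) = i + k := by
  simp only [Fin.succAbove, Fin.lt_def, Fin.val_castSucc, apply_ite Fin.val, Fin.val_succ]
  grind

namespace ColoredPermOver

/-- The value of `π` at position `i` is a `k`-circular succession: it equals `i + k`, without
wraparound, and is uncolored. -/
def IsCircularSuccession {C : Type*} [Zero C] {n : ℕ} (k : ℕ) (π : ColoredPermOver C n)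
    (i : Fin n) : Prop :=
  (π.2 i : ℕ) = i + k ∧ π.1 (π.2 i) = 0

/-- The colored permutations all of whose `k`-circular successions lie among the `m` smallest
values, i.e. those with `C^k(π) ⊆ [m]`. -/
def successionsBelow (C : Type*) [Zero C] (k m n : ℕ) : Set (ColoredPermOver C n) :=
  {π | ∀ i, IsCircularSuccession k π i → (π.2 i : ℕ) < m}

/-- The colored permutation obtained from `π` by inserting the uncolored value `q` at position `p`
and relabelling the other positions and values in order. -/
def insertUncolored {C : Type*} [Zero C] {n : ℕ} (p q : Fin (n + 1)) (π : ColoredPermOver C n) :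
    ColoredPermOver C (n + 1) :=
  (q.insertNth (α := fun _ => C) 0 π.1, insertPerm p q π.2)

variable {C : Type*} [Zero C] {k n : ℕ} {p q : Fin (n + 1)}

lemma insertUncolored_injective (p q : Fin (n + 1)) :
    Function.Injective (insertUncolored (C := C) p q) := by
  intro π₁ π₂ h
  obtain ⟨hcolor, hperm⟩ := Prod.mk.inj h
  exact Prod.ext (Fin.insertNth_right_injective (α := fun _ => C) (p := q) 0 hcolor)
    (insertPerm_injective p q hperm)

lemma mem_range_insertUncolored {π : ColoredPermOver C (n + 1)} :
    π ∈ Set.range (insertUncolored p q) ↔ π.2 p = q ∧ π.1 q = 0 := by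
  refine ⟨?_, fun ⟨hperm, hcolor⟩ => ?_⟩
  · rintro ⟨ρ, rfl⟩
    simp [insertUncolored]
  · obtain ⟨τ, hτ⟩ := mem_range_insertPerm.2 hperm
    refine ⟨(q.removeNth π.1, τ), Prod.ext ?_ hτ⟩
    simp [insertUncolored, ← hcolor]

lemma mem_range_insertUncolored_iff_isCircularSuccession (hpq : (q : ℕ) = p + k)
    {π : ColoredPermOver C (n + 1)} :
    π ∈ Set.range (insertUncolored p q) ↔ IsCircularSuccession k π p := by
  rw [mem_range_insertUncolored, IsCircularSuccession, ← hpq, ← Fin.ext_iff]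
  exact and_congr_right fun h => by rw [h]

lemma isCircularSuccession_insertUncolored_succAbove (hpq : (q : ℕ) = p + k)
    {π : ColoredPermOver C n} {i : Fin n} :
    IsCircularSuccession k (insertUncolored p q π) (p.succAbove i) ↔
      IsCircularSuccession k π i := by
  simp only [IsCircularSuccession, insertUncolored, insertPerm_apply_succAbove,
    Fin.insertNth_apply_succAbove, val_succAbove_eq_val_succAbove_add_iff hpq]

lemma insertUncolored_mem_successionsBelow_iff (hpq : (q : ℕ) = p + k) {π : ColoredPermOver C n} :
    insertUncolored p q π ∈ successionsBelow C k (q + 1) (n + 1) ↔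
      π ∈ successionsBelow C k q n := by
  have succAbove_lt (v : Fin n) : (q.succAbove v : ℕ) < q + 1 ↔ (v : ℕ) < q := by
    rw [Nat.lt_succ_iff, ← Fin.le_def, (q.succAbove_ne v).le_iff_lt,
      Fin.succAbove_lt_iff_castSucc_lt, Fin.lt_def, Fin.val_castSucc]
  simp only [successionsBelow, Set.mem_ofPred_eq, Fin.forall_iff_succAbove p,
    isCircularSuccession_insertUncolored_succAbove hpq]
  simp [insertUncolored, succAbove_lt]

lemma successionsBelow_mono {m₁ m₂ : ℕ} (h : m₁ ≤ m₂) :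
    successionsBelow C k m₁ n ⊆ successionsBelow C k m₂ n :=
  fun _ hπ i hi => (hπ i hi).trans_le h

lemma mem_successionsBelow_iff_not_isCircularSuccession (hpq : (q : ℕ) = p + k)
    {π : ColoredPermOver C (n + 1)} (hπ : π ∈ successionsBelow C k (q + 1) (n + 1)) :
    π ∈ successionsBelow C k q (n + 1) ↔ ¬IsCircularSuccession k π p := by
  refine ⟨fun h hp => ?_, fun hp i hi => ?_⟩
  · have : (π.2 p : ℕ) < q := h p hp
    have : (π.2 p : ℕ) = p + k := hp.1
    omega
  · refine (Nat.lt_succ_iff.1 (hπ i hi)).lt_of_ne fun hiq => hp ?_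
    have hip : i = p := Fin.ext (by have := hi.1; omega)
    rwa [← hip]

lemma image_insertUncolored_successionsBelow (hpq : (q : ℕ) = p + k) :
    insertUncolored p q '' successionsBelow C k q n =
      successionsBelow C k (q + 1) (n + 1) \ successionsBelow C k q (n + 1) := by
  ext π
  constructor
  · rintro ⟨ρ, hρ, rfl⟩
    have hmem := (insertUncolored_mem_successionsBelow_iff hpq).2 hρ
    refine ⟨hmem, fun h => ?_⟩
    exact (mem_successionsBelow_iff_not_isCircularSuccession hpq hmem).1 h
      ((mem_range_insertUncolored_iff_isCircularSuccession hpq).1 ⟨ρ, rfl⟩)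
  · rintro ⟨hmem, hnot⟩
    rw [mem_successionsBelow_iff_not_isCircularSuccession hpq hmem, not_not,
      ← mem_range_insertUncolored_iff_isCircularSuccession hpq] at hnot
    obtain ⟨ρ, rfl⟩ := hnot
    exact ⟨ρ, (insertUncolored_mem_successionsBelow_iff hpq).1 hmem, rfl⟩

lemma ncard_successionsBelow_succ [Finite C] {m : ℕ} (hkm : k ≤ m) (hmn : m ≤ n) :
    (successionsBelow C k (m + 1) (n + 1)).ncard =
      (successionsBelow C k m (n + 1)).ncard + (successionsBelow C k m n).ncard := by
  let p : Fin (n + 1) := ⟨m - k, by omega⟩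
  let q : Fin (n + 1) := ⟨m, by omega⟩
  have hpq : (q : ℕ) = p + k := (Nat.sub_add_cancel hkm).symm
  have hdiff : insertUncolored p q '' successionsBelow C k m n =
      successionsBelow C k (m + 1) (n + 1) \ successionsBelow C k m (n + 1) :=
    image_insertUncolored_successionsBelow hpq
  rw [← Set.ncard_sdiff_add_ncard_of_subset (successionsBelow_mono m.le_succ), ← hdiff,
    Set.ncard_image_of_injective _ (insertUncolored_injective p q), add_comm]

lemma ncard_successionsBelow_self (k n : ℕ) :
    (successionsBelow C k n n).ncard = Nat.card C ^ n * n.factorial := by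
  have eq_univ : successionsBelow C k n n = Set.univ :=
    Set.eq_univ_of_forall fun π i _ => (π.2 i).isLt
  rw [eq_univ, Set.ncard_univ, Nat.card_prod, Nat.card_fun, Nat.card_perm, Nat.card_fin]

end ColoredPermOver

open ColoredPermOver in
theorem stmt_0_general {C R : Type*} [Zero C] [Finite C] [AddGroupWithOne R] (g : ℕ → ℕ → R)
    (hg_diag : ∀ n, g n n = ↑(Nat.card C ^ n * n.factorial))
    (hg_rec : ∀ n m, m ≤ n → g (n + 1) m = g (n + 1) (m + 1) - g n m)
    {k m n : ℕ} (hkm : k ≤ m) (hmn : m ≤ n) :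
    g n m = (successionsBelow C k m n).ncard := by
  obtain ⟨d, rfl⟩ := Nat.exists_eq_add_of_le hmn
  clear hmn
  induction d generalizing m with
  | zero => rw [Nat.add_zero, hg_diag, ncard_successionsBelow_self]
  | succ d ih =>
    have hmd : m ≤ m + d := Nat.le_add_right m d
    have g_succ : g (m + d + 1) (m + 1) = (successionsBelow C k (m + 1) (m + d + 1)).ncard := by
      rw [Nat.add_right_comm]
      exact ih (Nat.le_succ_of_le hkm)
    rw [← Nat.add_assoc, hg_rec _ _ hmd, g_succ, ih hkm, ncard_successionsBelow_succ hkm hmd,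
      Nat.cast_add, add_sub_cancel_right]

/-- for `0 ≤ k ≤ m ≤ n`, the entry `g_{ℓ,n}^m` of Euler's difference table
equals the number of colored permutations all of whose `k`-circular successions lie
in `[m]`.  A `k`-circular succession of `π = (ε, σ)` at position `i` is a value
`σ i = i + k` (no wraparound) with color `ε (σ i) = 0`; it lies in `[m]` iff the value
`σ i` is at most `m`, i.e. `(σ i : ℕ) < m` in the 0-indexed model. -/
theorem stmt_0 (ℓ : ℕ) (hℓ : 1 ≤ ℓ) (g : ℕ → ℕ → ℤ)
    (hg_diag : ∀ n : ℕ, g n n = (ℓ : ℤ) ^ n * (Nat.factorial n : ℤ))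
    (hg_rec : ∀ n m : ℕ, m < n → g n m = g n (m + 1) - g (n - 1) m)
    (k m n : ℕ) (hkm : k ≤ m) (hmn : m ≤ n) :
    g n m = Nat.card {π : ColoredPerm ℓ n //
      ∀ i : Fin n, ((π.2 i : ℕ) = (i : ℕ) + k ∧ π.1 (π.2 i) = 0) → (π.2 i : ℕ) < m} := by
  have : NeZero ℓ := ⟨Nat.one_le_iff_ne_zero.1 hℓ⟩
  refine stmt_0_general (C := ZMod ℓ) g (fun i => ?_) (fun i j hj => ?_) hkm hmn
  · rw [hg_diag, Nat.card_zmod, Nat.cast_mul, Nat.cast_pow]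
  · exact hg_rec (i + 1) j (Nat.lt_succ_of_le hj)
end

section
/- Let ℓ ≥ 1 and 0 ≤ m ≤ n. Then g_{ℓ,n}^m equals the number of colored permutations π ∈ G_{ℓ,n} whose fixed points are all contained in [m] = {1,…,m}. -/
/-!
Let `a ∉ s`. A colored permutation whose fixed points lie in `insert a s` either does not fix `a`,
and then its fixed points lie in `s`, or fixes `a`, and then deleting `a` leaves an arbitrary
colored permutation of the other points whose fixed points lie in `s`. When `s` has `m` elements
among `n` points, this is the recurrence `g_n^{m+1} = g_n^m + g_{n-1}^m` of the table. Working with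
a subset of an arbitrary finite set instead of `[m] ⊆ [n]` avoids relabelling after the deletion.
-/

open Equiv

/-- The colored permutations of an arbitrary set `α` with colors in `C`, as pairs `(ε, σ)`.
The color `0 : C` plays the role of the trivial root of unity; no other structure on `C` matters
for counting fixed points. `ColoredPerm ℓ n` is the case `C = ZMod ℓ`, `α = Fin n`. -/
abbrev ColoredPermOn (C α : Type*) := (α → C) × Perm α

namespace ColoredPermOn

variable {C α : Type*}

theorem natCard_eq [Finite α] :
    Nat.card (ColoredPermOn C α) = Nat.card C ^ Nat.card α * (Nat.card α).factorial := by
  rw [Nat.card_prod, Nat.card_fun, Nat.card_perm]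

variable [Zero C]

/-- The set `FIX(π)`. Where `σ i = i`, the color `ε (σ i)` of the image is `ε i`. -/
def fixedPoints (π : ColoredPermOn C α) : Set α :=
  {i | π.2 i = i ∧ π.1 i = 0}

variable (C) in
/-- The colored permutations whose fixed points all lie in `s`, counted by the entries of Euler's
difference table. -/
def fixedWithin (s : Set α) : Set (ColoredPermOn C α) :=
  {π | π.fixedPoints ⊆ s}

theorem fixedWithin_univ : fixedWithin C (Set.univ : Set α) = Set.univ :=
  Set.eq_univ_of_forall fun π => Set.subset_univ π.fixedPoints

theorem fixedWithin_insert_sdiff {a : α} {s : Set α} (ha : a ∉ s) :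
    fixedWithin C (insert a s) \ {π | a ∈ π.fixedPoints} = fixedWithin C s := by
  ext π
  constructor
  · rintro ⟨hπ, hfix⟩
    exact (Set.subset_insert_iff_of_notMem (s := π.fixedPoints) hfix).1 hπ
  · intro hπ
    exact ⟨hπ.trans (Set.subset_insert a s), fun hfix => ha (hπ hfix)⟩

open scoped Classical in
/-- Deletion of a fixed point `a`: a colored permutation fixing `a` is the same as a colored
permutation of the remaining points. -/
noncomputable def deleteFixedPoint (a : α) :
    {π : ColoredPermOn C α // a ∈ π.fixedPoints} ≃ ColoredPermOn C {x // x ≠ a} where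
  toFun π := (fun x => π.1.1 x, π.1.2.subtypePerm fun _ => π.1.2.injective.ne_iff' π.2.1)
  invFun ρ := ⟨(fun x => if hx : x = a then 0 else ρ.1 ⟨x, hx⟩, Perm.ofSubtype ρ.2),
    Perm.ofSubtype_apply_of_not_mem ρ.2 (not_not.2 rfl), dif_pos rfl⟩
  left_inv := by
    rintro ⟨⟨ε, σ⟩, hσ : σ a = a, hε : ε a = 0⟩
    refine Subtype.ext (Prod.ext ?_ ?_)
    · funext x
      by_cases hx : x = a
      · simp [hx, hε]
      · simp [hx]
    · exact Perm.ofSubtype_subtypePerm (fun _ => σ.injective.ne_iff' hσ) fun x hx hxa =>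
        hx (hxa ▸ hσ)
  right_inv ρ := by
    refine Prod.ext ?_ (Perm.subtypePerm_ofSubtype ρ.2)
    funext x
    exact dif_neg x.2

theorem mem_fixedPoints_deleteFixedPoint {a : α}
    (π : {π : ColoredPermOn C α // a ∈ π.fixedPoints}) (x : {x // x ≠ a}) :
    x ∈ (deleteFixedPoint a π).fixedPoints ↔ (x : α) ∈ π.1.fixedPoints :=
  and_congr_left' Subtype.ext_iff

theorem deleteFixedPoint_mem_fixedWithin_iff {a : α} {s : Set α}
    (π : {π : ColoredPermOn C α // a ∈ π.fixedPoints}) :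
    deleteFixedPoint a π ∈ fixedWithin C (Subtype.val ⁻¹' s) ↔
      π.1 ∈ fixedWithin C (insert a s) := by
  constructor
  · intro h x hx
    by_cases hxa : x = a
    · exact Or.inl hxa
    · exact Or.inr (h ((mem_fixedPoints_deleteFixedPoint π ⟨x, hxa⟩).2 hx))
  · intro h x hx
    exact (h ((mem_fixedPoints_deleteFixedPoint π x).1 hx)).resolve_left x.2

theorem ncard_inter_fixedWithin_insert (a : α) (s : Set α) :
    ({π | a ∈ π.fixedPoints} ∩ fixedWithin C (insert a s)).ncard =
      (fixedWithin C (Subtype.val ⁻¹' s : Set {x // x ≠ a})).ncard :=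
  Set.ncard_congr' <| (subtypeSubtypeEquivSubtypeInter _ _).symm.trans <|
    (deleteFixedPoint a).subtypeEquiv fun π => (deleteFixedPoint_mem_fixedWithin_iff π).symm

theorem ncard_fixedWithin_insert [Finite C] [Finite α] {a : α} {s : Set α} (ha : a ∉ s) :
    (fixedWithin C (insert a s)).ncard =
      (fixedWithin C s).ncard + (fixedWithin C (Subtype.val ⁻¹' s : Set {x // x ≠ a})).ncard := by
  rw [← Set.ncard_inter_add_ncard_sdiff_eq_ncard (fixedWithin C (insert a s))
    {π | a ∈ π.fixedPoints}, fixedWithin_insert_sdiff ha, Set.inter_comm,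
    ncard_inter_fixedWithin_insert, add_comm]

end ColoredPermOn

theorem natCard_subtype_ne {α : Type*} [Finite α] (a : α) :
    Nat.card {x // x ≠ a} = Nat.card α - 1 := by
  rw [← Set.ncard_singleton a, ← Set.ncard_compl]
  rfl

theorem ncard_preimage_val_ne {α : Type*} {a : α} {s : Set α} (ha : a ∉ s) :
    (Subtype.val ⁻¹' s : Set {x // x ≠ a}).ncard = s.ncard :=
  Set.ncard_preimage_of_injective_subset_range Subtype.val_injective fun x hx =>
    ⟨⟨x, ne_of_mem_of_not_mem hx ha⟩, rfl⟩

theorem ncard_setOf_fin_val_lt {m n : ℕ} (hmn : m ≤ n) : {i : Fin n | (i : ℕ) < m}.ncard = m := by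
  rw [Set.ncard_eq_toFinset_card', Set.toFinset_ofPred, Fin.card_filter_val_lt, min_eq_right hmn]

open ColoredPermOn in
theorem stmt_1_general {C α : Type*} [Zero C] [Finite C] [Finite α] (g : ℕ → ℕ → ℤ)
    (hg_diag : ∀ n : ℕ, g n n = (Nat.card C : ℤ) ^ n * (Nat.factorial n : ℤ))
    (hg_rec : ∀ n m : ℕ, m < n → g n m = g n (m + 1) - g (n - 1) m) (s : Set α) :
    g (Nat.card α) s.ncard = (fixedWithin C s).ncard := by
  induction hk : Nat.card α - s.ncard generalizing α with
  | zero =>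
    have hs : s = Set.univ :=
      (Set.eq_univ_iff_ncard s).2 (le_antisymm s.ncard_le_card (Nat.sub_eq_zero_iff_le.1 hk))
    rw [hs, fixedWithin_univ, Set.ncard_univ, Set.ncard_univ, hg_diag, ColoredPermOn.natCard_eq,
      Nat.cast_mul, Nat.cast_pow]
  | succ k ih =>
    have hlt : s.ncard < Nat.card α := by omega
    obtain ⟨a, ha⟩ : ∃ a, a ∉ s := by
      rw [← Set.ne_univ_iff_exists_notMem]
      rintro rfl
      exact hlt.ne (Set.ncard_univ α)
    have hinsert : g (Nat.card α) (s.ncard + 1) = (fixedWithin C (insert a s)).ncard := by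
      rw [← Set.ncard_insert_of_notMem ha]
      exact ih _ (by rw [Set.ncard_insert_of_notMem ha]; omega)
    have hdelete : g (Nat.card α - 1) s.ncard =
        (fixedWithin C (Subtype.val ⁻¹' s : Set {x // x ≠ a})).ncard := by
      rw [← natCard_subtype_ne a, ← ncard_preimage_val_ne ha]
      exact ih _ (by rw [natCard_subtype_ne, ncard_preimage_val_ne ha]; omega)
    rw [hg_rec _ _ hlt, hinsert, hdelete, ncard_fixedWithin_insert ha, Nat.cast_add,
      add_sub_cancel_right]

/-- for `0 ≤ m ≤ n`, the entry `g_{ℓ,n}^m` equals the number of colored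
permutations `π = (ε, σ)` whose fixed points (indices `i` with `σ i = i` and `ε i = 0`)
are all contained in `[m]` (i.e. `(i : ℕ) < m` in the 0-indexed model). -/
theorem stmt_1 (ℓ : ℕ) (hℓ : 1 ≤ ℓ) (g : ℕ → ℕ → ℤ)
    (hg_diag : ∀ n : ℕ, g n n = (ℓ : ℤ) ^ n * (Nat.factorial n : ℤ))
    (hg_rec : ∀ n m : ℕ, m < n → g n m = g n (m + 1) - g (n - 1) m)
    (m n : ℕ) (hmn : m ≤ n) :
    g n m = Nat.card {π : ColoredPerm ℓ n //
      ∀ i : Fin n, (π.2 i = i ∧ π.1 i = 0) → (i : ℕ) < m} := by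
  have : NeZero ℓ := ⟨Nat.one_le_iff_ne_zero.1 hℓ⟩
  have h := stmt_1_general (C := ZMod ℓ) g (by simpa using hg_diag) hg_rec {i : Fin n | i < m}
  rwa [Nat.card_fin, ncard_setOf_fin_val_lt hmn] at h
end

section
/- Let ℓ ≥ 1 and 0 ≤ m ≤ n. Then g_{ℓ,n}^m equals the number of colored permutations π ∈ G_{ℓ,n} having no m-circular succession. -/
/-!
Composing permutations with the inverse of the cyclic shift by `m` turns `m`-circular successions
into fixed points of color `0` among the values `≥ m`. So one counts colored permutations of a
finite type `α` having no fixed point of color `k₀` in a given subset `S`. When `a ∉ S` is added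
to `S`, the elements lost are those for which `a` is fixed with color `k₀`; deleting `a`, they
are the colored permutations of `{a}ᶜ` with no fixed point of color `k₀` in `S`. This is the
recurrence of the difference table, with `|α|` as row and `|Sᶜ|` as column.
-/

open Equiv Set
open scoped Nat

section ColoredDerangements

variable {K α : Type*} {k₀ : K}

/-- Colored permutations `(c, σ)` of `α`, with colors in `K`, having no fixed point of color `k₀`
in `S`. They interpolate between all colored permutations (`S = ∅`) and colored derangements
(`S = univ`). -/
def coloredDerangementsOn (k₀ : K) (S : Set α) : Set ((α → K) × Perm α) :=
  {π | ∀ a ∈ S, ¬(π.2 a = a ∧ π.1 a = k₀)}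

theorem ncard_coloredDerangementsOn_empty [Finite α] :
    (coloredDerangementsOn k₀ (∅ : Set α)).ncard = Nat.card K ^ Nat.card α * (Nat.card α)! := by
  have h_univ : coloredDerangementsOn k₀ (∅ : Set α) = univ := by simp [coloredDerangementsOn]
  rw [h_univ, ncard_univ, Nat.card_prod, Nat.card_fun, Nat.card_perm]

theorem coloredDerangementsOn_insert (a : α) (S : Set α) :
    coloredDerangementsOn k₀ (insert a S) =
      coloredDerangementsOn k₀ S \ {π | π.2 a = a ∧ π.1 a = k₀} := by
  ext π
  simp only [coloredDerangementsOn, forall_mem_insert, mem_sdiff, mem_ofPred_eq, and_comm]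

open scoped Classical in
/-- The colored permutation of `α` that extends one of `T` by fixed points of color `k₀`. -/
noncomputable def extendColored (k₀ : K) {T : Set α} (ρ : (T → K) × Perm T) :
    (α → K) × Perm α :=
  (Function.extend Subtype.val ρ.1 fun _ ↦ k₀, Perm.ofSubtype ρ.2)

section Extend

variable {T : Set α}

theorem extendColored_fst_coe (ρ : (T → K) × Perm T) (x : T) :
    (extendColored k₀ ρ).1 x = ρ.1 x :=
  Subtype.val_injective.extend_apply ρ.1 (fun _ ↦ k₀) x

theorem extendColored_snd_coe (ρ : (T → K) × Perm T) (x : T) :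
    (extendColored k₀ ρ).2 x = ρ.2 x := by
  classical exact Perm.ofSubtype_apply_coe ρ.2 x

theorem extendColored_fst_of_notMem (ρ : (T → K) × Perm T) {a : α} (ha : a ∉ T) :
    (extendColored k₀ ρ).1 a = k₀ :=
  Function.extend_apply' ρ.1 (fun _ ↦ k₀) a (by simpa using ha)

theorem extendColored_snd_of_notMem (ρ : (T → K) × Perm T) {a : α} (ha : a ∉ T) :
    (extendColored k₀ ρ).2 a = a := by
  classical exact Perm.ofSubtype_apply_of_not_mem ρ.2 ha

theorem extendColored_injective :
    Function.Injective (extendColored k₀ : (T → K) × Perm T → (α → K) × Perm α) := by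
  classical
  exact (Function.extend_injective Subtype.val_injective _).prodMap Perm.ofSubtype_injective

theorem range_extendColored :
    range (extendColored k₀ : (T → K) × Perm T → (α → K) × Perm α) =
      {π | ∀ a ∉ T, π.2 a = a ∧ π.1 a = k₀} := by
  classical
  ext ⟨c, σ⟩
  refine ⟨?_, fun h ↦ ?_⟩
  · rintro ⟨ρ, hρ⟩ a ha
    rw [← hρ]
    exact ⟨extendColored_snd_of_notMem ρ ha, extendColored_fst_of_notMem ρ ha⟩
  · have h_maps (x : α) : σ x ∈ T ↔ x ∈ T := by
      by_cases hx : x ∈ T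
      · refine iff_of_true (by_contra fun hσx ↦ hσx ?_) hx
        rwa [σ.injective (h (σ x) hσx).1]
      · rw [(h x hx).1]
    refine ⟨(c ∘ Subtype.val, σ.subtypePerm h_maps), Prod.ext (funext fun x ↦ ?_) ?_⟩
    · by_cases hx : x ∈ T
      · exact extendColored_fst_coe _ ⟨x, hx⟩
      · rw [extendColored_fst_of_notMem _ hx, (h x hx).2]
    · exact Perm.ofSubtype_subtypePerm h_maps fun x ↦ not_imp_comm.1 fun hx ↦ (h x hx).1

theorem extendColored_mem_coloredDerangementsOn_iff {S : Set α} (hST : S ⊆ T)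
    {ρ : (T → K) × Perm T} :
    extendColored k₀ ρ ∈ coloredDerangementsOn k₀ S ↔
      ρ ∈ coloredDerangementsOn k₀ (Subtype.val ⁻¹' S) := by
  have h_coe (x : T) :
      (extendColored k₀ ρ).2 x = x ∧ (extendColored k₀ ρ).1 x = k₀ ↔ ρ.2 x = x ∧ ρ.1 x = k₀ := by
    rw [extendColored_fst_coe, extendColored_snd_coe, Subtype.coe_inj]
  exact ⟨fun h x hx ↦ (h_coe x).not.1 (h x hx), fun h a ha ↦ (h_coe ⟨a, hST ha⟩).not.2 (h _ ha)⟩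

theorem ncard_coloredDerangementsOn_inter_fixing_compl {S : Set α} (hST : S ⊆ T) :
    (coloredDerangementsOn k₀ S ∩ {π | ∀ a ∉ T, π.2 a = a ∧ π.1 a = k₀}).ncard =
      (coloredDerangementsOn k₀ (Subtype.val ⁻¹' S : Set T)).ncard := by
  have h_preimage : coloredDerangementsOn k₀ (Subtype.val ⁻¹' S : Set T) =
      extendColored k₀ ⁻¹' coloredDerangementsOn k₀ S :=
    ext fun _ ↦ (extendColored_mem_coloredDerangementsOn_iff hST).symm
  rw [h_preimage, ← range_extendColored, ← image_preimage_eq_inter_range,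
    ncard_image_of_injective _ extendColored_injective]

end Extend

theorem ncard_coloredDerangementsOn_eq_add [Finite K] [Finite α] {a : α} {S : Set α}
    (ha : a ∉ S) :
    (coloredDerangementsOn k₀ S).ncard =
      (coloredDerangementsOn k₀ (Subtype.val ⁻¹' S : Set ({a}ᶜ : Set α))).ncard +
        (coloredDerangementsOn k₀ (insert a S)).ncard := by
  have h_fix : {π : (α → K) × Perm α | π.2 a = a ∧ π.1 a = k₀} =
      {π | ∀ b ∉ ({a}ᶜ : Set α), π.2 b = b ∧ π.1 b = k₀} := by simp
  rw [coloredDerangementsOn_insert,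
    ← ncard_coloredDerangementsOn_inter_fixing_compl (subset_compl_singleton_iff.2 ha), ← h_fix,
    ncard_inter_add_ncard_sdiff_eq_ncard]

theorem differenceTable_eq_ncard_coloredDerangementsOn [Finite K] [Finite α] {g : ℕ → ℕ → ℤ}
    (hg_diag : ∀ n, g n n = (Nat.card K : ℤ) ^ n * (n ! : ℤ))
    (hg_rec : ∀ n m, m < n → g n m = g n (m + 1) - g (n - 1) m) {m : ℕ} {S : Set α}
    (hmS : m + S.ncard = Nat.card α) :
    g (Nat.card α) m = (coloredDerangementsOn k₀ S).ncard := by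
  induction hk : S.ncard generalizing α m with
  | zero =>
    obtain rfl : S = ∅ := (ncard_eq_zero).1 hk
    rw [ncard_empty, add_zero] at hmS
    rw [ncard_coloredDerangementsOn_empty, hmS, hg_diag]
    norm_cast
  | succ k ih =>
    obtain ⟨a, S, ha, rfl, rfl⟩ := eq_insert_of_ncard_eq_succ hk
    have h_compl : Nat.card ({a}ᶜ : Set α) = Nat.card α - 1 := by
      rw [Nat.card_coe_set_eq, ncard_compl, ncard_singleton]
    have h_preimage : (Subtype.val ⁻¹' S : Set ({a}ᶜ : Set α)).ncard = S.ncard :=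
      ncard_preimage_of_injective_subset_range Subtype.val_injective
        (Subtype.range_val.symm ▸ subset_compl_singleton_iff.2 ha)
    have h_next_column : g (Nat.card α) (m + 1) = (coloredDerangementsOn k₀ S).ncard :=
      ih (by omega) rfl
    have h_prev_row : g (Nat.card α - 1) m =
        (coloredDerangementsOn k₀ (Subtype.val ⁻¹' S : Set ({a}ᶜ : Set α))).ncard := by
      rw [← h_compl]
      exact ih (by omega) h_preimage
    rw [hg_rec _ _ (by omega), h_next_column, h_prev_row, ncard_coloredDerangementsOn_eq_add ha]
    push_cast
    ring

theorem card_avoiding_perm_eq_ncard_coloredDerangementsOn (τ : Perm α) (S : Set α) :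
    Nat.card {π : (α → K) × Perm α //
      ∀ i, ¬((τ i ∈ S ∧ π.2 i = τ i) ∧ π.1 (π.2 i) = k₀)} =
      (coloredDerangementsOn k₀ S).ncard := by
  refine Nat.card_congr (((Equiv.refl _).prodCongr (Equiv.mulRight τ⁻¹)).subtypeEquiv ?_)
  rintro ⟨c, σ⟩
  have h_at (i : α) : ¬((τ i ∈ S ∧ σ i = τ i) ∧ c (σ i) = k₀) ↔
      (τ i ∈ S → ¬((σ * τ⁻¹) (τ i) = τ i ∧ c (τ i) = k₀)) := by
    rw [Perm.mul_apply, Perm.inv_def, symm_apply_apply]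
    grind
  exact (forall_congr' h_at).trans
    (τ.forall_congr_right (q := fun a ↦ a ∈ S → ¬((σ * τ⁻¹) a = a ∧ c a = k₀)))

end ColoredDerangements

/-- The permutation `i ↦ i + m mod n` of `Fin n`, defined for `n = 0` as well. -/
def cyclicShift {m n : ℕ} (hmn : m ≤ n) : Perm (Fin n) :=
  (finCongr (Nat.sub_add_cancel hmn).symm).trans
    (finAddFlip.trans (finCongr (Nat.add_sub_of_le hmn)))

theorem coe_cyclicShift {m n : ℕ} (hmn : m ≤ n) (i : Fin n) :
    (cyclicShift hmn i : ℕ) = if (i : ℕ) < n - m then m + i else i - (n - m) := by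
  split_ifs with hi
  · exact congrArg Fin.val (finAddFlip_apply_mk_left hi)
  · exact congrArg Fin.val (finAddFlip_apply_mk_right (not_lt.1 hi) (by omega))

theorem coe_eq_add_iff_eq_cyclicShift {m n : ℕ} (hmn : m ≤ n) (i j : Fin n) :
    (j : ℕ) = i + m ↔ m ≤ (cyclicShift hmn i : ℕ) ∧ j = cyclicShift hmn i := by
  rw [Fin.ext_iff, coe_cyclicShift]
  split <;> omega

theorem stmt_2_general {K : Type*} [Finite K] (k₀ : K) {g : ℕ → ℕ → ℤ}
    (hg_diag : ∀ n, g n n = (Nat.card K : ℤ) ^ n * (n ! : ℤ))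
    (hg_rec : ∀ n m, m < n → g n m = g n (m + 1) - g (n - 1) m) {m n : ℕ} (hmn : m ≤ n) :
    g n m = Nat.card {π : (Fin n → K) × Perm (Fin n) //
      ∀ i, ¬((π.2 i : ℕ) = (i : ℕ) + m ∧ π.1 (π.2 i) = k₀)} := by
  have h_card : m + {j : Fin n | m ≤ (j : ℕ)}.ncard = Nat.card (Fin n) := by
    have h_compl : {j : Fin n | m ≤ (j : ℕ)}ᶜ.ncard = m := by
      simp [compl_ofPred, ncard_eq_toFinset_card', Fin.card_filter_val_lt, hmn]
    rw [← ncard_add_ncard_compl {j : Fin n | m ≤ (j : ℕ)}, h_compl, add_comm]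
  calc g n m = (coloredDerangementsOn k₀ {j : Fin n | m ≤ (j : ℕ)}).ncard := by
        simpa using differenceTable_eq_ncard_coloredDerangementsOn hg_diag hg_rec h_card
    _ = _ := by
        simp only [coe_eq_add_iff_eq_cyclicShift hmn]
        exact congrArg _
          (card_avoiding_perm_eq_ncard_coloredDerangementsOn (cyclicShift hmn) _).symm

/-- for `0 ≤ m ≤ n`, the entry `g_{ℓ,n}^m` equals the number of colored
permutations `π = (ε, σ)` having no `m`-circular succession, i.e. no position `i` with
`σ i = i + m` (no wraparound) and `ε (σ i) = 0`. -/
theorem stmt_2 (ℓ : ℕ) (hℓ : 1 ≤ ℓ) (g : ℕ → ℕ → ℤ)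
    (hg_diag : ∀ n : ℕ, g n n = (ℓ : ℤ) ^ n * (Nat.factorial n : ℤ))
    (hg_rec : ∀ n m : ℕ, m < n → g n m = g n (m + 1) - g (n - 1) m)
    (m n : ℕ) (hmn : m ≤ n) :
    g n m = Nat.card {π : ColoredPerm ℓ n //
      ∀ i : Fin n, ¬((π.2 i : ℕ) = (i : ℕ) + m ∧ π.1 (π.2 i) = 0)} := by
  have : NeZero ℓ := ⟨Nat.one_le_iff_ne_zero.1 hℓ⟩
  exact stmt_2_general 0 (by simpa using hg_diag) hg_rec hmn
end

section
/- Let ℓ ≥ 1 and let k, m, n be integers with m ≥ 0 and 0 ≤ k ≤ n − m. Then c_{ℓ,n,m}^k = C(n−k, m) · g_{ℓ,n−m}^k, where C(n−k, m) is a binomial coefficient. -/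
/-- The number `c^k(π)` of `k`-circular successions of `π = (ε, σ)`:
positions `i` with `σ i = i + k` (no wraparound) and `ε (σ i) = 0`. -/
noncomputable def csuccCount (ℓ n k : ℕ) (π : ColoredPerm ℓ n) : ℕ :=
  Nat.card {i : Fin n // (π.2 i : ℕ) = (i : ℕ) + k ∧ π.1 (π.2 i) = 0}

/-- `c_{ℓ,n,m}^k`: the number of colored permutations in `G_{ℓ,n}` with exactly `m`
`k`-circular successions. -/
noncomputable def cCount (ℓ n k m : ℕ) : ℕ :=
  Nat.card {π : ColoredPerm ℓ n // csuccCount ℓ n k π = m}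

/-!
Let `A` be the set of the `n - k` positions `i` with `i + k ≤ n` and `F π ⊆ A` the set of
succession positions of `π`. Requiring successions at `T ⊆ A` prescribes `π` on `T`, so `T ⊆ F π`
holds for `ℓ ^ (n - #T) * (n - #T)!` colored permutations: a diagonal entry of the table.
Forbidding one more position `i` subtracts the count in which `i` is required instead, which is
exactly the recurrence of the table. Hence the number of `π` with `T ⊆ F π` and `F π` disjoint
from `S` is `g (n - #T) (n - #T - #S)`, and `S = A \ T` counts the `π` with `F π = T`.
-/

open Finset
open scoped Nat

section DifferenceTable

/-- `g` is Euler's difference table with diagonal `a`; `g n m` is the paper's `g_n^m`. The table is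
triangular: entries with `m > n` are unconstrained. -/
structure IsDifferenceTable (a : ℕ → ℤ) (g : ℕ → ℕ → ℤ) : Prop where
  diag (n : ℕ) : g n n = a n
  succ_left {n m : ℕ} (h : m ≤ n) : g (n + 1) m = g (n + 1) (m + 1) - g n m

variable {X α : Type*} [Fintype X] [DecidableEq α] {F : X → Finset α} {A S T : Finset α}

theorem card_filter_disjoint_insert_add (F : X → Finset α) (S T : Finset α) (i : α) :
    #{x | T ⊆ F x ∧ Disjoint (insert i S) (F x)} + #{x | insert i T ⊆ F x ∧ Disjoint S (F x)} =
      #{x | T ⊆ F x ∧ Disjoint S (F x)} := by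
  rw [← card_filter_add_card_filter_not (s := {x | T ⊆ F x ∧ Disjoint S (F x)}) (i ∉ F ·),
    filter_filter, filter_filter]
  congr 3 <;> ext x <;> simp only [disjoint_insert_left, insert_subset_iff] <;> tauto

theorem eq_iff_subset_and_disjoint_sdiff {B : Finset α} (hB : B ⊆ A) :
    B = T ↔ T ⊆ B ∧ Disjoint (A \ T) B := by
  refine ⟨by rintro rfl; exact ⟨subset_rfl, sdiff_disjoint⟩, fun ⟨hTB, hdisj⟩ ↦ ?_⟩
  refine subset_antisymm (fun i hi ↦ ?_) hTB
  by_contra hiT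
  exact disjoint_left.1 hdisj (mem_sdiff.2 ⟨hB hi, hiT⟩) hi

namespace IsDifferenceTable

variable {a : ℕ → ℤ} {g : ℕ → ℕ → ℤ} {N k : ℕ}

theorem card_filter_subset_disjoint (hg : IsDifferenceTable a g)
    (hF : ∀ T ⊆ A, (#{x | T ⊆ F x} : ℤ) = a (N - #T)) (hS : S ⊆ A) (hT : T ⊆ A)
    (hST : Disjoint S T) (hN : #T + #S + k = N) :
    (#{x | T ⊆ F x ∧ Disjoint S (F x)} : ℤ) = g (#S + k) k := by
  induction S using Finset.induction_on generalizing T k with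
  | empty =>
    have hk : N - #T = k := by simp only [card_empty] at hN; lia
    simp only [disjoint_empty_left, and_true, hF T hT, card_empty, zero_add, hg.diag, hk]
  | insert i S hi ih =>
    rw [insert_subset_iff] at hS
    rw [disjoint_insert_left] at hST
    rw [card_insert_of_notMem hi] at hN ⊢
    have forbid : (#{x | T ⊆ F x ∧ Disjoint S (F x)} : ℤ) = g (#S + (k + 1)) (k + 1) :=
      ih hS.2 hT hST.2 (by lia)
    have require : (#{x | insert i T ⊆ F x ∧ Disjoint S (F x)} : ℤ) = g (#S + k) k :=
      ih hS.2 (insert_subset hS.1 hT) (disjoint_insert_right.2 ⟨hi, hST.2⟩)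
        (by rw [card_insert_of_notMem hST.1]; lia)
    have split := card_filter_disjoint_insert_add F S T i
    rw [add_right_comm, hg.succ_left (by lia), ← require, add_assoc, ← forbid, ← split]
    push_cast
    ring

theorem card_filter_eq (hg : IsDifferenceTable a g)
    (hF : ∀ T ⊆ A, (#{x | T ⊆ F x} : ℤ) = a (N - #T)) (hFA : ∀ x, F x ⊆ A) (hN : #A + k = N)
    (hT : T ⊆ A) :
    (#{x | F x = T} : ℤ) = g (N - #T) k := by
  have hcard : #(A \ T) + #T = #A := card_sdiff_add_card_eq_card hT
  have hrow : #(A \ T) + k = N - #T := by lia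
  simp_rw [eq_iff_subset_and_disjoint_sdiff (hFA _)]
  rw [← hrow]
  exact hg.card_filter_subset_disjoint hF sdiff_subset hT sdiff_disjoint (by lia)

theorem card_filter_card_eq (hg : IsDifferenceTable a g)
    (hF : ∀ T ⊆ A, (#{x | T ⊆ F x} : ℤ) = a (N - #T)) (hFA : ∀ x, F x ⊆ A) (hN : #A + k = N)
    (m : ℕ) :
    (#{x | #(F x) = m} : ℤ) = (#A).choose m * g (N - m) k := by
  have hmaps : ∀ x ∈ ({x | #(F x) = m} : Finset X), F x ∈ powersetCard m A := fun x hx ↦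
    mem_powersetCard.2 ⟨hFA x, (mem_filter.1 hx).2⟩
  have hfiber : ∀ T ∈ powersetCard m A,
      (#{x ∈ {x | #(F x) = m} | F x = T} : ℤ) = g (N - m) k := by
    intro T hT
    obtain ⟨hTA, rfl⟩ := mem_powersetCard.1 hT
    rw [← hg.card_filter_eq hF hFA hN hTA, filter_filter]
    congr 3 with x
    exact and_iff_right_of_imp (congrArg card)
  rw [card_eq_sum_card_fiberwise hmaps, Nat.cast_sum, sum_congr rfl hfiber, sum_const,
    card_powersetCard, nsmul_eq_mul]

end IsDifferenceTable

end DifferenceTable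

section Extensions

variable {α C : Type*} [Fintype α] [DecidableEq α] [Fintype C] [DecidableEq C]

theorem card_filter_forall_mem_eq (f₀ : α → C) (T : Finset α) :
    #{f : α → C | ∀ i ∈ T, f i = f₀ i} = Fintype.card C ^ (Fintype.card α - #T) := by
  have e : {f : α → C // ∀ i ∈ T, f i = f₀ i} ≃ ({i // i ∉ T} → C) :=
    (Equiv.subtypeEquivRight fun f ↦ by simp [funext_iff]).trans
      (Equiv.subtypePreimage (· ∈ T) fun i ↦ f₀ i)
  rw [← Fintype.card_subtype, Fintype.card_congr e, Fintype.card_fun, Fintype.card_subtype_compl,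
    Fintype.card_coe]

theorem card_filter_perm_forall_mem_eq (τ : Equiv.Perm α) (T : Finset α) :
    #{σ : Equiv.Perm α | ∀ i ∈ T, σ i = τ i} = (Fintype.card α - #T)! := by
  have translate : {σ : Equiv.Perm α // ∀ i ∈ T, σ i = τ i} ≃
      {σ : Equiv.Perm α // ∀ i, ¬ i ∉ T → σ i = i} :=
    (Equiv.mulLeft τ⁻¹).subtypeEquiv fun σ ↦ by
      simp only [not_not, Equiv.coe_mulLeft, Equiv.Perm.mul_apply, Equiv.Perm.inv_eq_iff_eq]
  have e := translate.trans (Equiv.Perm.subtypeEquivSubtypePerm (· ∉ T)).symm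
  rw [← Fintype.card_subtype, Fintype.card_congr e, Fintype.card_perm, Fintype.card_subtype_compl,
    Fintype.card_coe]

theorem card_filter_coloredPerm_forall_mem_eq (ρ : (α → C) × Equiv.Perm α) (T : Finset α) :
    #{π : (α → C) × Equiv.Perm α | ∀ i ∈ T, π.2 i = ρ.2 i ∧ π.1 (π.2 i) = ρ.1 (ρ.2 i)} =
      Fintype.card C ^ (Fintype.card α - #T) * (Fintype.card α - #T)! := by
  rw [← card_filter_perm_forall_mem_eq ρ.2 T, ← card_map ρ.2.toEmbedding,
    ← card_filter_forall_mem_eq ρ.1, ← card_product]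
  congr 1 with π
  simp only [mem_filter_univ, mem_product, forall_mem_map, Equiv.coe_toEmbedding]
  grind

end Extensions

namespace ColoredPerm

variable {ℓ n : ℕ}

/-- The positions `i` of the `k`-circular successions of `π`. -/
def successions (k : ℕ) (π : ColoredPerm ℓ n) : Finset (Fin n) :=
  {i | (π.2 i : ℕ) = i + k ∧ π.1 (π.2 i) = 0}

/-- The positions `i` at which a `k`-circular succession is possible, i.e. `i + k` is still a
letter. -/
def admissible (n k : ℕ) : Finset (Fin n) :=
  {i | (i : ℕ) + k < n}

theorem mem_successions {k : ℕ} {π : ColoredPerm ℓ n} {i : Fin n} :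
    i ∈ successions k π ↔ (π.2 i : ℕ) = i + k ∧ π.1 (π.2 i) = 0 :=
  mem_filter_univ i

theorem mem_admissible {k : ℕ} {i : Fin n} : i ∈ admissible n k ↔ (i : ℕ) + k < n :=
  mem_filter_univ i

theorem card_admissible (n k : ℕ) : #(admissible n k) = n - k := by
  simp only [admissible, ← Nat.lt_sub_iff_add_lt, Fin.card_filter_val_lt]
  exact min_eq_right (Nat.sub_le n k)

theorem successions_subset_admissible (k : ℕ) (π : ColoredPerm ℓ n) :
    successions k π ⊆ admissible n k := by
  intro i hi
  rw [mem_admissible, ← (mem_successions.1 hi).1]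
  exact (π.2 i).isLt

theorem exists_perm_val_eq_add (n k : ℕ) :
    ∃ τ : Equiv.Perm (Fin n), ∀ i ∈ admissible n k, (τ i : ℕ) = i + k := by
  obtain _ | n := n
  · exact ⟨1, fun i ↦ i.elim0⟩
  · refine ⟨Equiv.addRight (Fin.ofNat (n + 1) k), fun i hi ↦ ?_⟩
    rw [Equiv.coe_addRight, Fin.val_add, Fin.val_ofNat, Nat.add_mod_mod]
    exact Nat.mod_eq_of_lt (mem_admissible.1 hi)

theorem card_filter_subset_successions [NeZero ℓ] {k : ℕ} {T : Finset (Fin n)}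
    (hT : T ⊆ admissible n k) :
    #{π : ColoredPerm ℓ n | T ⊆ successions k π} = ℓ ^ (n - #T) * (n - #T)! := by
  obtain ⟨τ, hτ⟩ := exists_perm_val_eq_add n k
  have hsub (π : ColoredPerm ℓ n) :
      T ⊆ successions k π ↔ ∀ i ∈ T, π.2 i = τ i ∧ π.1 (π.2 i) = 0 :=
    forall₂_congr fun i hi ↦ by rw [mem_successions, ← hτ i (hT hi), Fin.val_inj]
  simp only [hsub]
  simpa only [ZMod.card, Fintype.card_fin] using
    card_filter_coloredPerm_forall_mem_eq ((fun _ ↦ 0, τ) : ColoredPerm ℓ n) T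

theorem csuccCount_eq_card_successions (k : ℕ) (π : ColoredPerm ℓ n) :
    csuccCount ℓ n k π = #(successions k π) := by
  rw [csuccCount, Nat.card_eq_fintype_card, Fintype.card_subtype, successions]

theorem cCount_eq_card_filter [NeZero ℓ] (k m : ℕ) :
    cCount ℓ n k m = #{π : ColoredPerm ℓ n | #(successions k π) = m} := by
  simp only [cCount, csuccCount_eq_card_successions, Nat.card_eq_fintype_card,
    Fintype.card_subtype]

end ColoredPerm

/-- for `m ≥ 0` and `0 ≤ k ≤ n − m`,
`c_{ℓ,n,m}^k = C(n−k, m) · g_{ℓ,n−m}^k`. -/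
theorem stmt_5 (ℓ : ℕ) (hℓ : 1 ≤ ℓ) (g : ℕ → ℕ → ℤ)
    (hg_diag : ∀ n : ℕ, g n n = (ℓ : ℤ) ^ n * (Nat.factorial n : ℤ))
    (hg_rec : ∀ n m : ℕ, m < n → g n m = g n (m + 1) - g (n - 1) m)
    (k m n : ℕ) (hmn : m ≤ n) (hk : k ≤ n - m) :
    (cCount ℓ n k m : ℤ) = ((n - k).choose m : ℤ) * g (n - m) k := by
  have : NeZero ℓ := ⟨Nat.one_le_iff_ne_zero.1 hℓ⟩
  have hg : IsDifferenceTable (fun r ↦ (ℓ : ℤ) ^ r * (r ! : ℤ)) g :=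
    ⟨hg_diag, fun h ↦ hg_rec _ _ (Nat.lt_succ_of_le h)⟩
  have hA : #(ColoredPerm.admissible n k) + k = n := by rw [ColoredPerm.card_admissible]; lia
  have hF : ∀ T ⊆ ColoredPerm.admissible n k,
      (#{π : ColoredPerm ℓ n | T ⊆ ColoredPerm.successions k π} : ℤ) =
        (ℓ : ℤ) ^ (n - #T) * ((n - #T)! : ℤ) :=
    fun T hT ↦ by exact_mod_cast ColoredPerm.card_filter_subset_successions hT
  rw [ColoredPerm.cCount_eq_card_filter, ← ColoredPerm.card_admissible]
  exact hg.card_filter_card_eq hF (ColoredPerm.successions_subset_admissible k) hA m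
end

section
/- For every n ≥ 1 there exists a bijection φ from the symmetric group S_n onto itself such that for every σ ∈ S_n and every integer k ≥ 1, the set of k-circular successions of σ equals the set of k-linear successions of φ(σ); that is, {i + k : i ∈ [n], σ(i) = i + k ≤ n} = {τ(i) : 2 ≤ i ≤ n, τ(i) = τ(i−1) + k} where τ = φ(σ). -/
/-- The set of `k`-circular successions of a permutation `σ` of `[n]`,
recorded by their values: `{i + k : i ∈ [n], σ i = i + k ≤ n}`.
We model `[n] = {1,…,n}` by `Fin n` (so `j : Fin n` represents the value `j + 1`). -/
def circSet (n k : ℕ) (σ : Equiv.Perm (Fin n)) : Set (Fin n) :=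
  {j | ∃ i : Fin n, σ i = j ∧ (j : ℕ) = (i : ℕ) + k}

/-- The set of `k`-linear successions of a permutation `τ` of `[n]`, recorded by their
values: `{τ i : 2 ≤ i ≤ n, τ i = τ (i−1) + k}`.  In the 0-indexed model, position
`i ∈ {2,…,n}` corresponds to the successor of a position `i' : Fin n` with `i' + 1 < n`. -/
def linSet (n k : ℕ) (τ : Equiv.Perm (Fin n)) : Set (Fin n) :=
  {j | ∃ i : Fin n, ∃ hi : (i : ℕ) + 1 < n,
    τ ⟨(i : ℕ) + 1, hi⟩ = j ∧ (j : ℕ) = (τ i : ℕ) + k}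

/-!
Permutations of `{0, …, n}` arise from permutations of `{1, …, n}` in two ways, each determined by a
choice of `p ∈ {0, …, n}`: insert `0` right before `p` in its cycle (as a new fixed point if
`p = 0`), or right before `p` in the word (at the end if `p = 0`). The first operation replaces the
arc `x ↦ p` by `x ↦ 0 ↦ p`, the second the factor `x p` by `x 0 p`. Since `0` is the smallest value,
both change the set of pairs `a < b` with `b` right after `a` in the same way: they remove the pair
`(x, p)` with second entry `p`, if there is one, and add `(0, p)` if `p ≠ 0`. Inserting the values
in decreasing order therefore matches each `σ` with a word whose ascents at adjacent positions are
exactly the pairs `(i, σ i)` with `i < σ i`.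
-/

open Equiv

section SuccAbove

variable {n : ℕ}

lemma covBy_succAbove_iff {q : Fin (n + 1)} {y : Fin n} :
    q ⋖ q.succAbove y ↔ q = y.castSucc := by
  simp only [Fin.covBy_iff, Nat.covBy_iff_add_one_eq, Fin.ext_iff, Fin.succAbove, Fin.lt_def]
  split_ifs <;> simp only [Fin.val_castSucc, Fin.val_succ] at * <;> omega

lemma succAbove_covBy_succAbove_iff {q : Fin (n + 1)} {x y : Fin n} :
    q.succAbove x ⋖ q.succAbove y ↔ x ⋖ y ∧ q ≠ y.castSucc := by
  simp only [Fin.covBy_iff, Nat.covBy_iff_add_one_eq, ne_eq, Fin.ext_iff, Fin.succAbove, Fin.lt_def]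
  split_ifs <;> simp only [Fin.val_castSucc, Fin.val_succ] at * <;> omega

end SuccAbove

section Insertion

variable {n : ℕ}

/-- Insertion of a new smallest letter at position `q` of a word. Words are encoded by the
permutation `g` sending each letter to its position; the old letter `x` becomes `x.succ`. -/
def insertZero (q : Fin (n + 1)) (g : Perm (Fin n)) : Perm (Fin (n + 1)) :=
  q.cycleRange.symm * Perm.decomposeFin.symm (0, g)

lemma insertZero_apply_zero (q : Fin (n + 1)) (g : Perm (Fin n)) : insertZero q g 0 = q := by
  simp [insertZero]

lemma insertZero_apply_succ (q : Fin (n + 1)) (g : Perm (Fin n)) (x : Fin n) :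
    insertZero q g x.succ = q.succAbove (g x) := by
  simp [insertZero]

lemma insertZero_inj {q r : Fin (n + 1)} {g h : Perm (Fin n)} :
    insertZero q g = insertZero r h ↔ q = r ∧ g = h := by
  refine ⟨fun e ↦ ?_, by rintro ⟨rfl, rfl⟩; rfl⟩
  obtain rfl : q = r := by rw [← insertZero_apply_zero q g, e, insertZero_apply_zero]
  have extended_eq := Perm.decomposeFin.symm.injective (mul_left_cancel e)
  exact ⟨rfl, congrArg Prod.snd extended_eq⟩

/-- The position at which the new letter `0` must be inserted in the word with letter-to-position
map `g` in order to stand right before the letter `p`; for `p = 0` it is the end of the word. -/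
def slotBefore (g : Perm (Fin n)) : Perm (Fin (n + 1)) :=
  (finRotate (n + 1)).symm * Perm.decomposeFin.symm (0, g)

lemma slotBefore_succ (g : Perm (Fin n)) (y : Fin n) : slotBefore g y.succ = (g y).castSucc := by
  have rotate_castSucc : finRotate (n + 1) (g y).castSucc = (g y).succ := by
    rw [finRotate_apply, Fin.coeSucc_eq_succ]
  rw [slotBefore, Perm.mul_apply, Perm.decomposeFin_symm_apply_succ, swap_self, refl_apply,
    Equiv.symm_apply_eq, rotate_castSucc]

lemma slotBefore_eq_castSucc_iff {g : Perm (Fin n)} {p : Fin (n + 1)} {y : Fin n} :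
    slotBefore g p = (g y).castSucc ↔ p = y.succ := by
  rw [← slotBefore_succ, (slotBefore g).apply_eq_iff_eq]

lemma bijective_insertZero_slotBefore (n : ℕ) :
    Function.Bijective
      fun x : Fin (n + 1) × Perm (Fin n) ↦ insertZero (slotBefore x.2 x.1) x.2 := by
  refine (Fintype.bijective_iff_injective_and_card _).2
    ⟨?_, Fintype.card_congr Perm.decomposeFin.symm⟩
  rintro ⟨p, g⟩ ⟨r, h⟩ e
  obtain ⟨slot_eq, rfl : g = h⟩ := insertZero_inj.1 e
  exact congrArg (·, g) ((slotBefore g).injective slot_eq)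

end Insertion

/-- `σ` is compared with the word whose letter-to-position map is `g`: the excedance arcs `a ↦ b` of
`σ` are the ascents `a b` of the word at adjacent positions. -/
def ExcedancesAreAscents {n : ℕ} (σ g : Perm (Fin n)) : Prop :=
  ∀ ⦃a b⦄, a < b → (σ a = b ↔ g a ⋖ g b)

lemma decomposeFin_symm_succ_eq_succ_iff {n : ℕ} {p : Fin (n + 1)} {σ : Perm (Fin n)}
    {x y : Fin n} :
    Perm.decomposeFin.symm (p, σ) x.succ = y.succ ↔ σ x = y ∧ p ≠ y.succ := by
  rw [Perm.decomposeFin_symm_apply_succ, swap_apply_eq_iff]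
  by_cases hp : p = y.succ
  · simp [hp, Fin.succ_ne_zero]
  · simp [hp, swap_apply_of_ne_of_ne (Fin.succ_ne_zero y) (Ne.symm hp)]

-- `Perm.decomposeFin.symm (p, σ)` is `σ` with `0` inserted right before `p` in its cycle.
lemma ExcedancesAreAscents.insert {n : ℕ} {σ g : Perm (Fin n)} (h : ExcedancesAreAscents σ g)
    (p : Fin (n + 1)) :
    ExcedancesAreAscents (Perm.decomposeFin.symm (p, σ)) (insertZero (slotBefore g p) g) := by
  intro a b hab
  obtain ⟨y, rfl⟩ := Fin.exists_succ_eq.2 (Fin.ne_zero_of_lt hab)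
  cases a using Fin.cases with
  | zero =>
    rw [Perm.decomposeFin_symm_apply_zero, insertZero_apply_zero, insertZero_apply_succ,
      covBy_succAbove_iff, slotBefore_eq_castSucc_iff]
  | succ x =>
    rw [decomposeFin_symm_succ_eq_succ_iff, insertZero_apply_succ, insertZero_apply_succ,
      succAbove_covBy_succAbove_iff, ne_eq, ne_eq, slotBefore_eq_castSucc_iff,
      h (Fin.succ_lt_succ_iff.1 hab)]

/-- The bijection sending `σ` to the letter-to-position map of the word obtained by inserting the
letters in decreasing order. The letter `a` goes right before the letter that follows it in its
cycle of `σ` once the letters below `a` are deleted, or to the end if `a` is then a fixed point. -/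
noncomputable def excedanceToAscent : ∀ n, Perm (Fin n) ≃ Perm (Fin n)
  | 0 => Equiv.refl _
  | n + 1 => Perm.decomposeFin.trans <|
      ((Equiv.refl _).prodCongr (excedanceToAscent n)).trans <|
        Equiv.ofBijective _ (bijective_insertZero_slotBefore n)

lemma excedancesAreAscents_excedanceToAscent {n : ℕ} (σ : Perm (Fin n)) :
    ExcedancesAreAscents σ (excedanceToAscent n σ) := by
  induction n with
  | zero => exact fun a ↦ a.elim0
  | succ n ih =>
    obtain ⟨⟨p, ρ⟩, rfl⟩ := Perm.decomposeFin.symm.surjective σ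
    simpa [excedanceToAscent] using (ih ρ).insert p

lemma mem_linSet_iff {n k : ℕ} {τ : Perm (Fin n)} {j : Fin n} :
    j ∈ linSet n k τ ↔ ∃ i : Fin n, τ⁻¹ i ⋖ τ⁻¹ j ∧ (j : ℕ) = i + k := by
  constructor
  · rintro ⟨i, hi, rfl, hj⟩
    exact ⟨τ i, by simp, hj⟩
  · rintro ⟨i, hcov, hj⟩
    have next : (τ⁻¹ i : ℕ) + 1 = τ⁻¹ j := by
      simpa only [Fin.covBy_iff, Nat.covBy_iff_add_one_eq] using hcov
    refine ⟨τ⁻¹ i, next ▸ (τ⁻¹ j).isLt, ?_, by simpa using hj⟩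
    exact Perm.eq_inv_iff_eq.1 (Fin.ext next)

lemma ExcedancesAreAscents.circSet_eq_linSet {n k : ℕ} {σ g : Perm (Fin n)}
    (h : ExcedancesAreAscents σ g) (hk : 1 ≤ k) : circSet n k σ = linSet n k g⁻¹ := by
  ext j
  rw [mem_linSet_iff, inv_inv]
  refine exists_congr fun i ↦ and_congr_left fun hj ↦ h ?_
  rw [Fin.lt_def]
  omega

/-- for every `n ≥ 1` there is a bijection `φ` of the symmetric group `S_n`
onto itself such that for every `σ` and every `k ≥ 1`, the set of `k`-circular successions
of `σ` equals the set of `k`-linear successions of `φ σ`. -/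
theorem stmt_6 (n : ℕ) (hn : 1 ≤ n) :
    ∃ φ : Equiv.Perm (Fin n) ≃ Equiv.Perm (Fin n),
      ∀ σ : Equiv.Perm (Fin n), ∀ k : ℕ, 1 ≤ k →
        circSet n k σ = linSet n k (φ σ) := by
  refine ⟨(excedanceToAscent n).trans (Equiv.inv _), fun σ k hk ↦ ?_⟩
  exact (excedancesAreAscents_excedanceToAscent σ).circSet_eq_linSet hk
end

section
/- Let ℓ ≥ 1, n ≥ 1 and k ≥ 0. There exists a bijection Φ from G_{ℓ,n} onto itself such that for every π ∈ G_{ℓ,n}: (a) C^{k+1}(π) = L^{k+1}(Φ(π)), and (b) C^{k}(δ(π)) = L^{*(k+1)}(Φ(π)), where δ is the bijection of G_{ℓ,n} sending the one-line word π_1 π_2 ⋯ π_n to π_n π_1 π_2 ⋯ π_{n−1}. -/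
/-- `C^k(π)`: the set of `k`-circular successions of `π = (ε, σ)`, recorded by their
values `j = σ i` with `σ i = i + k` (no wraparound) and `ε (σ i) = 0`. -/
def cSet (ℓ n k : ℕ) (π : ColoredPerm ℓ n) : Set (Fin n) :=
  {j | π.1 j = 0 ∧ ∃ i : Fin n, π.2 i = j ∧ (j : ℕ) = (i : ℕ) + k}

/-- `L^k(π)`: the set of `k`-linear successions of `π = (ε, σ)` (for `k ≥ 1`), recorded
by their values `σ i` for positions `2 ≤ i ≤ n` with `σ i = σ (i−1) + k` and
`ε (σ i) = ε (σ (i−1))`. -/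
def lSet (ℓ n k : ℕ) (π : ColoredPerm ℓ n) : Set (Fin n) :=
  {j | ∃ i : Fin n, ∃ hi : (i : ℕ) + 1 < n,
    π.2 ⟨(i : ℕ) + 1, hi⟩ = j ∧ (j : ℕ) = (π.2 i : ℕ) + k ∧ π.1 j = π.1 (π.2 i)}

/-- `L^{*k}(π)`: the set of skew `k`-linear successions; it is `L^k(π)` together with the
value `k` in case `π(1) = k` (i.e. `σ(1) = k` uncolored), using the convention `π(0) = 0`. -/
def lstarSet (ℓ n k : ℕ) (π : ColoredPerm ℓ n) : Set (Fin n) :=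
  lSet ℓ n k π ∪ {j | ∃ h0 : 0 < n, π.2 ⟨0, h0⟩ = j ∧ (j : ℕ) + 1 = k ∧ π.1 j = 0}

/-- The bijection `δ` cyclically shifting the one-line notation:
`δ(π)(1) = π(n)` and `δ(π)(i) = π(i−1)` for `2 ≤ i ≤ n`.  Colors are attached to values,
so only the underlying permutation changes, by precomposition with `i ↦ i − 1 (mod n)`. -/
def deltaMap (ℓ n : ℕ) (π : ColoredPerm ℓ n) : ColoredPerm ℓ n :=
  (π.1, Equiv.trans (finRotate n).symm π.2)

/-!
The bijection is a variant of Foata's fundamental transformation, which carries the excedances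
`i < σ i` of a permutation to the ascents `i, σ i` of a word. It is built recursively: from
`ρ = (p, e)` in the Fisher–Yates decomposition, with `p = ρ 0`, take the word of `e`, raise its
letters by one, put a new letter `0` in front, and rotate the result so that it starts with `p`.
Rotating only breaks the adjacency that ends in `p`, and passing from `e` to `ρ` only loses the
value `p`. Hence, once a sentinel `0` is put in front of the word of `ρ`, with all letters raised
again, a letter `j + 1` follows `i ≤ j` exactly when `ρ i = j`.

Applied to the permutation `ρ` of `δ π`, this turns a succession of `δ π` into an adjacency with
the same difference plus one, where the sentinel plays the role of `π(0) = 0`. Replacing the colors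
by their partial sums along the word turns an uncolored letter into one with the same color as its
predecessor.
-/

open Equiv

theorem decomposeFin_symm_succ_eq_succ_iff_s7 {n : ℕ} (p : Fin (n + 1)) (e : Perm (Fin n))
    (i j : Fin n) :
    Perm.decomposeFin.symm (p, e) i.succ = j.succ ↔ e i = j ∧ j.succ ≠ p := by
  rw [Perm.decomposeFin_symm_apply_succ]
  by_cases h : (e i).succ = p
  · rw [h, swap_apply_right]
    exact ⟨fun h0 => absurd h0.symm (Fin.succ_ne_zero j),
      fun ⟨hij, hj⟩ => absurd (hij ▸ h) hj⟩
  · rw [swap_apply_of_ne_of_ne (Fin.succ_ne_zero _) h, Fin.succ_inj]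
    exact ⟨fun hij => ⟨hij, hij ▸ h⟩, And.left⟩

/-- The permutation sending each letter of the word `w 0, w 1, …` to the next one, the last letter
being sent to the first. -/
def cyclicNext {n : ℕ} (w : Perm (Fin n)) : Perm (Fin n) := w.permCongr (finRotate n)

theorem cyclicNext_apply {n : ℕ} (w : Perm (Fin n)) (i : Fin n) :
    cyclicNext w (w i) = w (finRotate n i) := by
  rw [cyclicNext, permCongr_apply, symm_apply_apply]

/-- The rotation of the word `w` that starts with the letter `p`. -/
def rotateTo {n : ℕ} (p : Fin n) (w : Perm (Fin n)) : Perm (Fin n) :=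
  (finCycle (w.symm p)).trans w

theorem rotateTo_apply {n : ℕ} (p : Fin n) (w : Perm (Fin n)) (i : Fin n) :
    rotateTo p w i = w (i + w.symm p) := rfl

theorem rotateTo_apply_zero {n : ℕ} (p : Fin (n + 1)) (w : Perm (Fin (n + 1))) :
    rotateTo p w 0 = p := by
  rw [rotateTo_apply, zero_add, apply_symm_apply]

theorem rotateTo_self {n : ℕ} (w : Perm (Fin (n + 1))) : rotateTo (w 0) w = w := by
  ext1 i
  rw [rotateTo_apply, symm_apply_apply, add_zero]

theorem rotateTo_rotateTo {n : ℕ} (p q : Fin (n + 1)) (w : Perm (Fin (n + 1))) :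
    rotateTo q (rotateTo p w) = rotateTo q w := by
  have hq : (rotateTo p w).symm q = w.symm q - w.symm p := by
    rw [symm_apply_eq, rotateTo_apply, sub_add_cancel, apply_symm_apply]
  ext1 i
  rw [rotateTo_apply, hq, rotateTo_apply, rotateTo_apply, add_assoc, sub_add_cancel]

theorem cyclicNext_rotateTo {n : ℕ} (p : Fin (n + 1)) (w : Perm (Fin (n + 1))) :
    cyclicNext (rotateTo p w) = cyclicNext w := by
  ext1 x
  obtain ⟨i, rfl⟩ := (rotateTo p w).surjective x
  rw [cyclicNext_apply, rotateTo_apply, rotateTo_apply, cyclicNext_apply, finRotate_apply,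
    finRotate_apply, add_right_comm]

/-- The word `0, τ 0 + 1, τ 1 + 1, …`. -/
def prependZero {n : ℕ} (τ : Perm (Fin n)) : Perm (Fin (n + 1)) := Perm.decomposeFin.symm (0, τ)

theorem prependZero_zero {n : ℕ} (τ : Perm (Fin n)) : prependZero τ 0 = 0 :=
  Perm.decomposeFin_symm_apply_zero 0 τ

theorem prependZero_succ {n : ℕ} (τ : Perm (Fin n)) (i : Fin n) :
    prependZero τ i.succ = (τ i).succ := by
  rw [prependZero, Perm.decomposeFin_symm_apply_succ, swap_self, refl_apply]

theorem decomposeFin_prependZero {n : ℕ} (τ : Perm (Fin n)) :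
    Perm.decomposeFin (prependZero τ) = (0, τ) :=
  apply_symm_apply _ _

theorem prependZero_decomposeFin_snd {n : ℕ} {w : Perm (Fin (n + 1))} (hw : w 0 = 0) :
    prependZero (Perm.decomposeFin w).2 = w := by
  obtain ⟨⟨p, e⟩, rfl⟩ := Perm.decomposeFin.symm.surjective w
  rw [Perm.decomposeFin_symm_apply_zero] at hw
  rw [apply_symm_apply, prependZero, hw]

theorem cyclicNext_prependZero_eq_succ_iff {n : ℕ} (τ : Perm (Fin n)) (x : Fin (n + 1))
    (y : Fin n) :
    cyclicNext (prependZero τ) x = y.succ ↔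
      ∃ i : Fin n, prependZero τ i.castSucc = x ∧ τ i = y := by
  have next_castSucc (i : Fin n) :
      cyclicNext (prependZero τ) (prependZero τ i.castSucc) = (τ i).succ := by
    rw [cyclicNext_apply, finRotate_apply, Fin.coeSucc_eq_succ, prependZero_succ]
  obtain ⟨m, rfl⟩ := (prependZero τ).surjective x
  constructor
  · intro h
    induction m using Fin.lastCases with
    | last =>
      rw [cyclicNext_apply, finRotate_last, prependZero_zero] at h
      exact absurd h.symm (Fin.succ_ne_zero y)
    | cast i =>
      rw [next_castSucc, Fin.succ_inj] at h
      exact ⟨i, rfl, h⟩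
  · rintro ⟨i, hi, rfl⟩
    rw [← hi, next_castSucc]

theorem cyclicNext_prependZero {n : ℕ} (τ : Perm (Fin (n + 1))) :
    cyclicNext (prependZero τ) = Perm.decomposeFin.symm ((τ 0).succ, cyclicNext τ) := by
  ext1 x
  obtain ⟨m, rfl⟩ := (prependZero τ).surjective x
  rw [cyclicNext_apply]
  induction m using Fin.cases with
  | zero =>
    rw [finRotate_apply_zero, ← Fin.succ_zero_eq_one, prependZero_succ, prependZero_zero,
      Perm.decomposeFin_symm_apply_zero]
  | succ i =>
    rw [prependZero_succ, Perm.decomposeFin_symm_apply_succ, cyclicNext_apply]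
    induction i using Fin.lastCases with
    | last =>
      rw [Fin.succ_last, finRotate_last, finRotate_last, prependZero_zero, swap_apply_right]
    | cast i =>
      rw [finRotate_apply, finRotate_apply, Fin.succ_castSucc, Fin.coeSucc_eq_succ,
        Fin.coeSucc_eq_succ, prependZero_succ, swap_apply_of_ne_of_ne (Fin.succ_ne_zero _)]
      exact fun h => Fin.succ_ne_zero i (τ.injective (Fin.succ_injective _ h))

/-- A word on `Fin (n + 1)` amounts to its first letter together with the word on `Fin n` that is
left after rotating the letter `0` to the front and removing it. -/
def rotationEquiv (n : ℕ) : Fin (n + 1) × Perm (Fin n) ≃ Perm (Fin (n + 1)) where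
  toFun x := rotateTo x.1 (prependZero x.2)
  invFun w := (w 0, (Perm.decomposeFin (rotateTo 0 w)).2)
  left_inv := by
    rintro ⟨p, τ⟩
    have rotate_prependZero : rotateTo 0 (prependZero τ) = prependZero τ := by
      simpa only [prependZero_zero] using rotateTo_self (prependZero τ)
    simp only [rotateTo_apply_zero, rotateTo_rotateTo, rotate_prependZero,
      decomposeFin_prependZero]
  right_inv w := by
    simp only [prependZero_decomposeFin_snd (rotateTo_apply_zero 0 w), rotateTo_rotateTo,
      rotateTo_self]

/-- The variant of Foata's fundamental transformation that turns the weak excedances of a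
permutation into the ascents of a word with a sentinel in front. -/
def fundamentalEquiv : (n : ℕ) → Perm (Fin n) ≃ Perm (Fin n)
  | 0 => Equiv.refl _
  | n + 1 => Perm.decomposeFin.trans
      ((prodCongr (Equiv.refl _) (fundamentalEquiv n)).trans (rotationEquiv n))

theorem fundamentalEquiv_decomposeFin_symm {n : ℕ} (p : Fin (n + 1)) (e : Perm (Fin n)) :
    fundamentalEquiv (n + 1) (Perm.decomposeFin.symm (p, e)) =
      rotateTo p (prependZero (fundamentalEquiv n e)) := by
  simp [fundamentalEquiv, rotationEquiv]

theorem cyclicNext_fundamentalEquiv_eq_succ_iff {n : ℕ} (ρ : Perm (Fin n)) {i j : Fin n}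
    (hij : i ≤ j) :
    cyclicNext (prependZero (fundamentalEquiv n ρ)) i.castSucc = j.succ ↔ ρ i = j := by
  induction n with
  | zero => exact i.elim0
  | succ n ih =>
    obtain ⟨⟨p, e⟩, rfl⟩ := Perm.decomposeFin.symm.surjective ρ
    rw [cyclicNext_prependZero, fundamentalEquiv_decomposeFin_symm, rotateTo_apply_zero,
      cyclicNext_rotateTo]
    induction i using Fin.cases with
    | zero =>
      rw [Fin.castSucc_zero, Perm.decomposeFin_symm_apply_zero,
        Perm.decomposeFin_symm_apply_zero, Fin.succ_inj]
    | succ i =>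
      obtain ⟨j, rfl⟩ := Fin.exists_succ_eq.2 (Fin.ne_zero_of_lt ((Fin.succ_pos i).trans_le hij))
      rw [← Fin.succ_castSucc, decomposeFin_symm_succ_eq_succ_iff_s7,
        decomposeFin_symm_succ_eq_succ_iff_s7, ih e (Fin.succ_le_succ_iff.1 hij), ne_eq, ne_eq,
        Fin.succ_inj]

section PartialSums

variable {G : Type*} [AddGroup G] {n : ℕ}

/-- The nonempty partial sums of a sequence; the inverse takes differences of consecutive terms,
starting from `0`. -/
def partialSumEquiv : (Fin n → G) ≃ (Fin n → G) where
  toFun f i := Fin.partialSum f i.succ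
  invFun g i := -(Fin.cons 0 g : Fin (n + 1) → G) i.castSucc + g i
  left_inv f := by
    have cons_eq : (Fin.cons 0 fun i => Fin.partialSum f i.succ : Fin (n + 1) → G) =
        Fin.partialSum f := by
      rw [← Fin.partialSum_zero f]
      exact Fin.cons_self_tail _
    funext i
    simp only [cons_eq, Fin.partialSum_right_neg]
  right_inv g := by
    funext i
    simpa using congrFun (Fin.partialSum_left_neg (Fin.cons 0 g : Fin (n + 1) → G)) i.succ

/-- Replaces the color of each letter of the word `τ` by the sum of the colors up to that letter;
colors are indexed by letters, not by positions. -/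
def sumColors (τ : Perm (Fin n)) : (Fin n → G) ≃ (Fin n → G) :=
  (τ.arrowCongr (Equiv.refl G)).permCongr partialSumEquiv

theorem sumColors_apply (τ : Perm (Fin n)) (ε : Fin n → G) (i : Fin n) :
    sumColors τ ε (τ i) = Fin.partialSum (ε ∘ τ) i.succ := by
  simp [sumColors, partialSumEquiv, arrowCongr, Function.comp_def]

theorem cons_zero_sumColors_prependZero (τ : Perm (Fin n)) (ε : Fin n → G) (m : Fin (n + 1)) :
    (Fin.cons 0 (sumColors τ ε) : Fin (n + 1) → G) (prependZero τ m) =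
      Fin.partialSum (ε ∘ τ) m := by
  induction m using Fin.cases with
  | zero => rw [prependZero_zero, Fin.cons_zero, Fin.partialSum_zero]
  | succ i => rw [prependZero_succ, Fin.cons_succ, sumColors_apply]

theorem sumColors_eq_of_cyclicNext_iff {τ : Perm (Fin n)} (ε : Fin n → G) {x : Fin (n + 1)}
    {y : Fin n} (h : cyclicNext (prependZero τ) x = y.succ) :
    sumColors τ ε y = (Fin.cons 0 (sumColors τ ε) : Fin (n + 1) → G) x ↔ ε y = 0 := by
  obtain ⟨i, rfl, rfl⟩ := (cyclicNext_prependZero_eq_succ_iff τ x y).1 h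
  rw [sumColors_apply, cons_zero_sumColors_prependZero, Fin.partialSum_succ, add_eq_left,
    Function.comp_apply]

end PartialSums

section Successions

variable {ℓ n k : ℕ}

theorem mem_lSet_succ_iff {ε : Fin n → ZMod ℓ} {τ : Perm (Fin n)} {j : Fin n} :
    j ∈ lSet ℓ n (k + 1) (ε, τ) ↔ ∃ x : Fin n,
      cyclicNext (prependZero τ) x.succ = j.succ ∧ (j : ℕ) = x.succ + k ∧ ε j = ε x := by
  simp only [lSet, Set.mem_ofPred_eq, cyclicNext_prependZero_eq_succ_iff]
  constructor
  · rintro ⟨i, hi, hj, hval, hcol⟩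
    refine ⟨τ i, ⟨⟨i + 1, hi⟩, prependZero_succ τ i, hj⟩, ?_, hcol⟩
    rw [hval, Fin.val_succ, add_right_comm, add_assoc]
  · rintro ⟨x, ⟨⟨m, hm⟩, hx, hj⟩, hval, hcol⟩
    cases m with
    | zero => exact absurd ((prependZero_zero τ).symm.trans hx).symm (Fin.succ_ne_zero x)
    | succ m =>
      obtain rfl : τ ⟨m, by lia⟩ = x :=
        Fin.succ_injective _ ((prependZero_succ τ _).symm.trans hx)
      exact ⟨_, hm, hj, by rw [hval, Fin.val_succ, add_right_comm, add_assoc], hcol⟩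

theorem mem_lstarSet_succ_iff {ε : Fin n → ZMod ℓ} {τ : Perm (Fin n)} {j : Fin n} :
    j ∈ lstarSet ℓ n (k + 1) (ε, τ) ↔ ∃ x : Fin (n + 1),
      cyclicNext (prependZero τ) x = j.succ ∧ (j : ℕ) = x + k ∧
        ε j = (Fin.cons 0 ε : Fin (n + 1) → ZMod ℓ) x := by
  obtain ⟨n, rfl⟩ := Nat.exists_eq_add_one.2 j.pos
  rw [lstarSet, Set.mem_union, mem_lSet_succ_iff, or_comm]
  refine Iff.trans ?_ Fin.exists_fin_succ.symm
  simp only [Set.mem_ofPred_eq, cyclicNext_prependZero, Perm.decomposeFin_symm_apply_zero,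
    Fin.succ_inj, Fin.cons_zero, Fin.cons_succ, Fin.mk_zero', Fin.val_zero, zero_add,
    add_left_inj, n.succ_pos, exists_true_left]

theorem deltaMap_snd_succ (π : ColoredPerm ℓ n) (i : Fin n) (hi : (i : ℕ) + 1 < n) :
    (deltaMap ℓ n π).2 ⟨i + 1, hi⟩ = π.2 i := by
  obtain ⟨n, rfl⟩ := Nat.exists_eq_add_one.2 i.pos
  rw [deltaMap, trans_apply, (symm_apply_eq _).2 (finRotate_of_lt (Nat.lt_of_succ_lt_succ hi)).symm]

/-- The word underlying the image of `π`: the fundamental transformation of `δ π`. -/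
def successionWord (π : ColoredPerm ℓ n) : Perm (Fin n) := fundamentalEquiv n (deltaMap ℓ n π).2

theorem mem_cSet_deltaMap_iff {π : ColoredPerm ℓ n} {j : Fin n} :
    j ∈ cSet ℓ n k (deltaMap ℓ n π) ↔ π.1 j = 0 ∧ ∃ x : Fin (n + 1),
      cyclicNext (prependZero (successionWord π)) x = j.succ ∧ (j : ℕ) = x + k := by
  refine and_congr_right fun _ => ⟨?_, ?_⟩
  · rintro ⟨i, hi, hval⟩
    have hij : i ≤ j := Fin.le_def.2 (by lia)
    exact ⟨i.castSucc, (cyclicNext_fundamentalEquiv_eq_succ_iff _ hij).2 hi, hval⟩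
  · rintro ⟨x, hx, hval⟩
    have hij : (⟨x, by lia⟩ : Fin n) ≤ j := Fin.mk_le_of_le_val (by lia)
    exact ⟨⟨x, by lia⟩, (cyclicNext_fundamentalEquiv_eq_succ_iff _ hij).1 hx, hval⟩

theorem mem_cSet_succ_iff {π : ColoredPerm ℓ n} {j : Fin n} :
    j ∈ cSet ℓ n (k + 1) π ↔ π.1 j = 0 ∧ ∃ x : Fin n,
      cyclicNext (prependZero (successionWord π)) x.succ = j.succ ∧ (j : ℕ) = x.succ + k := by
  refine and_congr_right fun _ => exists_congr fun x => ?_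
  have hval : (j : ℕ) = x + (k + 1) ↔ (j : ℕ) = x.succ + k := by rw [Fin.val_succ]; lia
  rw [hval]
  refine and_congr_left fun hj => ?_
  rw [Fin.val_succ] at hj
  have hx : (x : ℕ) + 1 < n := by lia
  have hxj : (⟨x + 1, hx⟩ : Fin n) ≤ j := Fin.mk_le_of_le_val (by lia)
  rw [← deltaMap_snd_succ π x hx]
  exact (cyclicNext_fundamentalEquiv_eq_succ_iff _ hxj).symm

/-- The bijection `Φ`: the word of `π` is its `successionWord`, and the colors are summed along
that word. -/
def successionEquiv (ℓ n : ℕ) : ColoredPerm ℓ n ≃ ColoredPerm ℓ n :=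
  (prodComm _ _).trans <| (prodShear
    ((equivCongr (finRotate n) (Equiv.refl _)).trans (fundamentalEquiv n))
    fun σ => sumColors (fundamentalEquiv n ((finRotate n).symm.trans σ))).trans (prodComm _ _)

theorem successionEquiv_apply (π : ColoredPerm ℓ n) :
    successionEquiv ℓ n π = (sumColors (successionWord π) π.1, successionWord π) := rfl

theorem cSet_succ_eq_lSet (π : ColoredPerm ℓ n) :
    cSet ℓ n (k + 1) π = lSet ℓ n (k + 1) (successionEquiv ℓ n π) := by
  ext j
  rw [mem_cSet_succ_iff, successionEquiv_apply, mem_lSet_succ_iff, ← exists_and_left]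
  refine exists_congr fun x => ?_
  rw [and_comm, and_assoc]
  refine and_congr_right fun hx => and_congr_right fun _ => ?_
  exact (sumColors_eq_of_cyclicNext_iff π.1 hx).symm

theorem cSet_deltaMap_eq_lstarSet (π : ColoredPerm ℓ n) :
    cSet ℓ n k (deltaMap ℓ n π) = lstarSet ℓ n (k + 1) (successionEquiv ℓ n π) := by
  ext j
  rw [mem_cSet_deltaMap_iff, successionEquiv_apply, mem_lstarSet_succ_iff, ← exists_and_left]
  refine exists_congr fun x => ?_
  rw [and_comm, and_assoc]
  refine and_congr_right fun hx => and_congr_right fun _ => ?_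
  exact (sumColors_eq_of_cyclicNext_iff π.1 hx).symm

end Successions

theorem stmt_7_general (ℓ n : ℕ) :
    ∃ Φ : ColoredPerm ℓ n ≃ ColoredPerm ℓ n,
      ∀ (k : ℕ) (π : ColoredPerm ℓ n),
        cSet ℓ n (k + 1) π = lSet ℓ n (k + 1) (Φ π) ∧
        cSet ℓ n k (deltaMap ℓ n π) = lstarSet ℓ n (k + 1) (Φ π) :=
  ⟨successionEquiv ℓ n, fun _ π => ⟨cSet_succ_eq_lSet π, cSet_deltaMap_eq_lstarSet π⟩⟩

/-- for `ℓ ≥ 1`, `n ≥ 1`, `k ≥ 0`, there is a bijection `Φ` of `G_{ℓ,n}`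
onto itself with `C^{k+1}(π) = L^{k+1}(Φ π)` and `C^k(δ π) = L^{*(k+1)}(Φ π)` for all `π`. -/
theorem stmt_7 (ℓ n k : ℕ) (hℓ : 1 ≤ ℓ) (hn : 1 ≤ n) :
    ∃ Φ : ColoredPerm ℓ n ≃ ColoredPerm ℓ n,
      ∀ π : ColoredPerm ℓ n,
        cSet ℓ n (k + 1) π = lSet ℓ n (k + 1) (Φ π) ∧
        cSet ℓ n k (deltaMap ℓ n π) = lstarSet ℓ n (k + 1) (Φ π) := by
  obtain ⟨Φ, hΦ⟩ := stmt_7_general ℓ n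
  exact ⟨Φ, hΦ k⟩
end

section
/- Let ℓ ≥ 1, n ≥ 1, k ≥ 1 and m ≥ 0. Then the statistics c^k and l^k are equidistributed on G_{ℓ,n}: the number of colored permutations in G_{ℓ,n} with exactly m k-circular successions equals the number of colored permutations in G_{ℓ,n} with exactly m k-linear successions, i.e., c_{ℓ,n,m}^k = l_{ℓ,n,m}^k. -/
/-- The number `l^k(π)` of `k`-linear successions of `π = (ε, σ)` (for `k ≥ 1`):
positions `2 ≤ i ≤ n` with `σ i = σ (i−1) + k` and `ε (σ i) = ε (σ (i−1))`. -/
noncomputable def lsuccCount (ℓ n k : ℕ) (π : ColoredPerm ℓ n) : ℕ :=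
  Nat.card {i : Fin n // ∃ hi : (i : ℕ) + 1 < n,
    (π.2 ⟨(i : ℕ) + 1, hi⟩ : ℕ) = (π.2 i : ℕ) + k ∧
      π.1 (π.2 ⟨(i : ℕ) + 1, hi⟩) = π.1 (π.2 i)}

/-- `l_{ℓ,n,m}^k`: the number of `π ∈ G_{ℓ,n}` with exactly `m` `k`-linear successions. -/
noncomputable def lCount (ℓ n k m : ℕ) : ℕ :=
  Nat.card {π : ColoredPerm ℓ n // lsuccCount ℓ n k π = m}

/-!
Foata's fundamental transformation writes the cycles of `σ` one after another, each ending with its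
greatest letter and the greatest letters decreasing, and reads the result as a word. Neither the
step from the end of a cycle to the next cycle nor the step closing a cycle is an ascent, so for
`x < y` the letter `y` follows `x` in the word exactly when `σ x = y`; this includes all the pairs
`y = x + k` with `k ≥ 1`. For the colors, replacing those met along the word by their running sums
turns the condition that `y` has color `0` into the condition that `x` and `y` have the same color.
-/

open Equiv

namespace Foata

variable {n : ℕ}

section Word

/-- The letter-to-position permutation of the word obtained from the one with letter positions `ρ`
by raising every letter by one and inserting the letter `0` at position `q`. -/
def insertZeroAt (q : Fin (n + 1)) (ρ : Perm (Fin n)) : Perm (Fin (n + 1)) :=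
  (Perm.decomposeFin.symm (0, ρ)).trans q.cycleRange.symm

lemma insertZeroAt_zero (q : Fin (n + 1)) (ρ : Perm (Fin n)) : insertZeroAt q ρ 0 = q := by
  simp [insertZeroAt]

lemma insertZeroAt_succ (q : Fin (n + 1)) (ρ : Perm (Fin n)) (x : Fin n) :
    insertZeroAt q ρ x.succ = q.succAbove (ρ x) := by
  simp [insertZeroAt]

lemma insertZeroAt_injective2 :
    Function.Injective2 (insertZeroAt : Fin (n + 1) → Perm (Fin n) → Perm (Fin (n + 1))) := by
  intro q q' ρ ρ' h
  obtain rfl : q = q' := by rw [← insertZeroAt_zero q ρ, h, insertZeroAt_zero]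
  refine ⟨rfl, Equiv.ext fun x => q.succAbove_right_injective ?_⟩
  rw [← insertZeroAt_succ, h, insertZeroAt_succ]

/-- The position at which a new letter `0` is inserted so as to immediately precede the letter
`p` of the raised word with letter positions `ρ`; for `p = 0` this is the end of the word. -/
def slotBefore (ρ : Perm (Fin n)) : Fin (n + 1) → Fin (n + 1) :=
  Fin.cons (Fin.last n) fun p => (ρ p).castSucc

lemma slotBefore_injective (ρ : Perm (Fin n)) : Function.Injective (slotBefore ρ) := by
  refine Fin.cons_injective_iff.2 ⟨?_, (Fin.castSucc_injective n).comp ρ.injective⟩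
  rintro ⟨p, hp⟩
  exact Fin.castSucc_ne_last _ hp

lemma slotBefore_eq_castSucc_iff {ρ : Perm (Fin n)} {p : Fin (n + 1)} {y : Fin n} :
    slotBefore ρ p = (ρ y).castSucc ↔ p = y.succ :=
  (slotBefore_injective ρ).eq_iff (b := y.succ)

lemma covBy_succAbove_self_iff {q : Fin (n + 1)} {b : Fin n} :
    q ⋖ q.succAbove b ↔ q = b.castSucc := by
  simp only [Fin.covBy_iff, Nat.covBy_iff_add_one_eq, Fin.ext_iff, Fin.val_castSucc]
  rcases lt_or_ge b.castSucc q with h | h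
  · rw [Fin.succAbove_of_castSucc_lt _ _ h]
    grind
  · rw [Fin.succAbove_of_le_castSucc _ _ h]
    grind

lemma succAbove_covBy_succAbove_iff {q : Fin (n + 1)} {a b : Fin n} :
    q.succAbove a ⋖ q.succAbove b ↔ a ⋖ b ∧ q ≠ b.castSucc := by
  simp only [Fin.covBy_iff, Nat.covBy_iff_add_one_eq, Fin.succAbove, Fin.lt_def, Fin.ext_iff,
    Fin.val_castSucc, ne_eq]
  grind

/-- Foata's fundamental transformation, sending `σ` to the letter-to-position permutation of its
word. Deleting `0` from its cycle in `σ` leaves a permutation of the other letters; in its word, `0`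
is inserted immediately before `σ 0`, or at the end if `0` is fixed. -/
def position : {n : ℕ} → Perm (Fin n) → Perm (Fin n)
  | 0, σ => σ
  | _ + 1, σ =>
    let ρ := position (Perm.decomposeFin σ).2
    insertZeroAt (slotBefore ρ (Perm.decomposeFin σ).1) ρ

lemma position_decomposeFin_symm (p : Fin (n + 1)) (τ : Perm (Fin n)) :
    position (Perm.decomposeFin.symm (p, τ)) =
      insertZeroAt (slotBefore (position τ) p) (position τ) := by
  simp only [position, Equiv.apply_symm_apply]

lemma position_injective : ∀ n, Function.Injective (position : Perm (Fin n) → Perm (Fin n))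
  | 0 => fun _ _ h => h
  | n + 1 => by
    rw [← Perm.decomposeFin.symm.injective_comp]
    rintro ⟨p, τ⟩ ⟨p', τ'⟩ h
    simp only [Function.comp_apply, position_decomposeFin_symm] at h
    obtain ⟨hslot, hpos⟩ := insertZeroAt_injective2 h
    obtain rfl := position_injective n hpos
    rw [slotBefore_injective _ hslot]

lemma decomposeFin_symm_succ_eq_succ_iff {p : Fin (n + 1)} {τ : Perm (Fin n)} {x y : Fin n} :
    Perm.decomposeFin.symm (p, τ) x.succ = y.succ ↔ τ x = y ∧ p ≠ y.succ := by
  rw [Perm.decomposeFin_symm_apply_succ, ← Equiv.eq_symm_apply, symm_swap]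
  rcases eq_or_ne p y.succ with rfl | hp
  · simp
  · rw [swap_apply_of_ne_of_ne (Fin.succ_ne_zero y) hp.symm]
    simp [hp]

lemma position_covBy_position_iff (σ : Perm (Fin n)) {x y : Fin n} (hxy : x < y) :
    position σ x ⋖ position σ y ↔ σ x = y := by
  induction n with
  | zero => exact x.elim0
  | succ n ih =>
    obtain ⟨⟨p, τ⟩, rfl⟩ := Perm.decomposeFin.symm.surjective σ
    obtain ⟨y, rfl⟩ := Fin.exists_succ_eq.2 (Fin.ne_zero_of_lt hxy)
    rw [position_decomposeFin_symm, insertZeroAt_succ]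
    cases x using Fin.cases with
    | zero =>
      rw [insertZeroAt_zero, covBy_succAbove_self_iff, slotBefore_eq_castSucc_iff,
        Perm.decomposeFin_symm_apply_zero]
    | succ x =>
      rw [insertZeroAt_succ, succAbove_covBy_succAbove_iff, ih τ (Fin.succ_lt_succ_iff.1 hxy),
        ne_eq, slotBefore_eq_castSucc_iff, decomposeFin_symm_succ_eq_succ_iff]

/-- Foata's fundamental transformation, sending `σ` to its word, read as the permutation taking
each position to the letter there. -/
noncomputable def word : Perm (Fin n) ≃ Perm (Fin n) :=
  (Equiv.ofBijective position (Finite.injective_iff_bijective.1 (position_injective n))).trans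
    (Equiv.inv _)

lemma word_symm_apply (σ : Perm (Fin n)) : (word σ).symm = position σ :=
  rfl

lemma covBy_iff_apply_word_eq (σ : Perm (Fin n)) {i j : Fin n} (hij : word σ i < word σ j) :
    i ⋖ j ↔ σ (word σ i) = word σ j := by
  rw [← position_covBy_position_iff σ hij, ← word_symm_apply, symm_apply_apply, symm_apply_apply]

end Word

section Color

variable {A : Type*} [AddGroup A]

/-- Replacing a tuple by its partial sums `d 0`, `d 0 + d 1`, …, as a bijection. -/
def runningSum : (Fin n → A) ≃ (Fin n → A) where
  toFun d i := Fin.partialSum d i.succ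
  invFun c i := -(Fin.cons 0 c : Fin (n + 1) → A) i.castSucc + c i
  left_inv d := by
    have hcons : (Fin.cons 0 fun i => Fin.partialSum d i.succ : Fin (n + 1) → A) =
        Fin.partialSum d := by
      rw [← Fin.cons_self_tail (Fin.partialSum d), Fin.partialSum_zero]
      rfl
    funext i
    simp only [hcons, Fin.partialSum_right_neg]
  right_inv c := by
    funext i
    simpa using congrFun (Fin.partialSum_left_neg (Fin.cons 0 c : Fin (n + 1) → A)) i.succ

lemma runningSum_eq_of_covBy (d : Fin n → A) {i j : Fin n} (h : i ⋖ j) :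
    runningSum d j = runningSum d i + d j := by
  have hsucc : i.succ = j.castSucc := Fin.ext (Nat.covBy_iff_add_one_eq.1 (Fin.covBy_iff.1 h))
  rw [runningSum, coe_fn_mk, Fin.partialSum_succ, hsucc]

/-- Replacing the colors of the letters by their running sums along the word `τ`. -/
def recolor (τ : Perm (Fin n)) : (Fin n → A) ≃ (Fin n → A) :=
  (τ.symm.arrowCongr (Equiv.refl A)).trans (runningSum.trans (τ.arrowCongr (Equiv.refl A)))

lemma recolor_apply (τ : Perm (Fin n)) (ε : Fin n → A) (i : Fin n) :
    recolor τ ε (τ i) = runningSum (ε ∘ τ) i :=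
  congrArg (runningSum (ε ∘ τ)) (τ.symm_apply_apply i)

lemma recolor_apply_eq_iff_of_covBy (τ : Perm (Fin n)) (ε : Fin n → A) {i j : Fin n} (h : i ⋖ j) :
    recolor τ ε (τ j) = recolor τ ε (τ i) ↔ ε (τ j) = 0 := by
  rw [recolor_apply, recolor_apply, runningSum_eq_of_covBy _ h, add_eq_left, Function.comp_apply]

end Color

section Succession

variable {A : Type*}

/-- `σ i` is a `k`-circular succession of `π = (ε, σ)` at position `i`, with colors in `A`. -/
def IsCircularSuccession [Zero A] (k : ℕ) (π : (Fin n → A) × Perm (Fin n)) (i : Fin n) : Prop :=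
  (π.2 i : ℕ) = i + k ∧ π.1 (π.2 i) = 0

/-- `σ (i + 1)` is a `k`-linear succession of `π = (ε, σ)` at position `i + 1`, with colors in
`A`. -/
def IsLinearSuccession (k : ℕ) (π : (Fin n → A) × Perm (Fin n)) (i : Fin n) : Prop :=
  ∃ hi : (i : ℕ) + 1 < n, (π.2 ⟨i + 1, hi⟩ : ℕ) = π.2 i + k ∧
    π.1 (π.2 ⟨i + 1, hi⟩) = π.1 (π.2 i)

lemma isLinearSuccession_iff_exists_covBy {k : ℕ} {π : (Fin n → A) × Perm (Fin n)} {i : Fin n} :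
    IsLinearSuccession k π i ↔
      ∃ j, i ⋖ j ∧ (π.2 j : ℕ) = π.2 i + k ∧ π.1 (π.2 j) = π.1 (π.2 i) := by
  simp only [IsLinearSuccession, Fin.exists_iff, Fin.covBy_iff, Nat.covBy_iff_add_one_eq]
  grind

variable [AddGroup A]

/-- Foata's fundamental transformation on colored permutations. -/
noncomputable def coloredWord : (Fin n → A) × Perm (Fin n) ≃ (Fin n → A) × Perm (Fin n) :=
  (prodComm _ _).trans ((prodShear word fun σ => recolor (word σ)).trans (prodComm _ _))

lemma coloredWord_apply (ε : Fin n → A) (σ : Perm (Fin n)) :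
    coloredWord (ε, σ) = (recolor (word σ) ε, word σ) :=
  rfl

lemma isLinearSuccession_coloredWord_iff {k : ℕ} (hk : 1 ≤ k) (π : (Fin n → A) × Perm (Fin n))
    (i : Fin n) :
    IsLinearSuccession k (coloredWord π) i ↔
      IsCircularSuccession k π ((coloredWord π).2 i) := by
  obtain ⟨ε, σ⟩ := π
  simp only [isLinearSuccession_iff_exists_covBy, IsCircularSuccession, coloredWord_apply]
  constructor
  · rintro ⟨j, hij, hval, hcolor⟩
    have hlt : word σ i < word σ j := Fin.lt_def.2 (by lia)
    have hσ : σ (word σ i) = word σ j := (covBy_iff_apply_word_eq σ hlt).1 hij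
    rw [hσ]
    exact ⟨hval, (recolor_apply_eq_iff_of_covBy _ _ hij).1 hcolor⟩
  · obtain ⟨j, hj⟩ := (word σ).surjective (σ (word σ i))
    rw [← hj]
    rintro ⟨hval, hcolor⟩
    have hlt : word σ i < word σ j := Fin.lt_def.2 (by lia)
    have hij : i ⋖ j := (covBy_iff_apply_word_eq σ hlt).2 hj.symm
    exact ⟨j, hij, hval, (recolor_apply_eq_iff_of_covBy _ _ hij).2 hcolor⟩

end Succession

end Foata

open Foata in
theorem stmt_8_general (A : Type*) [AddGroup A] (n : ℕ) :
    ∃ Φ : (Fin n → A) × Perm (Fin n) ≃ (Fin n → A) × Perm (Fin n), ∀ k, 1 ≤ k → ∀ π,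
      Nat.card {i // IsCircularSuccession k π i} =
        Nat.card {i // IsLinearSuccession k (Φ π) i} :=
  ⟨coloredWord, fun _ hk π => (Nat.card_congr
    ((coloredWord π).2.subtypeEquiv (isLinearSuccession_coloredWord_iff hk π))).symm⟩

/-- for `ℓ ≥ 1`, `n ≥ 1`, `k ≥ 1`, `m ≥ 0`, the statistics `c^k` and `l^k`
are equidistributed on `G_{ℓ,n}`: `c_{ℓ,n,m}^k = l_{ℓ,n,m}^k`. -/
theorem stmt_8 (ℓ n k m : ℕ) (hℓ : 1 ≤ ℓ) (hn : 1 ≤ n) (hk : 1 ≤ k) :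
    cCount ℓ n k m = lCount ℓ n k m := by
  obtain ⟨Φ, hΦ⟩ := stmt_8_general (ZMod ℓ) n
  exact Nat.card_congr (Φ.subtypeEquiv fun π => Eq.congr_left (hΦ k hk π))
end

section
/- Let ℓ ≥ 1 and 0 ≤ m ≤ n. Then g_{ℓ,n}^m = ℓ^m · m! · d_{ℓ,n}^m; in particular, ℓ^m · m! divides g_{ℓ,n}^m. -/
/-! Each recurrence determines its triangular table from the diagonal. Multiplying column `m` of `d`
by `ℓ ^ m * m!` absorbs the weights `ℓ (m + 1)` and turns the diagonal `1` into `ℓ ^ n * n!`, so the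
rescaled table obeys the recurrence of `g` with the same diagonal. -/

section

variable {R : Type*} [Ring R]

/-- The triangular array `f n m` (`m ≤ n`) satisfies Euler's difference recurrence with column
weights `w`, the row index being shifted by one to avoid subtraction; values with `n < m` are
irrelevant. Euler's table `g` has weights `1`, the allied array `d` has weights `ℓ (m + 1)`. -/
def IsWeightedDifferenceTable (w : ℕ → R) (f : ℕ → ℕ → R) : Prop :=
  ∀ ⦃n m : ℕ⦄, m ≤ n → f (n + 1) m = w m * f (n + 1) (m + 1) - f n m

namespace IsWeightedDifferenceTable

variable {w v c : ℕ → R} {f g : ℕ → ℕ → R}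

theorem eq_of_diag_eq (hf : IsWeightedDifferenceTable w f) (hg : IsWeightedDifferenceTable w g)
    (hdiag : ∀ n, f n n = g n n) {m n : ℕ} (hmn : m ≤ n) : f n m = g n m := by
  induction n generalizing m with
  | zero =>
    obtain rfl := Nat.le_zero.mp hmn
    exact hdiag 0
  | succ n ih_row =>
    induction hmn using Nat.decreasingInduction with
    | self => exact hdiag (n + 1)
    | of_succ k hk ih_col =>
      have hkn : k ≤ n := Nat.lt_succ_iff.mp hk
      rw [hf hkn, hg hkn, ih_col, ih_row hkn]

theorem mul_column (hf : IsWeightedDifferenceTable v f) (hc : ∀ m, c m * v m = w m * c (m + 1)) :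
    IsWeightedDifferenceTable w fun n m ↦ c m * f n m := by
  intro n m hmn
  calc
    c m * f (n + 1) m = c m * v m * f (n + 1) (m + 1) - c m * f n m := by
      rw [hf hmn, mul_sub, mul_assoc]
    _ = w m * (c (m + 1) * f (n + 1) (m + 1)) - c m * f n m := by
      rw [hc, mul_assoc]

end IsWeightedDifferenceTable

theorem pow_mul_factorial_mul_succ (a : R) (m : ℕ) :
    a ^ m * (m.factorial : R) * (a * ((m : R) + 1)) =
      a ^ (m + 1) * ((m + 1).factorial : R) := by
  calc
    a ^ m * (m.factorial : R) * (a * ((m : R) + 1)) =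
        a ^ m * ((m.factorial : R) * a) * ((m : R) + 1) := by simp only [mul_assoc]
    _ = a ^ (m + 1) * ((m.factorial : R) * ((m : R) + 1)) := by
      rw [Nat.cast_comm, pow_succ]
      simp only [mul_assoc]
    _ = a ^ (m + 1) * ((m + 1).factorial : R) := by
      rw [Nat.factorial_succ, mul_comm (m + 1), Nat.cast_mul, Nat.cast_succ]

theorem stmt_10_general (ℓ : R) (g d : ℕ → ℕ → R)
    (hg_diag : ∀ n : ℕ, g n n = ℓ ^ n * (n.factorial : R))
    (hg_rec : ∀ n m : ℕ, m < n → g n m = g n (m + 1) - g (n - 1) m)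
    (hd_diag : ∀ n : ℕ, d n n = 1)
    (hd_rec : ∀ n m : ℕ, m < n → d n m = ℓ * ((m : R) + 1) * d n (m + 1) - d (n - 1) m)
    (m n : ℕ) (hmn : m ≤ n) :
    g n m = ℓ ^ m * (m.factorial : R) * d n m ∧ ℓ ^ m * (m.factorial : R) ∣ g n m := by
  have hg : IsWeightedDifferenceTable (fun _ ↦ 1) g := fun n m hmn ↦ by
    simpa only [one_mul, Nat.add_sub_cancel] using hg_rec (n + 1) m (Nat.lt_succ_of_le hmn)
  have hd : IsWeightedDifferenceTable (fun m ↦ ℓ * ((m : R) + 1)) d := fun n m hmn ↦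
    hd_rec (n + 1) m (Nat.lt_succ_of_le hmn)
  have hd_scaled : IsWeightedDifferenceTable (fun _ ↦ 1)
      fun n m ↦ ℓ ^ m * (m.factorial : R) * d n m :=
    hd.mul_column fun m ↦ by rw [one_mul, pow_mul_factorial_mul_succ]
  have hdiag (n : ℕ) : g n n = ℓ ^ n * (n.factorial : R) * d n n := by
    rw [hg_diag, hd_diag, mul_one]
  have heq : g n m = ℓ ^ m * (m.factorial : R) * d n m := hg.eq_of_diag_eq hd_scaled hdiag hmn
  exact ⟨heq, Dvd.intro _ heq.symm⟩

end

/-- for `ℓ ≥ 1` and `0 ≤ m ≤ n`, `g_{ℓ,n}^m = ℓ^m · m! · d_{ℓ,n}^m`;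
in particular `ℓ^m · m!` divides `g_{ℓ,n}^m`.  Here `g` is Euler's difference table
(`g n n = ℓ^n n!`, `g n m = g n (m+1) − g (n−1) m`) and `d` is the allied array
(`d n n = 1`, `d n m = ℓ(m+1) d n (m+1) − d (n−1) m`). -/
theorem stmt_10 (ℓ : ℕ) (hℓ : 1 ≤ ℓ) (g d : ℕ → ℕ → ℤ)
    (hg_diag : ∀ n : ℕ, g n n = (ℓ : ℤ) ^ n * (Nat.factorial n : ℤ))
    (hg_rec : ∀ n m : ℕ, m < n → g n m = g n (m + 1) - g (n - 1) m)
    (hd_diag : ∀ n : ℕ, d n n = 1)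
    (hd_rec : ∀ n m : ℕ, m < n →
      d n m = (ℓ : ℤ) * ((m : ℤ) + 1) * d n (m + 1) - d (n - 1) m)
    (m n : ℕ) (hmn : m ≤ n) :
    g n m = (ℓ : ℤ) ^ m * (Nat.factorial m : ℤ) * d n m ∧
      ((ℓ : ℤ) ^ m * (Nat.factorial m : ℤ)) ∣ g n m :=
  stmt_10_general (ℓ : ℤ) g d hg_diag hg_rec hd_diag hd_rec m n hmn
end

section
/- Let ℓ ≥ 1 and 0 ≤ m ≤ n. Then d_{ℓ,n}^m equals the number of m-increasing-fixed colored permutations in G_{ℓ,n}, i.e., the cardinality of I_{ℓ,n}^m. -/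
/-- `π = (ε, σ)` is `m`-increasing-fixed if (i) the values `π(1),…,π(m)` are uncolored,
(ii) all fixed points of `π` lie in `[m]`, and (iii) `σ(1) < σ(2) < ⋯ < σ(m)`. -/
def IncreasingFixed (ℓ n m : ℕ) (π : ColoredPerm ℓ n) : Prop :=
  (∀ i : Fin n, (i : ℕ) < m → π.1 (π.2 i) = 0) ∧
  (∀ i : Fin n, (π.2 i = i ∧ π.1 i = 0) → (i : ℕ) < m) ∧
  (∀ i j : Fin n, (i : ℕ) < (j : ℕ) → (j : ℕ) < m → (π.2 i : ℕ) < (π.2 j : ℕ))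

/-!
Drop the monotonicity condition, and let `A n m` be the number of colored permutations that are
uncolored at the first `m` positions and have all their fixed points there. The permutations of the
first `m` positions act freely on these by precomposition, and each orbit has exactly one member
that is increasing on those positions, so `A n m` is `m!` times the number of
`m`-increasing-fixed permutations.

In a permutation counted by `A (n + 1) (m + 1)`, position `m + 1` is uncolored and may be fixed.
Giving it an arbitrary color multiplies the count by `ℓ`. Among the resulting permutations, those
without an uncolored fixed point at `m + 1` are counted by `A (n + 1) m`, and deleting that fixed
point from the others leaves `A n m`. Hence `ℓ * A (n + 1) (m + 1) = A (n + 1) m + A n m`, which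
after division by `m!` is the recurrence of the allied array.
-/

open Equiv Equiv.Perm Function
open scoped Nat

section AlliedArray

variable {R : Type*} [Ring R]

/-- The triangular array `d n m = d_{ℓ,n}^m` of the paper, with entries in a ring. Only the entries
with `m ≤ n` are constrained. -/
structure IsAlliedArray (ℓ : R) (d : ℕ → ℕ → R) : Prop where
  diag : ∀ n, d n n = 1
  rec_of_lt : ∀ n m, m < n → d n m = ℓ * (m + 1) * d n (m + 1) - d (n - 1) m

theorem IsAlliedArray.eq_of_le {ℓ : R} {d d' : ℕ → ℕ → R} (hd : IsAlliedArray ℓ d)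
    (hd' : IsAlliedArray ℓ d') {m n : ℕ} (hmn : m ≤ n) : d n m = d' n m := by
  induction n generalizing m with
  | zero => rw [Nat.le_zero.mp hmn, hd.diag, hd'.diag]
  | succ n ih =>
    induction hmn using Nat.decreasingInduction with
    | self => rw [hd.diag, hd'.diag]
    | of_succ k hk ih_succ =>
      rw [hd.rec_of_lt _ _ hk, hd'.rec_of_lt _ _ hk, ih_succ, Nat.add_sub_cancel,
        ih (Nat.lt_succ_iff.mp hk)]

end AlliedArray

section Sorting

variable {α : Type*} [LinearOrder α]

theorem exists_perm_strictMonoOn_mul_ofSubtype (S : Set α) [Finite S] [DecidablePred (· ∈ S)]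
    (σ : Perm α) : ∃ t : Perm S, StrictMonoOn (σ * ofSubtype t) S := by
  have := Fintype.ofFinite S
  have := Fintype.ofFinite (σ '' S)
  let e : S ≃o σ '' S :=
    (Fintype.orderIsoFinOfCardEq S rfl).symm.trans
      (Fintype.orderIsoFinOfCardEq (σ '' S) (Fintype.card_congr (σ.image S).symm))
  refine ⟨e.toEquiv.trans (σ.image S).symm, fun i hi j hj hij => ?_⟩
  have apply_eq (s : S) : (σ * ofSubtype (e.toEquiv.trans (σ.image S).symm)) s = e s := by
    rw [Perm.mul_apply, ofSubtype_apply_coe]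
    exact congrArg Subtype.val ((σ.image S).apply_symm_apply (e s))
  rw [apply_eq ⟨i, hi⟩, apply_eq ⟨j, hj⟩]
  exact e.strictMono (a := ⟨i, hi⟩) (b := ⟨j, hj⟩) hij

theorem bijective_strictMonoOn_mul_ofSubtype (S : Set α) [Finite S] [DecidablePred (· ∈ S)] :
    Bijective fun p : {σ : Perm α // StrictMonoOn σ S} × Perm S => p.1.1 * ofSubtype p.2 := by
  constructor
  · rintro ⟨⟨σ, hσ⟩, t⟩ ⟨⟨τ, hτ⟩, u⟩ (heq : σ * ofSubtype t = τ * ofSubtype u)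
    have hσ_mono : StrictMono (S.domRestrict σ) := hσ.domRestrict
    have hτ_mono : StrictMono (S.domRestrict τ) := hτ.domRestrict
    have apply_eq (s : S) : σ (t s) = τ (u s) := by
      simpa using congrArg (fun ρ : Perm α => ρ s) heq
    have comp_eq : S.domRestrict σ ∘ t = S.domRestrict τ ∘ u := funext apply_eq
    have domRestrict_eq : S.domRestrict σ = S.domRestrict τ := by
      rw [← hσ_mono.range_inj hτ_mono, ← t.surjective.range_comp, comp_eq,
        u.surjective.range_comp]
    obtain rfl : t = u :=
      DFunLike.coe_injective (hσ_mono.injective.comp_left (domRestrict_eq ▸ comp_eq))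
    obtain rfl : σ = τ := mul_right_cancel heq
    rfl
  · intro σ
    obtain ⟨t, ht⟩ := exists_perm_strictMonoOn_mul_ofSubtype S σ
    refine ⟨(⟨σ * ofSubtype t, ht⟩, t⁻¹), ?_⟩
    simp only [map_inv, mul_inv_cancel_right]

end Sorting

section UncoloredFixed

variable {Z α β : Type*} [Zero Z]

variable (Z) in
/-- The colored permutations of `α` with colors in `Z`, where `0` stands for no color, whose values
at the positions in `U` are uncolored and whose fixed points all lie in `V`. As in `ColoredPerm`,
colors are attached to values, so the color at position `i` is `π.1 (π.2 i)`. -/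
def uncoloredFixed (U V : Set α) : Set ((α → Z) × Perm α) :=
  {π | (∀ i ∈ U, π.1 (π.2 i) = 0) ∧ ∀ i, π.2 i = i → π.1 i = 0 → i ∈ V}

variable {U V S : Set α} {a : α}

theorem ncard_uncoloredFixed_preimage (e : α ≃ β) (U V : Set β) :
    (uncoloredFixed Z (e ⁻¹' U) (e ⁻¹' V)).ncard = (uncoloredFixed Z U V).ncard := by
  refine Nat.card_congr (Equiv.subtypeEquiv ((e.arrowCongr (.refl Z)).prodCongr e.permCongr) ?_)
  rintro ⟨κ, σ⟩
  refine and_congr ?_ ?_ <;> rw [← e.forall_congr_right] <;> simp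

theorem update_mem_uncoloredFixed [DecidableEq α] (haU : a ∉ U) (haV : a ∈ V) (c : Z)
    {π : (α → Z) × Perm α} (hπ : π ∈ uncoloredFixed Z U V) :
    (update π.1 (π.2 a) c, π.2) ∈ uncoloredFixed Z U V := by
  refine ⟨fun i hi => ?_, fun i hfix hcolor => ?_⟩
  · have hia : π.2 i ≠ π.2 a := π.2.injective.ne (ne_of_mem_of_not_mem hi haU)
    simpa only [update_of_ne hia] using hπ.1 i hi
  · by_cases hia : i = a
    · exact hia ▸ haV
    · have hne : i ≠ π.2 a := fun h => hia (π.2.injective (hfix.trans h))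
      exact hπ.2 i hfix (by simpa only [update_of_ne hne] using hcolor)

theorem mem_uncoloredFixed_insert_left {π : (α → Z) × Perm α} :
    π ∈ uncoloredFixed Z (insert a U) V ↔ π.1 (π.2 a) = 0 ∧ π ∈ uncoloredFixed Z U V := by
  simp only [uncoloredFixed, Set.mem_ofPred_eq, Set.forall_mem_insert, and_assoc]

theorem ncard_uncoloredFixed_eq_card_mul (haU : a ∉ U) (haV : a ∈ V) :
    (uncoloredFixed Z U V).ncard = Nat.card Z * (uncoloredFixed Z (insert a U) V).ncard := by
  classical
  let recolor : uncoloredFixed Z U V ≃ Z × uncoloredFixed Z (insert a U) V :=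
    { toFun := fun π => (π.1.1 (π.1.2 a), ⟨(update π.1.1 (π.1.2 a) 0, π.1.2),
        mem_uncoloredFixed_insert_left.mpr
          ⟨update_self (π.1.2 a) 0 π.1.1, update_mem_uncoloredFixed haU haV 0 π.2⟩⟩)
      invFun := fun p => ⟨(update p.2.1.1 (p.2.1.2 a) p.1, p.2.1.2),
        update_mem_uncoloredFixed haU haV p.1 (mem_uncoloredFixed_insert_left.mp p.2.2).2⟩
      left_inv := fun π => by simp
      right_inv := fun ⟨c, π, hπ⟩ => by
        have hcolor := (mem_uncoloredFixed_insert_left.mp hπ).1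
        simp [← hcolor] }
  exact (Nat.card_congr recolor).trans (Nat.card_prod ..)

/-- The colored permutation of `α` that extends a given one of `{x // x ≠ a}` by an uncolored fixed
point at `a`. -/
noncomputable def extendFixing [DecidableEq α] (a : α)
    (π : ({x // x ≠ a} → Z) × Perm {x // x ≠ a}) : (α → Z) × Perm α :=
  (extend Subtype.val π.1 0, ofSubtype π.2)

theorem extendFixing_injective [DecidableEq α] (a : α) :
    Injective (extendFixing (Z := Z) a) := by
  rintro ⟨κ, σ⟩ ⟨κ', σ'⟩ h
  obtain ⟨hκ, hσ⟩ := Prod.mk.inj h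
  exact Prod.ext (extend_injective Subtype.val_injective _ hκ) (ofSubtype_injective hσ)

theorem mem_range_extendFixing [DecidableEq α] {π : (α → Z) × Perm α} :
    π ∈ Set.range (extendFixing a) ↔ π.2 a = a ∧ π.1 a = 0 := by
  constructor
  · rintro ⟨⟨κ, σ⟩, rfl⟩
    exact ⟨ofSubtype_apply_of_not_mem σ (by simp), extend_apply' _ _ _ (by simp)⟩
  · obtain ⟨κ, σ⟩ := π
    rintro ⟨hfix : σ a = a, hcolor : κ a = 0⟩
    have hne (x : α) : σ x ≠ a ↔ x ≠ a := by rw [← σ.injective.ne_iff (x := x), hfix]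
    have hsupp (x : α) (hx : σ x ≠ x) : x ≠ a := fun h => hx (h ▸ hfix)
    refine ⟨(κ ∘ Subtype.val, σ.subtypePerm hne), Prod.ext (funext fun x => ?_)
      (ofSubtype_subtypePerm hne hsupp)⟩
    by_cases hx : x = a
    · rw [hx]
      exact (extend_apply' _ _ _ (by simp)).trans hcolor.symm
    · exact Subtype.val_injective.extend_apply (κ ∘ Subtype.val) 0 ⟨x, hx⟩

theorem extendFixing_mem_uncoloredFixed_insert [DecidableEq α]
    {π : ({x // x ≠ a} → Z) × Perm {x // x ≠ a}} :
    extendFixing a π ∈ uncoloredFixed Z U (insert a V) ↔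
      π ∈ uncoloredFixed Z (Subtype.val ⁻¹' U) (Subtype.val ⁻¹' V) := by
  have hcolor_coe (x : {x // x ≠ a}) : (extendFixing a π).1 x = π.1 x :=
    Subtype.val_injective.extend_apply ..
  have hperm_coe (x : {x // x ≠ a}) : (extendFixing a π).2 x = π.2 x := ofSubtype_apply_coe ..
  obtain ⟨hfix, hcolor⟩ := mem_range_extendFixing.mp ⟨π, rfl⟩
  constructor
  · intro h
    refine ⟨fun i hi => ?_, fun i hi hi₀ => ?_⟩
    · simpa only [hperm_coe, hcolor_coe] using h.1 i hi
    · exact (h.2 i (by rw [hperm_coe, hi]) (by rw [hcolor_coe, hi₀])).resolve_left i.2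
  · intro h
    refine ⟨fun i hi => ?_, fun i hi hi₀ => ?_⟩
    · by_cases hia : i = a
      · rw [hia, hfix, hcolor]
      · simpa only [hperm_coe ⟨i, hia⟩, hcolor_coe] using h.1 ⟨i, hia⟩ hi
    · refine or_iff_not_imp_left.mpr fun hia => h.2 ⟨i, hia⟩ (Subtype.ext ?_) ?_
      · rw [← hperm_coe, hi]
      · rw [← hcolor_coe, hi₀]

theorem uncoloredFixed_insert_right_sdiff [DecidableEq α] (haV : a ∉ V) :
    uncoloredFixed Z U (insert a V) \ uncoloredFixed Z U V =
      extendFixing a '' uncoloredFixed Z (Subtype.val ⁻¹' U) (Subtype.val ⁻¹' V) := by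
  have preimage_eq : extendFixing a ⁻¹' uncoloredFixed Z U (insert a V) =
      uncoloredFixed Z (Subtype.val ⁻¹' U) (Subtype.val ⁻¹' V) :=
    Set.ext fun _ => extendFixing_mem_uncoloredFixed_insert
  rw [← preimage_eq, Set.image_preimage_eq_inter_range]
  ext π
  refine and_congr_right fun hπ => ?_
  rw [mem_range_extendFixing]
  refine ⟨fun hnot => ?_, fun h hπ' => haV (hπ'.2 a h.1 h.2)⟩
  by_contra hna
  refine hnot ⟨hπ.1, fun i hi hi₀ => (hπ.2 i hi hi₀).resolve_left ?_⟩
  rintro rfl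
  exact hna ⟨hi, hi₀⟩

theorem ncard_uncoloredFixed_insert_right [Finite Z] [Finite α] (haV : a ∉ V) :
    (uncoloredFixed Z U (insert a V)).ncard = (uncoloredFixed Z U V).ncard +
      (uncoloredFixed Z (Subtype.val ⁻¹' U : Set {x // x ≠ a}) (Subtype.val ⁻¹' V)).ncard := by
  classical
  have hsub : uncoloredFixed Z U V ⊆ uncoloredFixed Z U (insert a V) :=
    fun _ hπ => ⟨hπ.1, fun i hi hi₀ => .inr (hπ.2 i hi hi₀)⟩
  rw [← Set.ncard_sdiff_add_ncard_of_subset hsub, uncoloredFixed_insert_right_sdiff haV,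
    Set.ncard_image_of_injective _ (extendFixing_injective a), add_comm]

theorem card_mul_ncard_uncoloredFixed_insert [Finite Z] [Finite α] (haS : a ∉ S) :
    Nat.card Z * (uncoloredFixed Z (insert a S) (insert a S)).ncard =
      (uncoloredFixed Z S S).ncard +
      (uncoloredFixed Z (Subtype.val ⁻¹' S : Set {x // x ≠ a}) (Subtype.val ⁻¹' S)).ncard := by
  rw [← ncard_uncoloredFixed_eq_card_mul haS (Set.mem_insert a S),
    ncard_uncoloredFixed_insert_right haS]

theorem mul_ofSubtype_mem_uncoloredFixed [DecidablePred (· ∈ S)] {κ : α → Z} {σ : Perm α}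
    (t : Perm S) (h : (κ, σ) ∈ uncoloredFixed Z S S) :
    (κ, σ * ofSubtype t) ∈ uncoloredFixed Z S S := by
  refine ⟨fun i hi => ?_, fun i hi hi₀ => ?_⟩
  · exact h.1 _ ((ofSubtype_apply_mem_iff_mem t i).mpr hi)
  · by_contra hiS
    rw [Perm.mul_apply, ofSubtype_apply_of_not_mem t hiS] at hi
    exact hiS (h.2 i hi hi₀)

theorem mul_ofSubtype_mem_uncoloredFixed_iff [DecidablePred (· ∈ S)] {κ : α → Z} {σ : Perm α}
    {t : Perm S} :
    (κ, σ * ofSubtype t) ∈ uncoloredFixed Z S S ↔ (κ, σ) ∈ uncoloredFixed Z S S := by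
  refine ⟨fun h => ?_, mul_ofSubtype_mem_uncoloredFixed t⟩
  simpa only [map_inv, mul_inv_cancel_right] using mul_ofSubtype_mem_uncoloredFixed t⁻¹ h

theorem ncard_uncoloredFixed_eq_factorial_mul [LinearOrder α] (S : Set α) [Finite S] :
    (uncoloredFixed Z S S).ncard =
      (Nat.card S)! * {π ∈ uncoloredFixed Z S S | StrictMonoOn π.2 S}.ncard := by
  classical
  rw [← Nat.card_perm, mul_comm]
  refine Eq.trans (Nat.card_congr (Equiv.ofBijective (fun p =>
    ⟨(p.1.1.1, p.1.1.2 * ofSubtype p.2), mul_ofSubtype_mem_uncoloredFixed p.2 p.1.2.1⟩)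
      ⟨?_, ?_⟩)).symm (Nat.card_prod {π ∈ uncoloredFixed Z S S | StrictMonoOn π.2 S} (Perm S))
  · rintro ⟨⟨⟨κ, σ⟩, hπ, hσ⟩, t⟩ ⟨⟨⟨κ', τ⟩, hπ', hτ⟩, u⟩ h
    obtain ⟨rfl, heq⟩ := Prod.mk.inj (congrArg Subtype.val h)
    have pair_eq := (bijective_strictMonoOn_mul_ofSubtype S).injective
      (a₁ := (⟨σ, hσ⟩, t)) (a₂ := (⟨τ, hτ⟩, u)) heq
    simp only [Prod.mk.injEq, Subtype.mk.injEq] at pair_eq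
    obtain ⟨rfl, rfl⟩ := pair_eq
    rfl
  · rintro ⟨⟨κ, σ⟩, hπ⟩
    obtain ⟨⟨⟨τ, hτ⟩, t⟩, rfl⟩ := (bijective_strictMonoOn_mul_ofSubtype S).surjective σ
    exact ⟨(⟨(κ, τ), mul_ofSubtype_mem_uncoloredFixed_iff.mp hπ, hτ⟩, t), rfl⟩

end UncoloredFixed

section InitialPositions

variable {ℓ n m : ℕ}

/-- The positions in `[m]`, as elements of `[n]`. -/
abbrev initialPositions (n m : ℕ) : Set (Fin n) := {i | (i : ℕ) < m}

theorem setOf_increasingFixed_eq :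
    {π | IncreasingFixed ℓ n m π} =
      {π ∈ uncoloredFixed (ZMod ℓ) (initialPositions n m) (initialPositions n m) |
        StrictMonoOn π.2 (initialPositions n m)} := by
  ext π
  constructor
  · rintro ⟨hcolor, hfix, hmono⟩
    exact ⟨⟨hcolor, fun i hi hi₀ => hfix i ⟨hi, hi₀⟩⟩, fun i _ j hj hij => hmono i j hij hj⟩
  · rintro ⟨⟨hcolor, hfix⟩, hmono⟩
    exact ⟨hcolor, fun i hi => hfix i hi.1 hi.2,
      fun i j hij hj => hmono (hij.trans hj) hj hij⟩

theorem card_initialPositions (hmn : m ≤ n) : Nat.card (initialPositions n m) = m := by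
  rw [Nat.card_eq_fintype_card, Fintype.card_subtype]
  exact Fin.card_filter_val_lt.trans (min_eq_right hmn)

theorem initialPositions_succ (hmn : m ≤ n) :
    initialPositions (n + 1) (m + 1) =
      insert ⟨m, Nat.lt_succ_iff.mpr hmn⟩ (initialPositions (n + 1) m) := by
  ext i
  simp only [Set.mem_ofPred_eq, Set.mem_insert_iff, Fin.ext_iff]
  omega

theorem initialPositions_eq_preimage (hmn : m ≤ n) :
    initialPositions n m = finSuccAboveEquiv ⟨m, Nat.lt_succ_iff.mpr hmn⟩ ⁻¹'
      (Subtype.val ⁻¹' initialPositions (n + 1) m) := by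
  ext i
  simp only [Set.mem_preimage, Set.mem_ofPred_eq, finSuccAboveEquiv_apply, Fin.succAbove,
    Fin.lt_def, Fin.val_castSucc]
  split_ifs
  · rfl
  · rw [Fin.val_succ]
    omega

theorem ncard_uncoloredFixed_initialPositions (hmn : m ≤ n) :
    (uncoloredFixed (ZMod ℓ) (initialPositions n m) (initialPositions n m)).ncard =
      m ! * Nat.card {π // IncreasingFixed ℓ n m π} := by
  rw [ncard_uncoloredFixed_eq_factorial_mul, card_initialPositions hmn, ← setOf_increasingFixed_eq]
  rfl

theorem card_mul_ncard_uncoloredFixed_initialPositions_succ (Z : Type*) [Zero Z] [Finite Z]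
    (hmn : m ≤ n) :
    Nat.card Z * (uncoloredFixed Z (initialPositions (n + 1) (m + 1))
      (initialPositions (n + 1) (m + 1))).ncard =
      (uncoloredFixed Z (initialPositions (n + 1) m) (initialPositions (n + 1) m)).ncard +
      (uncoloredFixed Z (initialPositions n m) (initialPositions n m)).ncard := by
  let p : Fin (n + 1) := ⟨m, Nat.lt_succ_iff.mpr hmn⟩
  have hp : p ∉ initialPositions (n + 1) m := lt_irrefl m
  rw [initialPositions_succ hmn, initialPositions_eq_preimage hmn,
    ncard_uncoloredFixed_preimage (finSuccAboveEquiv p)]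
  exact card_mul_ncard_uncoloredFixed_insert hp

theorem card_increasingFixed_self (ℓ n : ℕ) :
    Nat.card {π // IncreasingFixed ℓ n n π} = 1 := by
  refine Set.ncard_eq_one.mpr ⟨(0, 1), Set.eq_singleton_iff_unique_mem.mpr ⟨?_, ?_⟩⟩
  · exact ⟨fun _ _ => rfl, fun i _ => i.2, fun _ _ hij _ => hij⟩
  · rintro ⟨κ, σ⟩ ⟨hcolor, -, hmono⟩
    refine Prod.ext (funext fun i => ?_) (DFunLike.coe_injective ?_)
    · simpa using hcolor (σ.symm i) (σ.symm i).2
    · have hσ : StrictMono σ := fun i j hij => hmono i j hij j.2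
      refine (hσ.range_inj strictMono_id).mp ?_
      rw [σ.surjective.range_eq, Set.range_id]

theorem card_increasingFixed_recurrence [NeZero ℓ] (hmn : m ≤ n) :
    Nat.card {π // IncreasingFixed ℓ (n + 1) m π} + Nat.card {π // IncreasingFixed ℓ n m π} =
      ℓ * (m + 1) * Nat.card {π // IncreasingFixed ℓ (n + 1) (m + 1) π} := by
  have factorial_mul_recurrence :=
    card_mul_ncard_uncoloredFixed_initialPositions_succ (ZMod ℓ) hmn
  rw [Nat.card_zmod, ncard_uncoloredFixed_initialPositions hmn,
    ncard_uncoloredFixed_initialPositions (hmn.trans n.le_succ),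
    ncard_uncoloredFixed_initialPositions (Nat.succ_le_succ hmn),
    Nat.factorial_succ] at factorial_mul_recurrence
  refine Nat.eq_of_mul_eq_mul_left m.factorial_pos ?_
  linear_combination -factorial_mul_recurrence

theorem isAlliedArray_card_increasingFixed (ℓ : ℕ) [NeZero ℓ] :
    IsAlliedArray (ℓ : ℤ) fun n m => Nat.card {π // IncreasingFixed ℓ n m π} where
  diag n := by exact_mod_cast card_increasingFixed_self ℓ n
  rec_of_lt := by
    rintro (_ | n) m hmn
    · exact absurd hmn m.not_lt_zero
    · rw [Nat.add_sub_cancel, eq_sub_iff_add_eq]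
      exact_mod_cast card_increasingFixed_recurrence (Nat.lt_succ_iff.mp hmn)

end InitialPositions

/-- for `ℓ ≥ 1` and `0 ≤ m ≤ n`, the entry `d_{ℓ,n}^m` of the allied array
(`d n n = 1`, `d n m = ℓ(m+1) d n (m+1) − d (n−1) m`) equals the number of
`m`-increasing-fixed colored permutations in `G_{ℓ,n}`. -/
theorem stmt_11 (ℓ : ℕ) (hℓ : 1 ≤ ℓ) (d : ℕ → ℕ → ℤ)
    (hd_diag : ∀ n : ℕ, d n n = 1)
    (hd_rec : ∀ n m : ℕ, m < n →
      d n m = (ℓ : ℤ) * ((m : ℤ) + 1) * d n (m + 1) - d (n - 1) m)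
    (m n : ℕ) (hmn : m ≤ n) :
    d n m = Nat.card {π : ColoredPerm ℓ n // IncreasingFixed ℓ n m π} := by
  have : NeZero ℓ := ⟨Nat.one_le_iff_ne_zero.mp hℓ⟩
  have hd : IsAlliedArray (ℓ : ℤ) d := ⟨hd_diag, hd_rec⟩
  exact hd.eq_of_le (isAlliedArray_card_increasingFixed ℓ) hmn
end

section
/- Let ℓ ≥ 1 and 0 ≤ m ≤ n. Then d_{ℓ,n}^m equals the number of m-isolated-fixed colored permutations in G_{ℓ,n}, i.e., the cardinality of D_{ℓ,n}^m. -/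
/-- `π = (ε, σ)` is `m`-isolated-fixed if (i) `ε(i) = 0` for every `i ∈ [m]`,
(ii) all fixed points of `π` lie in `[m]`, and (iii) each cycle of `σ` contains at most
one element of `[m]`. -/
def IsolatedFixed (ℓ n m : ℕ) (π : ColoredPerm ℓ n) : Prop :=
  (∀ i : Fin n, (i : ℕ) < m → π.1 i = 0) ∧
  (∀ i : Fin n, (π.2 i = i ∧ π.1 i = 0) → (i : ℕ) < m) ∧
  (∀ i j : Fin n, (i : ℕ) < m → (j : ℕ) < m → π.2.SameCycle i j → i = j)

/-!
Mark a set `s` of points and pick `x ∉ s`. If each point of `insert x s` has its own cycle in `σ`,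
then multiplying by `swap a x` for some `a ∈ insert x s` merges the cycle of `x` into that of `a`
(or does nothing, if `a = x`); the points of `s` stay in distinct cycles, and `a` can be recovered
as the only choice for which a second multiplication by `swap a x` isolates `insert x s` again.
Together with the free choice of a color for `x`, this yields `|C| (|s| + 1)` colored permutations
that isolate `s` for each one that isolates `insert x s`. In them `x` may be a fixed point of color
zero: if it is not, then all fixed points are in `s`, and if it is, then it can be deleted. For
`s = [m]` and `x = m + 1` these two cases are the two terms of the recurrence
`ℓ (m + 1) d_n^{m + 1} = d_n^m + d_{n - 1}^m`.
-/

open Equiv Equiv.Perm Set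

section CyclesOfMulSwap

variable {α : Type*} [Finite α] {σ : Perm α} {a x i j : α}

lemma mem_of_mapsTo_of_sameCycle {A : Set α} (hA : MapsTo σ A A) (hij : σ.SameCycle i j)
    (hi : i ∈ A) : j ∈ A := by
  obtain ⟨k, rfl⟩ := hij.exists_nat_pow_eq
  rw [← iterate_eq_pow]
  exact hA.iterate k hi

variable [DecidableEq α]

lemma sameCycle_mul_swap_of_not_sameCycle (h : ¬ σ.SameCycle a x) :
    (σ * swap a x).SameCycle a x := by
  let A : Set α := {y | (σ * swap a x).SameCycle a y ∧ σ.SameCycle x y}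
  have apply_x_mem : σ x ∈ A := ⟨⟨1, by simp⟩, sameCycle_apply_right.2 .rfl⟩
  have mapsTo_A : MapsTo σ A A := by
    rintro y ⟨hτ, hσ⟩
    rcases eq_or_ne y x with rfl | hyx
    · exact apply_x_mem
    have hya : y ≠ a := by rintro rfl; exact h hσ.symm
    have apply_eq : (σ * swap a x) y = σ y := by rw [mul_apply, swap_apply_of_ne_of_ne hya hyx]
    exact ⟨apply_eq ▸ sameCycle_apply_right.2 hτ, sameCycle_apply_right.2 hσ⟩
  exact (mem_of_mapsTo_of_sameCycle mapsTo_A (sameCycle_apply_left.2 .rfl) apply_x_mem).1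

lemma not_sameCycle_mul_swap_of_sameCycle (hax : a ≠ x) (h : σ.SameCycle a x) :
    ¬ (σ * swap a x).SameCycle a x := by
  have exists_pow : ∃ k, 0 < k ∧ (σ ^ k) x = a := by
    obtain ⟨k, hk, -, hka⟩ := h.symm.exists_pow_eq''
    exact ⟨k, hk, hka⟩
  obtain ⟨k, ⟨hk, hka⟩, hmin⟩ :
      ∃ k, (0 < k ∧ (σ ^ k) x = a) ∧ ∀ j < k, ¬ (0 < j ∧ (σ ^ j) x = a) :=
    ⟨Nat.find exists_pow, Nat.find_spec exists_pow, fun _ => Nat.find_min exists_pow⟩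
  -- The points after `x` up to `a` on the cycle of `σ` form a cycle of `σ * swap a x`.
  let A : Set α := {y | ∃ j, 0 < j ∧ j ≤ k ∧ (σ ^ j) x = y}
  have x_notMem : x ∉ A := by
    rintro ⟨j, hj, hjk, hjx⟩
    rcases hjk.eq_or_lt with rfl | hjk
    · exact hax (hka.symm.trans hjx)
    · refine hmin (k - j) (by lia) ⟨by lia, ?_⟩
      rw [← hka, ← Nat.sub_add_cancel hjk.le, pow_add, mul_apply, hjx, Nat.add_sub_cancel]
  have mapsTo_A : MapsTo (σ * swap a x) A A := by
    rintro y ⟨j, hj, hjk, rfl⟩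
    rcases hjk.eq_or_lt with rfl | hjk
    · exact ⟨1, one_pos, hj, by simp [hka]⟩
    · refine ⟨j + 1, j.succ_pos, hjk, ?_⟩
      have hjx : (σ ^ j) x ≠ x := fun hjx => x_notMem ⟨j, hj, hjk.le, hjx⟩
      have hja : (σ ^ j) x ≠ a := fun hja => hmin j hjk ⟨hj, hja⟩
      rw [mul_apply, swap_apply_of_ne_of_ne hja hjx, pow_succ', mul_apply]
  exact fun hτ => x_notMem (mem_of_mapsTo_of_sameCycle mapsTo_A hτ ⟨k, hk, le_rfl, hka⟩)

lemma sameCycle_or_of_sameCycle_mul_swap (h : (σ * swap a x).SameCycle i j) :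
    σ.SameCycle i j ∨
      (σ.SameCycle i a ∨ σ.SameCycle i x) ∧ (σ.SameCycle j a ∨ σ.SameCycle j x) := by
  have sameCycle_right {i j : α} (h : (σ * swap a x).SameCycle i j) :
      σ.SameCycle j i ∨ σ.SameCycle j a ∨ σ.SameCycle j x := by
    let A : Set α := {y | σ.SameCycle y i ∨ σ.SameCycle y a ∨ σ.SameCycle y x}
    have mapsTo_A : MapsTo (σ * swap a x) A A := by
      intro y hy
      simp only [A, mem_ofPred_eq, mul_apply, sameCycle_apply_left]
      rcases eq_or_ne y a with rfl | hya
      · exact .inr (.inr (by rw [swap_apply_left]))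
      rcases eq_or_ne y x with rfl | hyx
      · exact .inr (.inl (by rw [swap_apply_right]))
      · rwa [swap_apply_of_ne_of_ne hya hyx]
    exact mem_of_mapsTo_of_sameCycle (A := A) mapsTo_A h (.inl .rfl)
  rcases sameCycle_right h with hji | hj
  · exact .inl hji.symm
  · exact (sameCycle_right h.symm).imp_right fun hi => ⟨hi, hj⟩

lemma sameCycle_of_sameCycle_mul_swap (hax : σ.SameCycle a x)
    (h : (σ * swap a x).SameCycle i j) : σ.SameCycle i j := by
  have to_x {i : α} (hi : σ.SameCycle i a ∨ σ.SameCycle i x) : σ.SameCycle i x :=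
    hi.elim (·.trans hax) id
  rcases sameCycle_or_of_sameCycle_mul_swap h with hij | ⟨hi, hj⟩
  · exact hij
  · exact (to_x hi).trans (to_x hj).symm

end CyclesOfMulSwap

/-- The permutation `σ` isolates `s` if each of its cycles contains at most one point of `s`. -/
def Isolates {α : Type*} (σ : Perm α) (s : Set α) : Prop :=
  ∀ ⦃i j⦄, i ∈ s → j ∈ s → σ.SameCycle i j → i = j

section Isolates

variable {α : Type*} {σ : Perm α} {s : Set α} {a x : α}

lemma isolates_insert :
    Isolates σ (insert x s) ↔ Isolates σ s ∧ ∀ i ∈ s, σ.SameCycle i x → i = x := by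
  refine ⟨fun h => ⟨fun i j hi hj => h (.inr hi) (.inr hj), fun i hi => h (.inr hi) (.inl rfl)⟩, ?_⟩
  rintro ⟨hs, hx⟩ i j (rfl | hi) (rfl | hj) hij
  · rfl
  · exact (hx j hj hij.symm).symm
  · exact hx i hi hij
  · exact hs hi hj hij

lemma isolates_univ : Isolates σ univ ↔ σ = 1 := by
  constructor
  · intro h
    ext i
    exact h (mem_univ _) (mem_univ _) (sameCycle_apply_left.2 .rfl)
  · rintro rfl i j - -
    exact sameCycle_one.1

variable [Finite α] [DecidableEq α]

lemma Isolates.mul_swap (h : Isolates σ (insert x s)) (hx : x ∉ s) (ha : a ∈ insert x s) :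
    Isolates (σ * swap a x) s := by
  have eq_a {i : α} (hi : i ∈ s) (hi' : σ.SameCycle i a ∨ σ.SameCycle i x) : i = a := by
    rcases hi' with hia | hix
    · exact h (.inr hi) ha hia
    · exact absurd (h (.inr hi) (.inl rfl) hix ▸ hi) hx
  intro i j hi hj hij
  rcases sameCycle_or_of_sameCycle_mul_swap hij with hij | ⟨hi', hj'⟩
  · exact h (.inr hi) (.inr hj) hij
  · exact (eq_a hi hi').trans (eq_a hj hj').symm

lemma Isolates.mul_swap_of_sameCycle (h : Isolates σ s) (hx : x ∉ s) (ha : a ∈ s)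
    (hax : σ.SameCycle a x) : Isolates (σ * swap a x) (insert x s) := by
  refine isolates_insert.2 ⟨fun i j hi hj hij =>
    h hi hj (sameCycle_of_sameCycle_mul_swap hax hij), fun i hi hix => ?_⟩
  obtain rfl : i = a := h hi ha ((sameCycle_of_sameCycle_mul_swap hax hix).trans hax.symm)
  exact absurd hix (not_sameCycle_mul_swap_of_sameCycle (ne_of_mem_of_not_mem hi hx) hax)

lemma Isolates.existsUnique_mul_swap (h : Isolates σ s) (hx : x ∉ s) :
    ∃! a, a ∈ insert x s ∧ Isolates (σ * swap a x) (insert x s) := by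
  have mul_swap_self (y : α) : σ * swap y y = σ := by
    rw [swap_self, ← Perm.one_def, mul_one]
  apply existsUnique_of_exists_of_unique
  · by_cases hs : ∃ a ∈ s, σ.SameCycle a x
    · obtain ⟨a, ha, hax⟩ := hs
      exact ⟨a, .inr ha, h.mul_swap_of_sameCycle hx ha hax⟩
    · refine ⟨x, .inl rfl, isolates_insert.2 ?_⟩
      rw [mul_swap_self]
      exact ⟨h, fun i hi hix => absurd ⟨i, hi, hix⟩ hs⟩
  · have sameCycle_x {a : α} (ha : a ∈ insert x s) (hσ : Isolates (σ * swap a x) (insert x s)) :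
        σ.SameCycle a x := by
      rcases eq_or_ne a x with rfl | hax
      · rfl
      · simpa only [mul_swap_mul_self] using sameCycle_mul_swap_of_not_sameCycle
          fun hax' => hax (hσ ha (.inl rfl) hax')
    rintro a b ⟨ha, hσa⟩ ⟨hb, hσb⟩
    have hab : σ.SameCycle a b := (sameCycle_x ha hσa).trans (sameCycle_x hb hσb).symm
    rcases ha with rfl | ha'
    · exact (mul_swap_self a ▸ hσa) (.inl rfl) hb hab
    rcases hb with rfl | hb'
    · exact (mul_swap_self b ▸ hσb) (.inr ha') (.inl rfl) hab
    · exact h ha' hb' hab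

end Isolates

/-- The set `FIX(π)` of fixed points of color zero of a colored permutation `π = (ε, σ)`. -/
def coloredFixedPoints {α C : Type*} [Zero C] (π : (α → C) × Perm α) : Set α :=
  {i | π.2 i = i ∧ π.1 i = 0}

/-- The colored permutations of `α` that isolate `s`, give color zero to `s` and have all their
fixed points in `f`. The paper's `D_{ℓ,n}^m` is the case `s = f = [m]`; a separate `f` is needed to
allow one further fixed point in the course of the count. -/
def isolatingColoredPerms {α : Type*} (C : Type*) [Zero C] (s f : Set α) :
    Set ((α → C) × Perm α) :=
  {π | (∀ i ∈ s, π.1 i = 0) ∧ coloredFixedPoints π ⊆ f ∧ Isolates π.2 s}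

section RecolorMulSwap

variable {α C : Type*} [DecidableEq α] {s f : Set α} {a x : α} {c : C}
  {π : (α → C) × Perm α}

/-- Give `x` the color `c` and multiply by `swap a x`, which merges the cycles of `a` and `x` if
they are distinct and separates `a` from `x` otherwise. -/
def recolorMulSwap (x : α) (c : C) (a : α) (π : (α → C) × Perm α) : (α → C) × Perm α :=
  (Function.update π.1 x c, π.2 * swap a x)

lemma recolorMulSwap_fst_apply_of_ne {i : α} (hix : i ≠ x) :
    (recolorMulSwap x c a π).1 i = π.1 i :=
  Function.update_of_ne hix ..

lemma recolorMulSwap_recolorMulSwap {c' : C} :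
    recolorMulSwap x c' a (recolorMulSwap x c a π) = (Function.update π.1 x c', π.2) := by
  simp [recolorMulSwap]

variable [Zero C]

lemma coloredFixedPoints_recolorMulSwap_subset (hs : insert x s ⊆ f) (ha : a ∈ insert x s)
    (h : coloredFixedPoints π ⊆ f) : coloredFixedPoints (recolorMulSwap x c a π) ⊆ f := by
  rintro i ⟨hσ, hε⟩
  by_contra hi
  have hia : i ≠ a := fun hia => hi (hs (hia ▸ ha))
  have hix : i ≠ x := fun hix => hi (hs (.inl hix))
  rw [recolorMulSwap, mul_apply, swap_apply_of_ne_of_ne hia hix] at hσ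
  rw [recolorMulSwap_fst_apply_of_ne hix] at hε
  exact hi (h ⟨hσ, hε⟩)

variable [Finite α]

lemma recolorMulSwap_mem_isolatingColoredPerms (hx : x ∉ s) (hs : insert x s ⊆ f)
    (ha : a ∈ insert x s) (h : π ∈ isolatingColoredPerms C (insert x s) f) :
    recolorMulSwap x c a π ∈ isolatingColoredPerms C s f := by
  refine ⟨fun i hi => ?_, coloredFixedPoints_recolorMulSwap_subset hs ha h.2.1,
    h.2.2.mul_swap hx ha⟩
  rw [recolorMulSwap_fst_apply_of_ne (ne_of_mem_of_not_mem hi hx)]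
  exact h.1 i (.inr hi)

lemma existsUnique_recolorMulSwap_mem_isolatingColoredPerms (hx : x ∉ s) (hs : insert x s ⊆ f)
    (h : π ∈ isolatingColoredPerms C s f) :
    ∃! a, a ∈ insert x s ∧ recolorMulSwap x 0 a π ∈ isolatingColoredPerms C (insert x s) f := by
  obtain ⟨a, ⟨ha, hσ⟩, huniq⟩ := h.2.2.existsUnique_mul_swap hx
  refine ⟨a, ⟨ha, ?_, coloredFixedPoints_recolorMulSwap_subset hs ha h.2.1, hσ⟩,
    fun b hb => huniq b ⟨hb.1, hb.2.2.2⟩⟩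
  intro i hi
  rcases eq_or_ne i x with rfl | hix
  · exact Function.update_self ..
  · rw [recolorMulSwap_fst_apply_of_ne hix]
    exact h.1 i (hi.resolve_left hix)

lemma bijOn_recolorMulSwap (hx : x ∉ s) (hs : insert x s ⊆ f) :
    BijOn (fun t : (C × α) × ((α → C) × Perm α) => recolorMulSwap x t.1.1 t.1.2 t.2)
      ((univ ×ˢ insert x s) ×ˢ isolatingColoredPerms C (insert x s) f)
      (isolatingColoredPerms C s f) := by
  have recolor_zero {π : (α → C) × Perm α} (hπ : π ∈ isolatingColoredPerms C (insert x s) f)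
      (c : C) (a : α) : recolorMulSwap x 0 a (recolorMulSwap x c a π) = π := by
    rw [recolorMulSwap_recolorMulSwap, Function.update_eq_self_iff.2 (hπ.1 x (.inl rfl)).symm]
  refine ⟨?_, ?_, ?_⟩
  · rintro ⟨⟨c, a⟩, π⟩ ⟨⟨-, ha⟩, hπ⟩
    exact recolorMulSwap_mem_isolatingColoredPerms hx hs ha hπ
  · rintro ⟨⟨c, a⟩, π⟩ ⟨⟨-, ha⟩, hπ⟩ ⟨⟨c', a'⟩, π'⟩ ⟨⟨-, ha'⟩, hπ'⟩ heq
    dsimp only at ha hπ ha' hπ' heq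
    obtain rfl : c = c' := by simpa [recolorMulSwap] using congrFun (congrArg Prod.fst heq) x
    obtain rfl : a = a' :=
      (existsUnique_recolorMulSwap_mem_isolatingColoredPerms hx hs
        (recolorMulSwap_mem_isolatingColoredPerms (c := c) hx hs ha hπ)).unique
        ⟨ha, by rwa [recolor_zero hπ]⟩ ⟨ha', by rwa [heq, recolor_zero hπ']⟩
    rw [← recolor_zero hπ c a, heq, recolor_zero hπ']
  · intro π hπ
    obtain ⟨a, ⟨ha, hπa⟩, -⟩ := existsUnique_recolorMulSwap_mem_isolatingColoredPerms hx hs hπ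
    refine ⟨((π.1 x, a), recolorMulSwap x 0 a π), ⟨⟨mem_univ _, ha⟩, hπa⟩, ?_⟩
    simp only [recolorMulSwap_recolorMulSwap, Function.update_eq_self]

end RecolorMulSwap

section ExtendByFixedPoint

variable {α β C : Type*} [Zero C] {s f : Set α} {x : α} {e : β ≃ {y : α // y ≠ x}}
  {π : (β → C) × Perm β}

lemma eq_or_exists_equiv_eq (e : β ≃ {y : α // y ≠ x}) (y : α) : y = x ∨ ∃ b, (e b : α) = y :=
  (eq_or_ne y x).imp_right fun hy => ⟨e.symm ⟨y, hy⟩, by rw [e.apply_symm_apply]⟩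

variable [DecidableEq α]

/-- Extend a colored permutation of `β ≃ {y // y ≠ x}` to `α` by making `x` a fixed point of
color zero. -/
noncomputable def extendByFixedPoint (e : β ≃ {y : α // y ≠ x}) (π : (β → C) × Perm β) :
    (α → C) × Perm α :=
  (Function.extend (fun b => (e b : α)) π.1 0, π.2.extendDomain e)

lemma extendByFixedPoint_fst_apply (b : β) : (extendByFixedPoint e π).1 (e b) = π.1 b :=
  (Subtype.val_injective.comp e.injective).extend_apply ..

lemma extendByFixedPoint_snd_apply (b : β) : (extendByFixedPoint e π).2 (e b) = e (π.2 b) :=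
  Perm.extendDomain_apply_image ..

lemma extendByFixedPoint_fst_self : (extendByFixedPoint e π).1 x = 0 :=
  Function.extend_apply' _ _ _ fun ⟨b, hb⟩ => (e b).2 hb

lemma extendByFixedPoint_snd_self : (extendByFixedPoint e π).2 x = x :=
  Perm.extendDomain_apply_not_subtype _ _ (not_not.2 rfl)

lemma coloredFixedPoints_extendByFixedPoint :
    coloredFixedPoints (extendByFixedPoint e π) =
      insert x ((fun b => (e b : α)) '' coloredFixedPoints π) := by
  ext y
  rcases eq_or_exists_equiv_eq e y with rfl | ⟨b, rfl⟩
  · simp [coloredFixedPoints, extendByFixedPoint_fst_self, extendByFixedPoint_snd_self]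
  · simp [coloredFixedPoints, extendByFixedPoint_fst_apply, extendByFixedPoint_snd_apply,
      Subtype.val_inj, (e b).2]

lemma isolates_extendByFixedPoint (hx : x ∉ s) :
    Isolates (extendByFixedPoint e π).2 s ↔ Isolates π.2 ((fun b => (e b : α)) ⁻¹' s) := by
  constructor
  · intro h b b' hb hb' hbb'
    exact e.injective (Subtype.val_injective (h hb hb' ((sameCycle_extendDomain (f := e)).2 hbb')))
  · intro h i j hi hj hij
    obtain ⟨b, rfl⟩ := (eq_or_exists_equiv_eq e i).resolve_left (ne_of_mem_of_not_mem hi hx)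
    obtain ⟨b', rfl⟩ := (eq_or_exists_equiv_eq e j).resolve_left (ne_of_mem_of_not_mem hj hx)
    rw [h hi hj ((sameCycle_extendDomain (f := e)).1 hij)]

lemma extendByFixedPoint_mem_isolatingColoredPerms_iff (hx : x ∉ s) (hxf : x ∈ f) :
    extendByFixedPoint e π ∈ isolatingColoredPerms C s f ↔
      π ∈ isolatingColoredPerms C ((fun b => (e b : α)) ⁻¹' s) ((fun b => (e b : α)) ⁻¹' f) := by
  refine and_congr ?_ (and_congr ?_ (isolates_extendByFixedPoint hx))
  · constructor
    · intro h b hb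
      rw [← extendByFixedPoint_fst_apply (e := e), h _ hb]
    · intro h i hi
      obtain ⟨b, rfl⟩ := (eq_or_exists_equiv_eq e i).resolve_left (ne_of_mem_of_not_mem hi hx)
      rw [extendByFixedPoint_fst_apply, h b hi]
  · rw [coloredFixedPoints_extendByFixedPoint, insert_subset_iff, image_subset_iff,
      and_iff_right hxf]

lemma extendByFixedPoint_injective :
    Function.Injective (extendByFixedPoint (C := C) e) := by
  intro π π' h
  refine Prod.ext (funext fun b => ?_) (Equiv.ext fun b => e.injective (Subtype.ext ?_))
  · rw [← extendByFixedPoint_fst_apply (e := e), h, extendByFixedPoint_fst_apply]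
  · rw [← extendByFixedPoint_snd_apply, h, extendByFixedPoint_snd_apply]

lemma range_extendByFixedPoint :
    range (extendByFixedPoint (C := C) e) = {π | x ∈ coloredFixedPoints π} := by
  ext π
  constructor
  · rintro ⟨π, rfl⟩
    exact ⟨extendByFixedPoint_snd_self, extendByFixedPoint_fst_self⟩
  · rintro ⟨hσ, hε⟩
    have ne_iff (y : α) : π.2 y ≠ x ↔ y ≠ x := by
      conv_lhs => rw [← hσ]
      exact π.2.injective.ne_iff
    refine ⟨(fun b => π.1 (e b), e.symm.permCongr (π.2.subtypePerm ne_iff)), ?_⟩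
    refine Prod.ext (funext fun y => ?_) (Equiv.ext fun y => ?_) <;>
      rcases eq_or_exists_equiv_eq e y with rfl | ⟨b, rfl⟩
    · rw [extendByFixedPoint_fst_self, hε]
    · rw [extendByFixedPoint_fst_apply]
    · rw [extendByFixedPoint_snd_self, hσ]
    · simp [extendByFixedPoint_snd_apply]

end ExtendByFixedPoint

section Counting

variable {α β C : Type*} [Zero C] {s f : Set α} {x : α}

lemma isolatingColoredPerms_univ : isolatingColoredPerms C (univ : Set α) univ = {(0, 1)} := by
  ext π
  simp [isolatingColoredPerms, isolates_univ, Prod.ext_iff, funext_iff]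

lemma isolatingColoredPerms_sdiff :
    isolatingColoredPerms C s f \ {π | x ∈ coloredFixedPoints π} =
      isolatingColoredPerms C s (f \ {x}) := by
  ext π
  simp only [isolatingColoredPerms, mem_sdiff, mem_ofPred_eq, subset_sdiff,
    disjoint_singleton_right]
  tauto

lemma ncard_isolatingColoredPerms_inter (e : β ≃ {y : α // y ≠ x}) (hx : x ∉ s) (hxf : x ∈ f) :
    (isolatingColoredPerms C s f ∩ {π | x ∈ coloredFixedPoints π}).ncard =
      (isolatingColoredPerms C ((fun b => (e b : α)) ⁻¹' s)
        ((fun b => (e b : α)) ⁻¹' f)).ncard := by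
  classical
  rw [← range_extendByFixedPoint (e := e), ← image_preimage_eq_inter_range,
    ncard_image_of_injective _ extendByFixedPoint_injective]
  congr 1
  ext π
  exact extendByFixedPoint_mem_isolatingColoredPerms_iff hx hxf

variable [Finite α]

lemma ncard_isolatingColoredPerms_eq_mul (hx : x ∉ s) (hs : insert x s ⊆ f) :
    (isolatingColoredPerms C s f).ncard =
      Nat.card C * (s.ncard + 1) * (isolatingColoredPerms C (insert x s) f).ncard := by
  classical
  rw [← (bijOn_recolorMulSwap hx hs).ncard_eq, ncard_prod, ncard_prod, ncard_univ,
    ncard_insert_of_notMem hx]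

theorem card_mul_ncard_isolatingColoredPerms_insert [Finite C] (e : β ≃ {y : α // y ≠ x})
    (hsf : s ⊆ f) (hx : x ∉ f) :
    Nat.card C * (s.ncard + 1) * (isolatingColoredPerms C (insert x s) (insert x f)).ncard =
      (isolatingColoredPerms C s f).ncard +
        (isolatingColoredPerms C ((fun b => (e b : α)) ⁻¹' s)
          ((fun b => (e b : α)) ⁻¹' f)).ncard := by
  have hxs : x ∉ s := fun h => hx (hsf h)
  have preimage_insert : (fun b => (e b : α)) ⁻¹' insert x f = (fun b => (e b : α)) ⁻¹' f := by
    ext b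
    exact or_iff_right (e b).2
  rw [← ncard_isolatingColoredPerms_eq_mul hxs (insert_subset_insert hsf),
    ← ncard_inter_add_ncard_sdiff_eq_ncard _ {π | x ∈ coloredFixedPoints π},
    ncard_isolatingColoredPerms_inter e hxs (mem_insert x f), preimage_insert,
    isolatingColoredPerms_sdiff, insert_sdiff_self_of_notMem hx, add_comm]

end Counting

section FinInitialSegments

lemma card_isolatedFixed (ℓ n m : ℕ) :
    Nat.card {π : ColoredPerm ℓ n // IsolatedFixed ℓ n m π} =
      (isolatingColoredPerms (ZMod ℓ) {i : Fin n | (i : ℕ) < m} {i | (i : ℕ) < m}).ncard :=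
  rfl

lemma card_isolatedFixed_self (ℓ n : ℕ) :
    Nat.card {π : ColoredPerm ℓ n // IsolatedFixed ℓ n n π} = 1 := by
  have lt_eq_univ : {i : Fin n | (i : ℕ) < n} = univ := eq_univ_of_forall Fin.isLt
  rw [card_isolatedFixed, lt_eq_univ, isolatingColoredPerms_univ, ncard_singleton]

lemma mul_card_isolatedFixed_succ (ℓ : ℕ) [NeZero ℓ] {m n : ℕ} (hmn : m ≤ n) :
    ℓ * (m + 1) * Nat.card {π : ColoredPerm ℓ (n + 1) // IsolatedFixed ℓ (n + 1) (m + 1) π} =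
      Nat.card {π : ColoredPerm ℓ (n + 1) // IsolatedFixed ℓ (n + 1) m π} +
        Nat.card {π : ColoredPerm ℓ n // IsolatedFixed ℓ n m π} := by
  let x : Fin (n + 1) := ⟨m, Nat.lt_succ_of_le hmn⟩
  have lt_succ_eq_insert : {i : Fin (n + 1) | (i : ℕ) < m + 1} =
      insert x {i : Fin (n + 1) | (i : ℕ) < m} := by
    ext i
    simp only [mem_ofPred_eq, mem_insert_iff, x, Fin.ext_iff]
    lia
  have preimage_succAbove :
      (fun i => (finSuccAboveEquiv x i : Fin (n + 1))) ⁻¹' {i | (i : ℕ) < m} =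
        {i : Fin n | (i : ℕ) < m} := by
    ext i
    exact x.succAbove_lt_iff_castSucc_lt i
  have ncard_lt : {i : Fin (n + 1) | (i : ℕ) < m}.ncard = m := by
    have lt_eq_Iio : {i : Fin (n + 1) | (i : ℕ) < m} = Finset.Iio x := by
      rw [Finset.coe_Iio]
      rfl
    rw [lt_eq_Iio, ncard_coe_finset, Fin.card_Iio]
  have h := card_mul_ncard_isolatingColoredPerms_insert (C := ZMod ℓ) (finSuccAboveEquiv x)
    (s := {i : Fin (n + 1) | (i : ℕ) < m}) subset_rfl (lt_irrefl m)
  rwa [preimage_succAbove, ncard_lt, Nat.card_zmod, ← lt_succ_eq_insert] at h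

end FinInitialSegments

/-- for `ℓ ≥ 1` and `0 ≤ m ≤ n`, the entry `d_{ℓ,n}^m` of the allied array
(`d n n = 1`, `d n m = ℓ(m+1) d n (m+1) − d (n−1) m`) equals the number of
`m`-isolated-fixed colored permutations in `G_{ℓ,n}`. -/
theorem stmt_12 (ℓ : ℕ) (hℓ : 1 ≤ ℓ) (d : ℕ → ℕ → ℤ)
    (hd_diag : ∀ n : ℕ, d n n = 1)
    (hd_rec : ∀ n m : ℕ, m < n →
      d n m = (ℓ : ℤ) * ((m : ℤ) + 1) * d n (m + 1) - d (n - 1) m)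
    (m n : ℕ) (hmn : m ≤ n) :
    d n m = Nat.card {π : ColoredPerm ℓ n // IsolatedFixed ℓ n m π} := by
  have : NeZero ℓ := ⟨by lia⟩
  obtain ⟨r, rfl⟩ := Nat.exists_eq_add_of_le hmn
  clear hmn
  induction r generalizing m with
  | zero => rw [add_zero, hd_diag, card_isolatedFixed_self, Nat.cast_one]
  | succ r ih =>
    have recurrence := mul_card_isolatedFixed_succ ℓ (Nat.le_add_right m r)
    have ih_succ := ih (m + 1)
    rw [add_right_comm] at ih_succ
    rw [← add_assoc, hd_rec _ m (by lia), Nat.add_sub_cancel, ih_succ, ih m,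
      sub_eq_iff_eq_add]
    exact_mod_cast recurrence
end

section
/- Let ℓ ≥ 1 and n ≥ 0. Then the ℓ-derangement number satisfies d_{ℓ,n}^0 = g_{ℓ,n}^0 = Σ_{i=0}^{n} (−1)^i · (n!/i!) · ℓ^{n−i}. -/
/-!
Read along the column index `m`, the rule `t (n + 1) m = t (n + 1) (m + 1) - t n m` computes
iterated forward differences of the diagonal: `t (m + k) m = (Δ^k a) m`. Hence the diagonal
`a k = ℓ ^ k * k!` determines the table, and its zeroth column is the alternating binomial sum for
`Δ^n a` at `0`, in which `n.choose i * (n - i)! = n! / i!`. Multiplying column `m` of the allied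
array by `∏ i < m, ℓ * (i + 1) = ℓ ^ m * m!` absorbs the factor in its recurrence and turns it into
the same table; this factor is `1` for `m = 0`.
-/

open Finset Nat

/-- A triangular array `t n m` (`m ≤ n`) is a difference table with diagonal `a` when each entry
below the diagonal is the difference of its right and upper neighbours, as in Euler's table.
The values of `t n m` for `n < m` are unconstrained. -/
structure IsDifferenceTable_s13 {G : Type*} [AddCommGroup G] (a : ℕ → G) (t : ℕ → ℕ → G) : Prop where
  diag : ∀ n, t n n = a n
  succ_eq_sub : ∀ n m, m ≤ n → t (n + 1) m = t (n + 1) (m + 1) - t n m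

namespace IsDifferenceTable_s13

variable {G : Type*} [AddCommGroup G] {a : ℕ → G} {t : ℕ → ℕ → G}

theorem apply_add_eq_fwdDiff_iter (ht : IsDifferenceTable_s13 a t) (m k : ℕ) :
    t (m + k) m = (fwdDiff 1)^[k] a m := by
  induction k generalizing m with
  | zero => exact ht.diag m
  | succ k ih =>
    calc t (m + (k + 1)) m
        = t (m + 1 + k) (m + 1) - t (m + k) m := by
          rw [Nat.add_right_comm m 1 k]
          exact ht.succ_eq_sub (m + k) m (Nat.le_add_right m k)
      _ = (fwdDiff 1)^[k] a (m + 1) - (fwdDiff 1)^[k] a m := by rw [ih, ih]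
      _ = (fwdDiff 1)^[k + 1] a m := by rw [Function.iterate_succ_apply', fwdDiff]

theorem apply_zero_eq_fwdDiff_iter (ht : IsDifferenceTable_s13 a t) (n : ℕ) :
    t n 0 = (fwdDiff 1)^[n] a 0 := by
  simpa only [Nat.zero_add] using ht.apply_add_eq_fwdDiff_iter 0 n

theorem apply_zero_eq_sum_choose (ht : IsDifferenceTable_s13 a t) (n : ℕ) :
    t n 0 = ∑ i ∈ range (n + 1), ((-1 : ℤ) ^ i * n.choose i) • a (n - i) := by
  rw [ht.apply_zero_eq_fwdDiff_iter, fwdDiff_iter_eq_sum_shift, ← sum_range_reflect]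
  refine sum_congr rfl fun i hi ↦ ?_
  have hin : i ≤ n := mem_range_succ_iff.mp hi
  rw [Nat.add_sub_cancel, Nat.sub_sub_self hin, choose_symm hin, smul_eq_mul, mul_one,
    Nat.zero_add]

end IsDifferenceTable_s13

theorem isDifferenceTable_prod_mul {R : Type*} [CommRing R] {c : ℕ → R} {d : ℕ → ℕ → R}
    (hdiag : ∀ n, d n n = 1)
    (hrec : ∀ n m, m ≤ n → d (n + 1) m = c m * d (n + 1) (m + 1) - d n m) :
    IsDifferenceTable_s13 (fun n ↦ ∏ i ∈ range n, c i) fun n m ↦ (∏ i ∈ range m, c i) * d n m where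
  diag n := by rw [hdiag, mul_one]
  succ_eq_sub n m hmn := by rw [hrec n m hmn, prod_range_succ, mul_sub, mul_assoc]

theorem prod_range_mul_add_one {R : Type*} [CommSemiring R] (x : R) (n : ℕ) :
    ∏ i ∈ range n, x * ((i : R) + 1) = x ^ n * (n ! : R) := by
  rw [prod_mul_distrib, prod_const, card_range, ← prod_range_add_one_eq_factorial]
  push_cast
  rfl

theorem choose_mul_factorial_sub_eq_div {n i : ℕ} (hin : i ≤ n) :
    n.choose i * (n - i)! = n ! / i ! := by
  refine (Nat.div_eq_of_eq_mul_left (factorial_pos i) ?_).symm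
  rw [← choose_mul_factorial_mul_factorial hin, mul_right_comm]

theorem stmt_13_general {R : Type*} [CommRing R] (x : R) (g d : ℕ → ℕ → R)
    (hg_diag : ∀ n : ℕ, g n n = x ^ n * (n ! : R))
    (hg_rec : ∀ n m : ℕ, m < n → g n m = g n (m + 1) - g (n - 1) m)
    (hd_diag : ∀ n : ℕ, d n n = 1)
    (hd_rec : ∀ n m : ℕ, m < n → d n m = x * ((m : R) + 1) * d n (m + 1) - d (n - 1) m)
    (n : ℕ) :
    d n 0 = g n 0 ∧
      g n 0 = ∑ i ∈ range (n + 1), (-1 : R) ^ i * ((n ! / i ! : ℕ) : R) * x ^ (n - i) := by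
  have hg : IsDifferenceTable_s13 (fun k ↦ x ^ k * (k ! : R)) g :=
    ⟨hg_diag, fun k m hmk ↦ hg_rec (k + 1) m (Nat.lt_succ_of_le hmk)⟩
  have hd := isDifferenceTable_prod_mul hd_diag
    fun k m hmk ↦ hd_rec (k + 1) m (Nat.lt_succ_of_le hmk)
  simp only [prod_range_mul_add_one] at hd
  constructor
  · have h := (hd.apply_zero_eq_fwdDiff_iter n).trans (hg.apply_zero_eq_fwdDiff_iter n).symm
    simpa only [pow_zero, factorial_zero, cast_one, one_mul] using h
  · rw [hg.apply_zero_eq_sum_choose]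
    refine sum_congr rfl fun i hi ↦ ?_
    rw [← choose_mul_factorial_sub_eq_div (mem_range_succ_iff.mp hi), zsmul_eq_mul]
    push_cast
    ring

/-- for `ℓ ≥ 1` and `n ≥ 0`, the ℓ-derangement number satisfies
`d_{ℓ,n}^0 = g_{ℓ,n}^0 = Σ_{i=0}^{n} (−1)^i · (n!/i!) · ℓ^{n−i}`.  Here `g` is Euler's
difference table and `d` the allied array. -/
theorem stmt_13 (ℓ : ℕ) (hℓ : 1 ≤ ℓ) (g d : ℕ → ℕ → ℤ)
    (hg_diag : ∀ n : ℕ, g n n = (ℓ : ℤ) ^ n * (Nat.factorial n : ℤ))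
    (hg_rec : ∀ n m : ℕ, m < n → g n m = g n (m + 1) - g (n - 1) m)
    (hd_diag : ∀ n : ℕ, d n n = 1)
    (hd_rec : ∀ n m : ℕ, m < n →
      d n m = (ℓ : ℤ) * ((m : ℤ) + 1) * d n (m + 1) - d (n - 1) m)
    (n : ℕ) :
    d n 0 = g n 0 ∧
      g n 0 = ∑ i ∈ Finset.range (n + 1),
        (-1 : ℤ) ^ i * ((Nat.factorial n / Nat.factorial i : ℕ) : ℤ) * (ℓ : ℤ) ^ (n - i) :=
  stmt_13_general (ℓ : ℤ) g d hg_diag hg_rec hd_diag hd_rec n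
end

section
/- Let ℓ ≥ 1 and n ≥ 1. Then d_{ℓ,n}^0 = ℓ·n·d_{ℓ,n−1}^0 + (−1)^n. -/
/-!
The entry `d (m + k) m` depends on `m` polynomially: it is the value at `x = m + 1` of the function
`g k` with `g 0 x = 1` and `g (k + 1) x = ℓ x g k (x + 1) - g k x`. The difference of `g (k + 1)` is
`g (k + 1) (x + 1) - g (k + 1) x = ℓ (k + 1) g k (x + 1)`, and at `x = 0`, one step to the left of
column `0` of the array, `g k` takes the value `(-1) ^ k`.
-/

section AlliedDiagonal

variable {R : Type*} [CommRing R]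

/-- The polynomial function giving the `k`-th diagonal of the allied array with parameter `ℓ`.
The argument is shifted by one: the entry in row `m + k` and column `m` is the value at `m + 1`,
so that `0` stands for a virtual column `-1`. -/
def alliedDiagonal (ℓ : R) : ℕ → R → R
  | 0, _ => 1
  | k + 1, x => ℓ * x * alliedDiagonal ℓ k (x + 1) - alliedDiagonal ℓ k x

theorem alliedDiagonal_succ (ℓ : R) (k : ℕ) (x : R) :
    alliedDiagonal ℓ (k + 1) x =
      ℓ * x * alliedDiagonal ℓ k (x + 1) - alliedDiagonal ℓ k x :=
  rfl

theorem alliedDiagonal_apply_zero (ℓ : R) (k : ℕ) : alliedDiagonal ℓ k 0 = (-1) ^ k := by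
  induction k with
  | zero => exact (pow_zero _).symm
  | succ k ih => rw [alliedDiagonal_succ, ih]; ring

theorem alliedDiagonal_succ_add_one_sub (ℓ : R) (k : ℕ) (x : R) :
    alliedDiagonal ℓ (k + 1) (x + 1) - alliedDiagonal ℓ (k + 1) x =
      ℓ * (k + 1) * alliedDiagonal ℓ k (x + 1) := by
  induction k generalizing x with
  | zero =>
    simp only [alliedDiagonal]
    push_cast
    ring
  | succ k ih =>
    let g := alliedDiagonal ℓ
    have g_succ (j : ℕ) (y : R) : g (j + 1) y = ℓ * y * g j (y + 1) - g j y :=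
      alliedDiagonal_succ ℓ j y
    calc g (k + 1 + 1) (x + 1) - g (k + 1 + 1) x
      _ = ℓ * (x + 1) * (g (k + 1) (x + 1 + 1) - g (k + 1) (x + 1))
            + ℓ * g (k + 1) (x + 1) - (g (k + 1) (x + 1) - g (k + 1) x) := by
          rw [g_succ (k + 1) (x + 1), g_succ (k + 1) x]; ring
      _ = ℓ * (k + 1) * (ℓ * (x + 1) * g k (x + 1 + 1) - g k (x + 1))
            + ℓ * g (k + 1) (x + 1) := by
          rw [ih (x + 1), ih x]; ring
      _ = ℓ * ((k + 1 : ℕ) + 1) * g (k + 1) (x + 1) := by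
          rw [← g_succ]; push_cast; ring

theorem allied_eq_alliedDiagonal {ℓ : R} {d : ℕ → ℕ → R} (hd_diag : ∀ n, d n n = 1)
    (hd_rec : ∀ n m, m < n → d n m = ℓ * (m + 1) * d n (m + 1) - d (n - 1) m) (k m : ℕ) :
    d (m + k) m = alliedDiagonal ℓ k (m + 1) := by
  induction k generalizing m with
  | zero => exact hd_diag m
  | succ k ih =>
    have right : d (m + (k + 1)) (m + 1) = alliedDiagonal ℓ k (m + 1 + 1) := by
      rw [← Nat.add_assoc, Nat.add_right_comm, ih, Nat.cast_succ]
    have above : d (m + (k + 1) - 1) m = alliedDiagonal ℓ k (m + 1) := ih m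
    rw [hd_rec _ m (by lia), right, above, alliedDiagonal_succ]

theorem stmt_14_general (ℓ : R) (d : ℕ → ℕ → R) (hd_diag : ∀ n, d n n = 1)
    (hd_rec : ∀ n m, m < n → d n m = ℓ * (m + 1) * d n (m + 1) - d (n - 1) m)
    (n : ℕ) (hn : 1 ≤ n) :
    d n 0 = ℓ * n * d (n - 1) 0 + (-1) ^ n := by
  obtain ⟨k, rfl⟩ := Nat.exists_eq_add_of_le' hn
  have column_zero (j : ℕ) : d j 0 = alliedDiagonal ℓ j (0 + 1) := by
    simpa using allied_eq_alliedDiagonal hd_diag hd_rec j 0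
  rw [Nat.add_sub_cancel, column_zero, column_zero, Nat.cast_succ,
    ← alliedDiagonal_succ_add_one_sub, ← alliedDiagonal_apply_zero ℓ, sub_add_cancel]

end AlliedDiagonal

/-- for `ℓ ≥ 1` and `n ≥ 1`, `d_{ℓ,n}^0 = ℓ·n·d_{ℓ,n−1}^0 + (−1)^n`,
where `d` is the allied array (`d n n = 1`, `d n m = ℓ(m+1) d n (m+1) − d (n−1) m`). -/
theorem stmt_14 (ℓ : ℕ) (hℓ : 1 ≤ ℓ) (d : ℕ → ℕ → ℤ)
    (hd_diag : ∀ n : ℕ, d n n = 1)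
    (hd_rec : ∀ n m : ℕ, m < n →
      d n m = (ℓ : ℤ) * ((m : ℤ) + 1) * d n (m + 1) - d (n - 1) m)
    (n : ℕ) (hn : 1 ≤ n) :
    d n 0 = (ℓ : ℤ) * (n : ℤ) * d (n - 1) 0 + (-1 : ℤ) ^ n :=
  stmt_14_general (ℓ : ℤ) d hd_diag hd_rec n hn
end

section
/- Let ℓ ≥ 1 and m, n ≥ 0. Then g_{ℓ,n+m}^m = Σ_{i=0}^{n} (−1)^{n−i} · C(n,i) · ℓ^{m+i} · (m+i)!, where C(n,i) is a binomial coefficient. -/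
/-!
Fix the offset `n` and read `m ↦ g (n + m) m` as a sequence, the `n`-th subdiagonal of the table.
The recurrence says that each subdiagonal is the forward difference of the preceding one, so the
`n`-th subdiagonal is the `n`-th iterated difference of the main diagonal, which the binomial
expansion of `(E - 1) ^ n`, with `E` the shift operator, evaluates.
-/

section DifferenceTable

open scoped fwdDiff

variable {G : Type*} [AddCommGroup G] {g : ℕ → ℕ → G}

theorem subdiagonal_succ_eq_fwdDiff
    (hg : ∀ n m : ℕ, m ≤ n → g (n + 1) m = g (n + 1) (m + 1) - g n m) (n : ℕ) :
    (fun m ↦ g (n + 1 + m) m) = Δ_[1] fun m ↦ g (n + m) m := by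
  funext m
  simpa only [fwdDiff, add_assoc, add_comm 1 m] using hg (n + m) m (Nat.le_add_left m n)

theorem subdiagonal_eq_fwdDiff_iterate_diagonal
    (hg : ∀ n m : ℕ, m ≤ n → g (n + 1) m = g (n + 1) (m + 1) - g n m) (n : ℕ) :
    (fun m ↦ g (n + m) m) = (Δ_[1])^[n] fun m ↦ g m m := by
  induction n with
  | zero => simp only [zero_add, Function.iterate_zero_apply]
  | succ n ih => rw [subdiagonal_succ_eq_fwdDiff hg, ih, Function.iterate_succ_apply']

theorem stmt_15_general
    (hg : ∀ n m : ℕ, m ≤ n → g (n + 1) m = g (n + 1) (m + 1) - g n m) (m n : ℕ) :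
    g (n + m) m =
      ∑ i ∈ Finset.range (n + 1), ((-1 : ℤ) ^ (n - i) * n.choose i) • g (m + i) (m + i) := by
  simpa only [smul_eq_mul, mul_one] using
    (congrFun (subdiagonal_eq_fwdDiff_iterate_diagonal hg n) m).trans
      (fwdDiff_iter_eq_sum_shift 1 (fun k ↦ g k k) n m)

end DifferenceTable

/-- for `ℓ ≥ 1` and `m, n ≥ 0`,
`g_{ℓ,n+m}^m = Σ_{i=0}^{n} (−1)^{n−i} · C(n,i) · ℓ^{m+i} · (m+i)!`,
where `g` is Euler's difference table. -/
theorem stmt_15 (ℓ : ℕ) (hℓ : 1 ≤ ℓ) (g : ℕ → ℕ → ℤ)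
    (hg_diag : ∀ n : ℕ, g n n = (ℓ : ℤ) ^ n * (Nat.factorial n : ℤ))
    (hg_rec : ∀ n m : ℕ, m < n → g n m = g n (m + 1) - g (n - 1) m)
    (m n : ℕ) :
    g (n + m) m = ∑ i ∈ Finset.range (n + 1),
      (-1 : ℤ) ^ (n - i) * (n.choose i : ℤ) * (ℓ : ℤ) ^ (m + i) *
        (Nat.factorial (m + i) : ℤ) := by
  simpa only [hg_diag, smul_eq_mul, mul_assoc] using
    stmt_15_general (fun n m hmn ↦ hg_rec (n + 1) m (Nat.lt_succ_of_le hmn)) m n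
end

section
/- Let ℓ ≥ 1. The array g_{ℓ,n}^m satisfies the following recurrences: (a) g_{ℓ,n}^m = (ℓn − 1)·g_{ℓ,n−1}^m + ℓ(n − m − 1)·g_{ℓ,n−2}^m for n ≥ 2 and 0 ≤ m ≤ n − 2; (b) g_{ℓ,n}^m = ℓ(n − m)·g_{ℓ,n−1}^m + ℓm·g_{ℓ,n−1}^{m−1} for 1 ≤ m ≤ n − 1; (c) g_{ℓ,n}^m = ℓn·g_{ℓ,n−1}^m − ℓm·g_{ℓ,n−2}^{m−1} for n ≥ 2 and 1 ≤ m ≤ n − 1. -/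
/-!
Along a fixed `k`, the entries `m ↦ g (m + k) m` of a difference table are the `k`-th forward
difference of the diagonal `c n = g n n`. For Euler's table the diagonal satisfies
`c (m + 1) = ℓ (m + 1) c m`, and the Leibniz rule for the `k`-th difference of the affine weight
`ℓ (m + 1)` times `c` has only two terms: this is (b). Eliminating one entry of (b) with the
defining relation of the table gives (a) and (c).
-/

open fwdDiff

theorem fwdDiff_iter_succ_apply {M G : Type*} [AddCommMonoid M] [AddCommGroup G] (h : M)
    (f : M → G) (k : ℕ) (x : M) :
    (Δ_[h])^[k + 1] f x = (Δ_[h])^[k] f (x + h) - (Δ_[h])^[k] f x := by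
  rw [Function.iterate_succ_apply', fwdDiff]

theorem fwdDiff_iter_succ_affine_smul {M R G : Type*} [AddCommMonoid M] [Ring R] [AddCommGroup G]
    [Module R G] {h : M} {w : M → R} {d : R} (hw : ∀ x, w (x + h) = w x + d) (c : M → G)
    (k : ℕ) (x : M) :
    (Δ_[h])^[k + 1] (w • c) x =
      w x • (Δ_[h])^[k + 1] c x + (k + 1) • d • (Δ_[h])^[k] c (x + h) := by
  induction k generalizing x with
  | zero =>
    simp only [zero_add, Function.iterate_one, Function.iterate_zero, id, fwdDiff, Pi.smul_apply',
      hw, add_smul, smul_sub, one_smul]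
    abel
  | succ k ih =>
    rw [fwdDiff_iter_succ_apply, ih, ih, fwdDiff_iter_succ_apply h c (k + 1) x,
      fwdDiff_iter_succ_apply h c k (x + h), hw]
    simp only [add_smul, smul_sub, one_smul]
    abel

/-- Euler's difference tables with an arbitrary diagonal: every entry strictly below the diagonal is
the difference of its right neighbour and the entry above it. Only the entries `g n m` with `m ≤ n`
are constrained; the others are junk. -/
def IsDifferenceTable_s17 {G : Type*} [AddCommGroup G] (g : ℕ → ℕ → G) : Prop :=
  ∀ n m : ℕ, m ≤ n → g (n + 1) m = g (n + 1) (m + 1) - g n m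

namespace IsDifferenceTable_s17

theorem apply_add_eq_fwdDiff_iter_s17 {G : Type*} [AddCommGroup G] {g : ℕ → ℕ → G}
    (hg : IsDifferenceTable_s17 g) (k m : ℕ) :
    g (m + k) m = (Δ_[1])^[k] (fun n ↦ g n n) m := by
  induction k generalizing m with
  | zero => rfl
  | succ k ih =>
    rw [fwdDiff_iter_succ_apply, ← ih, ← ih, ← add_assoc,
      hg (m + k) m (Nat.le_add_right m k), Nat.add_right_comm m 1 k]

variable {R : Type*} [CommRing R] {ℓ : R} {g : ℕ → ℕ → R}

theorem row_recurrence (hg : IsDifferenceTable_s17 g)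
    (hdiag : ∀ n, g (n + 1) (n + 1) = ℓ * (n + 1) * g n n) {n m : ℕ} (hmn : m ≤ n) :
    g (n + 1) (m + 1) = ℓ * (n - m) * g n (m + 1) + ℓ * (m + 1) * g n m := by
  obtain ⟨_ | k, rfl⟩ := Nat.exists_eq_add_of_le hmn
  · simp [hdiag]
  set c : ℕ → R := fun i ↦ g i i
  set w : ℕ → R := fun i ↦ ℓ * (i + 1)
  have shift_eq : (fun i ↦ c (i + 1)) = w • c := funext hdiag
  have w_affine (i : ℕ) : w (i + 1) = w i + ℓ := by simp only [w]; push_cast; ring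
  have entry_succ_succ : g (m + (k + 1) + 1) (m + 1) = (Δ_[1])^[k + 1] (w • c) m := by
    rw [← shift_eq, fwdDiff_iter_comp_add, ← hg.apply_add_eq_fwdDiff_iter_s17, Nat.add_right_comm]
  have entry_succ : g (m + (k + 1)) (m + 1) = (Δ_[1])^[k] c (m + 1) := by
    rw [← hg.apply_add_eq_fwdDiff_iter_s17, Nat.add_right_comm, add_assoc]
  rw [entry_succ_succ, fwdDiff_iter_succ_affine_smul w_affine, ← entry_succ,
    ← hg.apply_add_eq_fwdDiff_iter_s17]
  simp only [w, smul_eq_mul, nsmul_eq_mul]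
  push_cast
  ring

theorem column_recurrence (hg : IsDifferenceTable_s17 g)
    (hdiag : ∀ n, g (n + 1) (n + 1) = ℓ * (n + 1) * g n n) {n m : ℕ} (hmn : m ≤ n) :
    g (n + 2) m = (ℓ * (n + 2) - 1) * g (n + 1) m + ℓ * (n + 1 - m) * g n m := by
  have hrow := hg.row_recurrence hdiag (Nat.le_succ_of_le hmn)
  push_cast at hrow
  linear_combination hg (n + 1) m (Nat.le_succ_of_le hmn) + hrow - ℓ * (n + 1 - m) * hg n m hmn

theorem column_diagonal_recurrence (hg : IsDifferenceTable_s17 g)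
    (hdiag : ∀ n, g (n + 1) (n + 1) = ℓ * (n + 1) * g n n) {n m : ℕ} (hmn : m ≤ n) :
    g (n + 2) (m + 1) = ℓ * (n + 2) * g (n + 1) (m + 1) - ℓ * (m + 1) * g n m := by
  have hrow := hg.row_recurrence hdiag (Nat.le_succ_of_le hmn)
  push_cast at hrow
  linear_combination hrow + ℓ * (m + 1) * hg n m hmn

end IsDifferenceTable_s17

theorem stmt_17_general {R : Type*} [CommRing R] {ℓ : R} {g : ℕ → ℕ → R}
    (hg : IsDifferenceTable_s17 g) (hdiag : ∀ n, g (n + 1) (n + 1) = ℓ * (n + 1) * g n n) :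
    (∀ n m : ℕ, 2 ≤ n → m ≤ n - 2 →
      g n m = (ℓ * n - 1) * g (n - 1) m + ℓ * (n - m - 1) * g (n - 2) m) ∧
    (∀ n m : ℕ, 1 ≤ m → m ≤ n - 1 →
      g n m = ℓ * (n - m) * g (n - 1) m + ℓ * m * g (n - 1) (m - 1)) ∧
    (∀ n m : ℕ, 2 ≤ n → 1 ≤ m → m ≤ n - 1 →
      g n m = ℓ * n * g (n - 1) m - ℓ * m * g (n - 2) (m - 1)) := by
  refine ⟨fun n m hn hmn ↦ ?column, fun n m hm hmn ↦ ?row, fun n m hn hm hmn ↦ ?columnDiagonal⟩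
  case column =>
    obtain ⟨n, rfl⟩ := Nat.exists_eq_add_of_le' hn
    convert hg.column_recurrence hdiag hmn using 3 <;> push_cast <;> ring
  case row =>
    obtain ⟨m, rfl⟩ := Nat.exists_eq_add_of_le' hm
    obtain ⟨n, rfl⟩ := Nat.exists_eq_add_of_le' (show 1 ≤ n by lia)
    convert hg.row_recurrence hdiag (show m ≤ n by lia) using 3 <;> push_cast <;> ring
  case columnDiagonal =>
    obtain ⟨m, rfl⟩ := Nat.exists_eq_add_of_le' hm
    obtain ⟨n, rfl⟩ := Nat.exists_eq_add_of_le' hn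
    convert hg.column_diagonal_recurrence hdiag (show m ≤ n by lia) using 3 <;> push_cast <;> ring

/-- recurrences for Euler's difference table `g_{ℓ,n}^m`
(`g n n = ℓ^n n!`, `g n m = g n (m+1) − g (n−1) m`):
(a) `g_{ℓ,n}^m = (ℓn − 1)·g_{ℓ,n−1}^m + ℓ(n − m − 1)·g_{ℓ,n−2}^m` for `n ≥ 2`, `0 ≤ m ≤ n − 2`;
(b) `g_{ℓ,n}^m = ℓ(n − m)·g_{ℓ,n−1}^m + ℓm·g_{ℓ,n−1}^{m−1}` for `1 ≤ m ≤ n − 1`;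
(c) `g_{ℓ,n}^m = ℓn·g_{ℓ,n−1}^m − ℓm·g_{ℓ,n−2}^{m−1}` for `n ≥ 2`, `1 ≤ m ≤ n − 1`. -/
theorem stmt_17 (ℓ : ℕ) (hℓ : 1 ≤ ℓ) (g : ℕ → ℕ → ℤ)
    (hg_diag : ∀ n : ℕ, g n n = (ℓ : ℤ) ^ n * (Nat.factorial n : ℤ))
    (hg_rec : ∀ n m : ℕ, m < n → g n m = g n (m + 1) - g (n - 1) m) :
    (∀ n m : ℕ, 2 ≤ n → m ≤ n - 2 →
      g n m = ((ℓ : ℤ) * (n : ℤ) - 1) * g (n - 1) m +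
        (ℓ : ℤ) * ((n : ℤ) - (m : ℤ) - 1) * g (n - 2) m) ∧
    (∀ n m : ℕ, 1 ≤ m → m ≤ n - 1 →
      g n m = (ℓ : ℤ) * ((n : ℤ) - (m : ℤ)) * g (n - 1) m +
        (ℓ : ℤ) * (m : ℤ) * g (n - 1) (m - 1)) ∧
    (∀ n m : ℕ, 2 ≤ n → 1 ≤ m → m ≤ n - 1 →
      g n m = (ℓ : ℤ) * (n : ℤ) * g (n - 1) m -
        (ℓ : ℤ) * (m : ℤ) * g (n - 2) (m - 1)) :=
  stmt_17_general (fun n m hmn ↦ hg_rec (n + 1) m (Nat.lt_succ_of_le hmn))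
    fun n ↦ by rw [hg_diag, hg_diag, Nat.factorial_succ]; push_cast; ring
end

section
/- Let ℓ ≥ 1. The array d_{ℓ,n}^m satisfies the following recurrences: (a) d_{ℓ,n}^m = (ℓn − 1)·d_{ℓ,n−1}^m + ℓ(n − m − 1)·d_{ℓ,n−2}^m for n ≥ 2 and 0 ≤ m ≤ n − 2; (b) d_{ℓ,n}^m = ℓ(n − m)·d_{ℓ,n−1}^m + d_{ℓ,n−1}^{m−1} for 1 ≤ m ≤ n − 1; (c) d_{ℓ,n}^m + d_{ℓ,n−2}^{m−1} = ℓn·d_{ℓ,n−1}^m for n ≥ 2 and 1 ≤ m ≤ n − 1. -/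
/-!
Recurrence (c) carries the argument. The defining rule rewrites each of its three entries through
the neighbouring columns, so (c) at `(n, m)` is a linear combination of (c) at `(n - 1, m)` and
`(n, m + 1)`, both one diagonal closer to the main one; induction on `n - m` therefore proves it.
Eliminating `d (n - 2) (m - 1)` from (c) with the defining rule gives (b), and rewriting the
product `ℓ(m + 1) · d n (m + 1)` in the defining rule with (c), then with the rule for row `n - 1`,
gives (a).
-/

/-- `d` is the allied array with parameter `ℓ`, with `d n m` standing for `d_{ℓ,n}^m`. The rule is
stated for row `n + 1`, which avoids truncated subtraction; entries with `n < m` are arbitrary. -/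
structure IsAlliedArray_s18 {R : Type*} [CommRing R] (ℓ : R) (d : ℕ → ℕ → R) : Prop where
  diag : ∀ n, d n n = 1
  succ_left : ∀ n m, m ≤ n → d (n + 1) m = ℓ * (m + 1) * d (n + 1) (m + 1) - d n m

namespace IsAlliedArray_s18

variable {R : Type*} [CommRing R] {ℓ : R} {d : ℕ → ℕ → R} {n m : ℕ}

lemma subdiag (hd : IsAlliedArray_s18 ℓ d) (n : ℕ) : d (n + 1) n = ℓ * (n + 1) - 1 := by
  rw [hd.succ_left n n le_rfl, hd.diag, hd.diag, mul_one]

lemma add_two_add_eq_mul (hd : IsAlliedArray_s18 ℓ d) (hmn : m ≤ n) :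
    d (n + 2) (m + 1) + d n m = ℓ * (n + 2) * d (n + 1) (m + 1) := by
  induction hk : n - m generalizing n m with
  | zero =>
    obtain rfl : m = n := by lia
    rw [hd.subdiag, hd.diag, hd.diag]
    push_cast
    ring
  | succ k ih =>
    obtain ⟨n, rfl⟩ := Nat.exists_eq_add_of_le' (show 1 ≤ n by lia)
    have row_add_three := hd.succ_left (n + 2) (m + 1) (by lia)
    have row_add_two := hd.succ_left (n + 1) (m + 1) (by lia)
    have row_add_one := hd.succ_left n m (by lia)
    have same_column : d (n + 2) (m + 1) + d n m = ℓ * (n + 2) * d (n + 1) (m + 1) :=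
      ih (by lia) (by lia)
    have next_column : d (n + 3) (m + 2) + d (n + 1) (m + 1) =
        ℓ * ((n + 1 : ℕ) + 2) * d (n + 2) (m + 2) :=
      ih (by lia) (by lia)
    push_cast at row_add_three row_add_two next_column ⊢
    linear_combination row_add_three + row_add_one - ℓ * (n + 3) * row_add_two
      + ℓ * (m + 2) * next_column - same_column

lemma add_two_eq_mul_add (hd : IsAlliedArray_s18 ℓ d) (hmn : m ≤ n) :
    d (n + 2) (m + 1) = ℓ * (n - m + 1) * d (n + 1) (m + 1) + d (n + 1) m := by
  linear_combination hd.add_two_add_eq_mul hmn - hd.succ_left n m hmn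

lemma add_two_eq_mul_add_mul (hd : IsAlliedArray_s18 ℓ d) (hmn : m ≤ n) :
    d (n + 2) m = (ℓ * (n + 2) - 1) * d (n + 1) m + ℓ * (n - m + 1) * d n m := by
  have row_add_two : d (n + 2) m = ℓ * (m + 1) * d (n + 2) (m + 1) - d (n + 1) m :=
    hd.succ_left (n + 1) m (by lia)
  linear_combination row_add_two + ℓ * (m + 1) * hd.add_two_add_eq_mul hmn
    - ℓ * (n + 2) * hd.succ_left n m hmn

end IsAlliedArray_s18

theorem stmt_18_general {R : Type*} [CommRing R] {ℓ : R} {d : ℕ → ℕ → R}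
    (hd : IsAlliedArray_s18 ℓ d) :
    (∀ n m : ℕ, 2 ≤ n → m ≤ n - 2 →
      d n m = (ℓ * n - 1) * d (n - 1) m + ℓ * (n - m - 1) * d (n - 2) m) ∧
    (∀ n m : ℕ, 1 ≤ m → m ≤ n - 1 →
      d n m = ℓ * (n - m) * d (n - 1) m + d (n - 1) (m - 1)) ∧
    (∀ n m : ℕ, 2 ≤ n → 1 ≤ m → m ≤ n - 1 →
      d n m + d (n - 2) (m - 1) = ℓ * n * d (n - 1) m) := by
  refine ⟨fun n m hn hm ↦ ?_, fun n m hm hmn ↦ ?_, fun n m hn hm hmn ↦ ?_⟩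
  · obtain ⟨n, rfl⟩ := Nat.exists_eq_add_of_le' hn
    push_cast [Nat.add_sub_cancel, Nat.add_succ_sub_one]
    linear_combination hd.add_two_eq_mul_add_mul (show m ≤ n by lia)
  · obtain ⟨m, rfl⟩ := Nat.exists_eq_add_of_le' hm
    obtain ⟨n, rfl⟩ := Nat.exists_eq_add_of_le' (show 2 ≤ n by lia)
    push_cast [Nat.add_sub_cancel, Nat.add_succ_sub_one]
    linear_combination hd.add_two_eq_mul_add (show m ≤ n by lia)
  · obtain ⟨m, rfl⟩ := Nat.exists_eq_add_of_le' hm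
    obtain ⟨n, rfl⟩ := Nat.exists_eq_add_of_le' hn
    push_cast [Nat.add_sub_cancel, Nat.add_succ_sub_one]
    exact hd.add_two_add_eq_mul (show m ≤ n by lia)

/-- recurrences for the allied array `d_{ℓ,n}^m`
(`d n n = 1`, `d n m = ℓ(m+1) d n (m+1) − d (n−1) m`):
(a) `d_{ℓ,n}^m = (ℓn − 1)·d_{ℓ,n−1}^m + ℓ(n − m − 1)·d_{ℓ,n−2}^m` for `n ≥ 2`, `0 ≤ m ≤ n − 2`;
(b) `d_{ℓ,n}^m = ℓ(n − m)·d_{ℓ,n−1}^m + d_{ℓ,n−1}^{m−1}` for `1 ≤ m ≤ n − 1`;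
(c) `d_{ℓ,n}^m + d_{ℓ,n−2}^{m−1} = ℓn·d_{ℓ,n−1}^m` for `n ≥ 2`, `1 ≤ m ≤ n − 1`. -/
theorem stmt_18 (ℓ : ℕ) (hℓ : 1 ≤ ℓ) (d : ℕ → ℕ → ℤ)
    (hd_diag : ∀ n : ℕ, d n n = 1)
    (hd_rec : ∀ n m : ℕ, m < n →
      d n m = (ℓ : ℤ) * ((m : ℤ) + 1) * d n (m + 1) - d (n - 1) m) :
    (∀ n m : ℕ, 2 ≤ n → m ≤ n - 2 →
      d n m = ((ℓ : ℤ) * (n : ℤ) - 1) * d (n - 1) m +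
        (ℓ : ℤ) * ((n : ℤ) - (m : ℤ) - 1) * d (n - 2) m) ∧
    (∀ n m : ℕ, 1 ≤ m → m ≤ n - 1 →
      d n m = (ℓ : ℤ) * ((n : ℤ) - (m : ℤ)) * d (n - 1) m + d (n - 1) (m - 1)) ∧
    (∀ n m : ℕ, 2 ≤ n → 1 ≤ m → m ≤ n - 1 →
      d n m + d (n - 2) (m - 1) = (ℓ : ℤ) * (n : ℤ) * d (n - 1) m) :=
  stmt_18_general ⟨hd_diag, fun n m hmn ↦ hd_rec (n + 1) m (Nat.lt_succ_of_le hmn)⟩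
end
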